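/- Let Γ be a lattice in G = PSL(2,ℂ) and let (x_iH) be a sequence of pairwise distinct closed H-orbits in Γ\G. Then lim_i x_iH = Γ\G; that is, for every nonempty open subset O of Γ\G one has x_iH ∩ O ≠ ∅ for all sufficiently large i. (This is the homogeneous formulation of the statement that any infinite sequence of properly immersed geodesic planes in a hyperbolic 3-manifold of finite volume becomes dense.) -/

import Mathlib

open scoped MatrixGroups
open Matrix Filter

noncomputable section

/-- `SL(2,ℂ)`. -/
abbrev SL2C := Matrix.SpecialLinearGroup (Fin 2) ℂ

instance : TopologicalSpace SL2C := instTopologicalSpaceSubtype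

/-- `G = PSL(2,ℂ) = SL(2,ℂ)/{±I}`, with the quotient topology. -/
abbrev PSL2C := Matrix.ProjectiveSpecialLinearGroup (Fin 2) ℂ

/-- The projection `π : SL(2,ℂ) → PSL(2,ℂ)`. -/
def pr : SL2C →* PSL2C := QuotientGroup.mk' _

/-- The upper triangular unipotent matrix `[[1, t],[0, 1]]` as an element of `SL(2,ℂ)`. -/
def uMat (t : ℂ) : SL2C := ⟨!![1, t; 0, 1], by simp [Matrix.det_fin_two_of]⟩

/-- `u_t = π [[1, t],[0, 1]]` for `t ∈ ℝ`. -/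
def uu (t : ℝ) : PSL2C := pr (uMat t)

/-- `v_s = π [[1, is],[0, 1]]` for `s ∈ ℝ`. -/
def vv (s : ℝ) : PSL2C := pr (uMat (s * Complex.I))

/-- The subgroup `U = {u_t : t ∈ ℝ}` as a subset of `PSL(2,ℂ)`. -/
def Uset : Set PSL2C := Set.range uu

/-- The subgroup `V = {v_s : s ∈ ℝ}` as a subset of `PSL(2,ℂ)`. -/
def Vset : Set PSL2C := Set.range vv

/-- The subgroup `N = {π [[1, z],[0,1]] : z ∈ ℂ}` as a subset of `PSL(2,ℂ)`. -/
def Nset : Set PSL2C := {x | ∃ z : ℂ, x = pr (uMat z)}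

/-- `H = π (SL(2,ℝ))`, the image in `PSL(2,ℂ)` of the real matrices. -/
def Hset : Set PSL2C :=
  {x | ∃ g : Matrix.SpecialLinearGroup (Fin 2) ℝ,
    x = pr (Matrix.SpecialLinearGroup.map (algebraMap ℝ ℂ) g)}

/-- The upper triangular matrix `[[a, z],[0, a⁻¹]]` as an element of `SL(2,ℂ)`,
for a nonzero real `a`. -/
def tri (a : ℝ) (ha : a ≠ 0) (z : ℂ) : SL2C :=
  ⟨!![(a : ℂ), z; 0, (a : ℂ)⁻¹], by
    have h : (a : ℂ) ≠ 0 := by exact_mod_cast ha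
    simp [Matrix.det_fin_two_of, mul_inv_cancel₀ h]⟩

/-- `AN = {π [[a, z],[0, a⁻¹]] : a > 0 real, z ∈ ℂ}`. -/
def ANset : Set PSL2C := {x | ∃ (a : ℝ) (ha : 0 < a) (z : ℂ), x = pr (tri a ha.ne' z)}

/-- `AV = {π [[a, ib],[0, a⁻¹]] : a > 0 real, b ∈ ℝ}`. -/
def AVset : Set PSL2C :=
  {x | ∃ (a : ℝ) (ha : 0 < a) (b : ℝ), x = pr (tri a ha.ne' (b * Complex.I))}

/-- `A = {π diag(a, a⁻¹) : a > 0 real}`. -/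
def Aset : Set PSL2C := {x | ∃ (a : ℝ) (ha : 0 < a), x = pr (tri a ha.ne' 0)}

variable (Γ : Subgroup PSL2C)

/-- The space `Γ\\G` of right cosets `Γg`, with the quotient topology. -/
abbrev XΓ := Quotient (QuotientGroup.rightRel Γ)

/-- The natural projection `G → Γ\\G`. -/
def mkX (g : PSL2C) : XΓ Γ := Quotient.mk'' g

/-- The right translation action of `G` on `Γ\\G`: `(Γg₀)·g = Γ(g₀g)`. -/
def act (x : XΓ Γ) (g : PSL2C) : XΓ Γ :=
  Quotient.map' (fun h => h * g)
    (fun a b hab => by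
      rw [QuotientGroup.rightRel_apply] at hab ⊢
      simpa [_root_.mul_inv_rev, mul_assoc] using hab) x

/-- The orbit `xS = {x·s : s ∈ S}` of a point `x ∈ Γ\\G` under a subset `S ⊆ G`. -/
def orb (x : XΓ Γ) (S : Set PSL2C) : Set (XΓ Γ) := (fun s => act Γ x s) '' S

/-- `Γ` is a lattice in `G`: there is a nonzero finite Borel measure on `Γ\\G`
invariant under the right translation action of `G`. -/
def IsLattice : Prop :=
  letI : MeasurableSpace (XΓ Γ) := borel _
  ∃ μ : MeasureTheory.Measure (XΓ Γ), μ ≠ 0 ∧ MeasureTheory.IsFiniteMeasure μ ∧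
    ∀ g : PSL2C, MeasureTheory.Measure.map (fun x => act Γ x g) μ = μ

/-!
Suppose that infinitely many of the closed orbits miss an open set. Lift everything to `SL(2,ℂ)` and
write `F` for the closure of the union of these orbits, a proper closed set, `H = SL(2,ℝ)`, `U` and
`V` for the groups of real and of purely imaginary upper triangular unipotents. Nondivergence of
unipotent flows (via the Zassenhaus lemma and the thick part) provides an `H`-minimal set `M` on
which the orbits accumulate, and in it a `U`-minimal set `Y` that is compact modulo `Γ`.

If elements `y * g` of `F` approach a point `y ∈ Y` with `g ∉ V H`, then the divergence of
`U`-orbits is polynomial in the time, so that shearing and renormalizing pushes `Y` into `F` along a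
half line of `V`; applying the diagonal flow and the Mautner phenomenon, `F` is everything. So near
every point `y` of `Y` the set `F` is contained in `y V H`. As infinitely many distinct orbits
accumulate on `Y`, two different translates of `Y` by `V` lie in single closed orbits, which forces
returns to `Y` to lie in `U`: thus `Y` is a periodic horocycle, `y u y⁻¹ ∈ Γ` with `u ∈ U`.

Now let `γ ∈ Γ` take a point `y b` of `y H` close to `y`, so that `γ y b = y v c` with `v ∈ V` and
`c ∈ H`. Comparing `F` near the points of `y V` shows that `b c⁻¹` is upper triangular, and the
periodicity of `y U` that its diagonal entries have modulus one; hence `b` and `v c` have second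
rows of the same moduli. But `Γ y H` returns near `y` along points `y u a b₀` with `u ∈ U`, `b₀ ∈ H`
fixed and `a` going to infinity in the diagonal group, whose second rows `b = u a b₀` grow
exponentially, whereas those of `v c` stay bounded.
-/

section Development

open Topology Set Pointwise
open scoped Matrix.Norms.Frobenius

namespace SL2C

section Entries

lemma det_eq_one (g : SL2C) : g 0 0 * g 1 1 - g 0 1 * g 1 0 = 1 := by
  rw [← Matrix.det_fin_two, g.det_coe]

lemma mul_apply (g h : SL2C) (i j : Fin 2) : (g * h) i j = g i 0 * h 0 j + g i 1 * h 1 j := by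
  simp [Matrix.mul_apply]

@[simp] lemma inv_apply_zero_zero (g : SL2C) : g⁻¹ 0 0 = g 1 1 := by
  simp [Matrix.adjugate_fin_two]

@[simp] lemma inv_apply_zero_one (g : SL2C) : g⁻¹ 0 1 = -g 0 1 := by
  simp [Matrix.adjugate_fin_two]

@[simp] lemma inv_apply_one_zero (g : SL2C) : g⁻¹ 1 0 = -g 1 0 := by
  simp [Matrix.adjugate_fin_two]

@[simp] lemma inv_apply_one_one (g : SL2C) : g⁻¹ 1 1 = g 0 0 := by
  simp [Matrix.adjugate_fin_two]

lemma ext_entries {g h : SL2C} (h₀₀ : g 0 0 = h 0 0) (h₀₁ : g 0 1 = h 0 1)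
    (h₁₀ : g 1 0 = h 1 0) (h₁₁ : g 1 1 = h 1 1) : g = h := by
  ext i j
  fin_cases i <;> fin_cases j <;> assumption

lemma one_ne_neg_one : (1 : SL2C) ≠ -1 := fun h => by
  have h₀₀ : (1 : SL2C) 0 0 = (-1 : SL2C) 0 0 := by rw [← h]
  norm_num [Matrix.SpecialLinearGroup.coe_neg] at h₀₀

end Entries

section Topology

instance : IsTopologicalGroup SL2C := Matrix.SpecialLinearGroup.topologicalGroup

lemma isClosedEmbedding_coe :
    IsClosedEmbedding ((↑) : SL2C → Matrix (Fin 2) (Fin 2) ℂ) :=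
  Matrix.SpecialLinearGroup.isClosedEmbedding_val

instance : T2Space SL2C := isClosedEmbedding_coe.isEmbedding.t2Space

instance : LocallyCompactSpace SL2C :=
  haveI : LocallyCompactSpace (Matrix (Fin 2) (Fin 2) ℂ) :=
    inferInstanceAs (LocallyCompactSpace (Fin 2 → Fin 2 → ℂ))
  isClosedEmbedding_coe.locallyCompactSpace

instance : SecondCountableTopology SL2C :=
  haveI : SecondCountableTopology (Matrix (Fin 2) (Fin 2) ℂ) :=
    inferInstanceAs (SecondCountableTopology (Fin 2 → Fin 2 → ℂ))
  isClosedEmbedding_coe.isEmbedding.isInducing.secondCountableTopology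

lemma tendsto_nhds_iff {ι : Type*} {l : Filter ι} {f : ι → SL2C} {g : SL2C} :
    Tendsto f l (𝓝 g) ↔ ∀ i j, Tendsto (fun n => f n i j) l (𝓝 (g i j)) :=
  isClosedEmbedding_coe.isEmbedding.tendsto_nhds_iff.trans <|
    tendsto_pi_nhds.trans <| forall_congr' fun _ => tendsto_pi_nhds

lemma isCompact_setOf_norm_le (R : ℝ) :
    IsCompact {g : SL2C | ‖(g : Matrix (Fin 2) (Fin 2) ℂ)‖ ≤ R} := by
  have eq_preimage : {g : SL2C | ‖(g : Matrix (Fin 2) (Fin 2) ℂ)‖ ≤ R} =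
      (↑) ⁻¹' Metric.closedBall (0 : Matrix (Fin 2) (Fin 2) ℂ) R :=
    Set.ext fun _ => mem_closedBall_zero_iff.symm
  rw [eq_preimage]
  exact isClosedEmbedding_coe.isCompact_preimage (isCompact_closedBall _ _)

end Topology

section Frobenius

variable {m n α : Type*} [Fintype m] [Fintype n] [NormedAddCommGroup α]

lemma frobenius_norm_sq (A : Matrix m n α) : ‖A‖ ^ 2 = ∑ i, ∑ j, ‖A i j‖ ^ 2 := by
  rw [Matrix.frobenius_norm_def, ← Real.sqrt_eq_rpow, Real.sq_sqrt (by positivity)]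
  simp

lemma norm_entry_le_frobenius_norm (A : Matrix m n α) (i : m) (j : n) : ‖A i j‖ ≤ ‖A‖ := by
  refine le_of_sq_le_sq ?_ (norm_nonneg A)
  rw [frobenius_norm_sq]
  calc ‖A i j‖ ^ 2 ≤ ∑ j, ‖A i j‖ ^ 2 :=
        Finset.single_le_sum (f := fun j => ‖A i j‖ ^ 2) (by intros; positivity)
          (Finset.mem_univ j)
    _ ≤ ∑ i, ∑ j, ‖A i j‖ ^ 2 :=
        Finset.single_le_sum (f := fun i => ∑ j, ‖A i j‖ ^ 2) (by intros; positivity)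
          (Finset.mem_univ i)

lemma frobenius_norm_le_sum (A : Matrix m n α) : ‖A‖ ≤ ∑ i, ∑ j, ‖A i j‖ := by
  refine le_of_sq_le_sq ?_ (by positivity)
  rw [frobenius_norm_sq, ← Fintype.sum_prod_type', ← Fintype.sum_prod_type']
  exact Finset.sum_sq_le_sq_sum_of_nonneg fun _ _ => norm_nonneg _

lemma norm_one_le_two : ‖(1 : Matrix (Fin 2) (Fin 2) ℂ)‖ ≤ 2 := by
  simpa [Fin.sum_univ_two, one_add_one_eq_two] using
    frobenius_norm_le_sum (1 : Matrix (Fin 2) (Fin 2) ℂ)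

lemma norm_coe_inv (g : SL2C) :
    ‖(↑g⁻¹ : Matrix (Fin 2) (Fin 2) ℂ)‖ = ‖(g : Matrix (Fin 2) (Fin 2) ℂ)‖ := by
  rw [← sq_eq_sq₀ (norm_nonneg _) (norm_nonneg _), frobenius_norm_sq, frobenius_norm_sq]
  simp only [Fin.sum_univ_two, inv_apply_zero_zero, inv_apply_zero_one, inv_apply_one_zero,
    inv_apply_one_one, norm_neg]
  ring

end Frobenius

/-- The traceless part of a `2 × 2` matrix, its orthogonal projection to `𝔰𝔩₂`. It measures how far
the matrix is from being scalar, and conjugation acts on it linearly. -/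
def tracelessPart (A : Matrix (Fin 2) (Fin 2) ℂ) : Matrix (Fin 2) (Fin 2) ℂ :=
  A - (A.trace / 2) • 1

section TracelessPart

variable (A : Matrix (Fin 2) (Fin 2) ℂ)

@[simp] lemma tracelessPart_zero_zero : tracelessPart A 0 0 = (A 0 0 - A 1 1) / 2 := by
  simp [tracelessPart, Matrix.trace_fin_two]; ring

@[simp] lemma tracelessPart_zero_one : tracelessPart A 0 1 = A 0 1 := by simp [tracelessPart]

@[simp] lemma tracelessPart_one_zero : tracelessPart A 1 0 = A 1 0 := by simp [tracelessPart]

@[simp] lemma tracelessPart_one_one : tracelessPart A 1 1 = -((A 0 0 - A 1 1) / 2) := by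
  simp [tracelessPart, Matrix.trace_fin_two]; ring

lemma smul_one_add_tracelessPart : (A.trace / 2) • 1 + tracelessPart A = A := by
  simp [tracelessPart]

@[simp] lemma tracelessPart_neg : tracelessPart (-A) = -tracelessPart A := by
  simp [tracelessPart, neg_div, sub_eq_add_neg, add_comm]

lemma tracelessPart_sub_one : tracelessPart (A - 1) = tracelessPart A := by
  simp [tracelessPart, sub_div, sub_smul]

lemma continuous_tracelessPart : Continuous tracelessPart := by
  unfold tracelessPart
  fun_prop

lemma norm_tracelessPart_le : ‖tracelessPart A‖ ≤ ‖A‖ := by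
  refine le_of_sq_le_sq ?_ (norm_nonneg A)
  have parallelogram := parallelogram_law_with_norm ℝ (A 0 0) (A 1 1)
  simp only [frobenius_norm_sq, Fin.sum_univ_two, tracelessPart_zero_zero, tracelessPart_zero_one,
    tracelessPart_one_zero, tracelessPart_one_one, norm_neg, norm_div, RCLike.norm_ofNat]
  nlinarith [mul_self_nonneg ‖A 0 0 + A 1 1‖]

lemma tracelessPart_conj (x g : SL2C) :
    tracelessPart ↑(x⁻¹ * g * x) =
      (↑x⁻¹ : Matrix (Fin 2) (Fin 2) ℂ) * tracelessPart g * (x : Matrix (Fin 2) (Fin 2) ℂ) := by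
  have inv_mul : (↑x⁻¹ : Matrix (Fin 2) (Fin 2) ℂ) * (x : Matrix (Fin 2) (Fin 2) ℂ) = 1 :=
    congrArg Subtype.val (inv_mul_cancel x)
  have mul_inv : (x : Matrix (Fin 2) (Fin 2) ℂ) * (↑x⁻¹ : Matrix (Fin 2) (Fin 2) ℂ) = 1 :=
    congrArg Subtype.val (mul_inv_cancel x)
  unfold tracelessPart
  rw [Matrix.SpecialLinearGroup.coe_mul, Matrix.SpecialLinearGroup.coe_mul,
    Matrix.trace_mul_cycle, mul_inv, one_mul, mul_sub, sub_mul, mul_smul_comm, smul_mul_assoc,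
    mul_one, inv_mul]

end TracelessPart

/-- The distance from a matrix in `SL(2,ℂ)` to the line of scalar matrices. It vanishes exactly on
the center `{±1}`, so it measures the size of an element of `PSL(2,ℂ)`. -/
def scalarDist (g : SL2C) : ℝ := ‖tracelessPart g‖

section ScalarDist

variable {g : SL2C}

lemma scalarDist_nonneg (g : SL2C) : 0 ≤ scalarDist g := norm_nonneg _

lemma continuous_scalarDist : Continuous scalarDist :=
  (continuous_tracelessPart.comp (by fun_prop)).norm

lemma scalarDist_eq_zero_iff_tracelessPart : scalarDist g = 0 ↔ tracelessPart g = 0 :=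
  norm_eq_zero

lemma norm_entry_le_scalarDist (g : SL2C) (i j : Fin 2) :
    ‖tracelessPart g i j‖ ≤ scalarDist g :=
  norm_entry_le_frobenius_norm _ i j

@[simp] lemma scalarDist_one : scalarDist 1 = 0 := by
  simp [scalarDist, tracelessPart]

@[simp] lemma scalarDist_neg (g : SL2C) : scalarDist (-g) = scalarDist g := by
  simp [scalarDist, Matrix.SpecialLinearGroup.coe_neg]

lemma scalarDist_le_norm_sub_one (g : SL2C) :
    scalarDist g ≤ ‖(g : Matrix (Fin 2) (Fin 2) ℂ) - 1‖ := by
  rw [scalarDist, ← tracelessPart_sub_one]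
  exact norm_tracelessPart_le _

lemma scalarDist_conj_le (x g : SL2C) :
    scalarDist (x⁻¹ * g * x) ≤ ‖(x : Matrix (Fin 2) (Fin 2) ℂ)‖ ^ 2 * scalarDist g := by
  rw [scalarDist, tracelessPart_conj]
  calc _ ≤ ‖(↑x⁻¹ : Matrix (Fin 2) (Fin 2) ℂ)‖ * ‖tracelessPart g‖ *
          ‖(x : Matrix (Fin 2) (Fin 2) ℂ)‖ := norm_mul₃_le
    _ = _ := by rw [norm_coe_inv, scalarDist]; ring

lemma norm_half_trace_sq_sub_one_le (g : SL2C) :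
    ‖((g : Matrix (Fin 2) (Fin 2) ℂ).trace / 2) ^ 2 - 1‖ ≤ scalarDist g ^ 2 := by
  have minus_det : ((g : Matrix (Fin 2) (Fin 2) ℂ).trace / 2) ^ 2 - 1 =
      tracelessPart g 0 0 ^ 2 + tracelessPart g 0 1 * tracelessPart g 1 0 := by
    simp only [Matrix.trace_fin_two, tracelessPart_zero_zero, tracelessPart_zero_one,
      tracelessPart_one_zero]
    linear_combination det_eq_one g
  rw [minus_det, scalarDist, frobenius_norm_sq]
  simp only [Fin.sum_univ_two]
  refine (norm_add_le _ _).trans ?_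
  rw [norm_pow, norm_mul]
  nlinarith [sq_nonneg (‖tracelessPart g 0 1‖ - ‖tracelessPart g 1 0‖),
    sq_nonneg ‖tracelessPart g 0 1‖, sq_nonneg ‖tracelessPart g 1 0‖,
    sq_nonneg ‖tracelessPart g 1 1‖]

lemma norm_sub_one_le_of_half_trace
    (h : ‖(g : Matrix (Fin 2) (Fin 2) ℂ).trace / 2 - 1‖ ≤ scalarDist g) :
    ‖(g : Matrix (Fin 2) (Fin 2) ℂ) - 1‖ ≤ 3 * scalarDist g := by
  have decomposition : (g : Matrix (Fin 2) (Fin 2) ℂ) - 1 =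
      ((g : Matrix (Fin 2) (Fin 2) ℂ).trace / 2 - 1) • 1 + tracelessPart g := by
    conv_lhs => rw [← smul_one_add_tracelessPart (g : Matrix (Fin 2) (Fin 2) ℂ)]
    module
  calc ‖(g : Matrix (Fin 2) (Fin 2) ℂ) - 1‖
      ≤ ‖(g : Matrix (Fin 2) (Fin 2) ℂ).trace / 2 - 1‖ *
          ‖(1 : Matrix (Fin 2) (Fin 2) ℂ)‖ + scalarDist g := by
        rw [decomposition, ← norm_smul]; exact norm_add_le _ _
    _ ≤ scalarDist g * 2 + scalarDist g := by
        gcongr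
        · exact scalarDist_nonneg g
        · exact norm_one_le_two
    _ = 3 * scalarDist g := by ring

lemma norm_sub_one_le_or_norm_neg_sub_one_le (g : SL2C) :
    ‖(g : Matrix (Fin 2) (Fin 2) ℂ) - 1‖ ≤ 3 * scalarDist g ∨
      ‖(↑(-g) : Matrix (Fin 2) (Fin 2) ℂ) - 1‖ ≤ 3 * scalarDist g := by
  set τ := (g : Matrix (Fin 2) (Fin 2) ℂ).trace / 2 with hτ
  have bound : ‖τ - 1‖ * ‖τ + 1‖ ≤ scalarDist g ^ 2 := by
    rw [← norm_mul, show (τ - 1) * (τ + 1) = τ ^ 2 - 1 by ring]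
    exact norm_half_trace_sq_sub_one_le g
  obtain h | h : ‖τ - 1‖ ≤ scalarDist g ∨ ‖τ + 1‖ ≤ scalarDist g := by
    by_contra! far
    nlinarith [far.1, far.2, scalarDist_nonneg g]
  · exact .inl (norm_sub_one_le_of_half_trace h)
  · right
    rw [← scalarDist_neg g]
    refine norm_sub_one_le_of_half_trace ?_
    rwa [scalarDist_neg, Matrix.SpecialLinearGroup.coe_neg, Matrix.trace_neg, neg_div, ← hτ,
      ← neg_add', norm_neg]

lemma scalarDist_eq_zero_iff : scalarDist g = 0 ↔ g = 1 ∨ g = -1 := by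
  have eq_one {k : SL2C} (hk : ‖(k : Matrix (Fin 2) (Fin 2) ℂ) - 1‖ ≤ 0) : k = 1 :=
    Subtype.ext (sub_eq_zero.1 (norm_le_zero_iff.1 hk))
  constructor
  · intro h
    have near := norm_sub_one_le_or_norm_neg_sub_one_le g
    rw [h, mul_zero] at near
    exact near.imp eq_one fun hneg => neg_eq_iff_eq_neg.1 (eq_one hneg)
  · rintro (rfl | rfl) <;> simp

lemma scalarDist_conj_eq_zero_iff {x : SL2C} : scalarDist (x⁻¹ * g * x) = 0 ↔ scalarDist g = 0 := by
  have le_zero (y : SL2C) {k : SL2C} (hk : scalarDist k = 0) : scalarDist (y⁻¹ * k * y) = 0 :=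
    le_antisymm (by simpa [hk] using scalarDist_conj_le y k) (scalarDist_nonneg _)
  refine ⟨fun h => ?_, le_zero x⟩
  simpa [mul_assoc] using le_zero x⁻¹ h

lemma norm_coe_le_of_scalarDist (g : SL2C) :
    ‖(g : Matrix (Fin 2) (Fin 2) ℂ)‖ ≤ 3 * scalarDist g + 2 := by
  have triangle (k : SL2C) : ‖(k : Matrix (Fin 2) (Fin 2) ℂ)‖ ≤
      ‖(k : Matrix (Fin 2) (Fin 2) ℂ) - 1‖ + 2 :=
    (norm_le_norm_sub_add _ _).trans (by gcongr; exact norm_one_le_two)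
  obtain h | h := norm_sub_one_le_or_norm_neg_sub_one_le g
  · linarith [triangle g]
  · rw [← norm_neg, ← Matrix.SpecialLinearGroup.coe_neg]
    linarith [triangle (-g)]

end ScalarDist

end SL2C

section MeasureLift

open MeasureTheory

variable {Y Z : Type*} [TopologicalSpace Y] [TopologicalSpace Z] {p : Y → Z}

lemma exists_seq_isOpen_injOn_of_isLocalHomeomorph [SecondCountableTopology Y]
    (hp : IsLocalHomeomorph p) :
    ∃ V : ℕ → Set Y, (∀ n, IsOpen (V n)) ∧ (∀ n, InjOn p (V n)) ∧ ⋃ n, V n = univ := by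
  let 𝒰 : Set (Set Y) := {V | V ∈ TopologicalSpace.countableBasis Y ∧ InjOn p V}
  obtain ⟨V, hV⟩ := (((TopologicalSpace.countable_countableBasis Y).mono
    (sep_subset _ _)).insert ∅).exists_eq_range (insert_nonempty ∅ 𝒰)
  have mem (n : ℕ) : V n = ∅ ∨ V n ∈ 𝒰 := by
    rw [← mem_insert_iff, hV]
    exact mem_range_self n
  refine ⟨V, fun n => ?_, fun n => ?_, eq_univ_of_forall fun y => mem_iUnion.2 ?_⟩
  · rcases mem n with h | h
    · simp [h]
    · exact TopologicalSpace.isOpen_of_mem_countableBasis h.1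
  · rcases mem n with h | h
    · simp [h]
    · exact h.2
  · obtain ⟨W, hW, hyW, hinj⟩ := hp.isLocallyInjective y
    obtain ⟨U, hU, hyU, hUW⟩ :=
      (TopologicalSpace.isBasis_countableBasis Y).exists_subset_of_mem_open hyW hW
    have mem_range : U ∈ range V := hV ▸ .inr ⟨hU, hinj.mono hUW⟩
    obtain ⟨n, rfl⟩ := mem_range
    exact ⟨n, hyU⟩

variable [MeasurableSpace Y] [BorelSpace Y]

lemma measure_ext_of_injOn [SecondCountableTopology Y] (hp : IsLocalHomeomorph p)
    {m₁ m₂ : Measure Y} (h : ∀ T, MeasurableSet T → InjOn p T → m₁ T = m₂ T) : m₁ = m₂ := by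
  obtain ⟨V, hVo, hVinj, hVcover⟩ := exists_seq_isOpen_injOn_of_isLocalHomeomorph hp
  refine (Measure.ext_iff_of_iUnion_eq_univ hVcover).2 fun n => Measure.ext fun S hS => ?_
  rw [Measure.restrict_apply hS, Measure.restrict_apply hS]
  exact h _ (hS.inter (hVo n).measurableSet) ((hVinj n).mono inter_subset_right)

variable [MeasurableSpace Z]

lemma isLocallyFiniteMeasure_of_lift (hp : IsLocalHomeomorph p) {m : Measure Y} {μ : Measure Z}
    [IsFiniteMeasure μ] (hm : ∀ T, MeasurableSet T → InjOn p T → m T = μ (p '' T)) :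
    IsLocallyFiniteMeasure m := by
  refine ⟨fun y => ?_⟩
  obtain ⟨U, hU, hyU, hinj⟩ := hp.isLocallyInjective y
  refine ⟨U, hU.mem_nhds hyU, ?_⟩
  rw [hm U hU.measurableSet hinj]
  exact measure_lt_top _ _

variable [BorelSpace Z]

lemma measurableEmbedding_restrict_of_injOn (hp : IsLocalHomeomorph p) {V : Set Y} (hV : IsOpen V)
    (hinj : InjOn p V) : MeasurableEmbedding (V.domRestrict p) :=
  ((hp.comp hV.isOpenEmbedding_subtypeVal.isLocalHomeomorph).isOpenEmbedding_of_injective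
    (injOn_iff_injective.1 hinj)).measurableEmbedding

lemma measurableSet_image_of_injOn (hp : IsLocalHomeomorph p) {V T : Set Y} (hV : IsOpen V)
    (hinj : InjOn p V) (hT : MeasurableSet T) (hTV : T ⊆ V) : MeasurableSet (p '' T) := by
  have restrict_image := (measurableEmbedding_restrict_of_injOn hp hV hinj).measurableSet_image.2
    (measurable_subtype_coe hT)
  rwa [image_domRestrict, inter_eq_left.2 hTV] at restrict_image

lemma exists_lift_measure [SecondCountableTopology Y] (hp : IsLocalHomeomorph p) (μ : Measure Z) :
    ∃ m : Measure Y, ∀ T, MeasurableSet T → InjOn p T → m T = μ (p '' T) := by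
  obtain ⟨V, hVo, hVinj, hVcover⟩ := exists_seq_isOpen_injOn_of_isLocalHomeomorph hp
  have meas_disjointed (n : ℕ) : MeasurableSet (disjointed V n) :=
    MeasurableSet.disjointed (fun n => (hVo n).measurableSet) n
  let m : Measure Y := .sum fun n =>
    ((μ.comap ((V n).domRestrict p)).map Subtype.val).restrict (disjointed V n)
  have m_apply {S : Set Y} (hS : MeasurableSet S) :
      m S = ∑' n, μ (p '' (S ∩ disjointed V n)) := by
    rw [Measure.sum_apply _ hS]
    congr 1 with n
    rw [Measure.restrict_apply hS, Measure.map_apply measurable_subtype_coe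
      (hS.inter (meas_disjointed n)),
      (measurableEmbedding_restrict_of_injOn hp (hVo n) (hVinj n)).comap_apply, image_domRestrict,
      inter_eq_left.2 (inter_subset_right.trans (disjointed_subset V n))]
  refine ⟨m, fun T hT hinj => ?_⟩
  have image_eq : p '' T = ⋃ n, p '' (T ∩ disjointed V n) := by
    rw [← image_iUnion, ← inter_iUnion, iUnion_disjointed, hVcover, inter_univ]
  rw [m_apply hT, image_eq, measure_iUnion]
  · exact fun i j hij => ((disjoint_disjointed V hij).mono inter_subset_right
      inter_subset_right).image hinj inter_subset_left inter_subset_left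
  · exact fun n => measurableSet_image_of_injOn hp (hVo n) (hVinj n)
      (hT.inter (meas_disjointed n)) (inter_subset_right.trans (disjointed_subset V n))

lemma measurePreserving_of_lift [SecondCountableTopology Y] (hp : IsLocalHomeomorph p)
    {m : Measure Y} {μ : Measure Z} (hm : ∀ T, MeasurableSet T → InjOn p T → m T = μ (p '' T))
    {f : Y ≃ₜ Y} {g : Z ≃ₜ Z} (hfg : Function.Semiconj p f g) (hg : MeasurePreserving g μ μ) :
    MeasurePreserving f m m := by
  refine ⟨f.continuous.measurable, measure_ext_of_injOn hp fun T hT hinj => ?_⟩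
  have image_preimage : p '' (f ⁻¹' T) = g ⁻¹' (p '' T) := by
    ext z
    constructor
    · rintro ⟨y, hy, rfl⟩
      exact ⟨f y, hy, hfg y⟩
    · rintro ⟨y, hy, h⟩
      refine ⟨f.symm y, by simpa using hy, g.injective ?_⟩
      rw [← hfg, f.apply_symm_apply, h]
  have injOn_preimage : InjOn p (f ⁻¹' T) := fun y hy y' hy' h =>
    f.injective (hinj hy hy' (by rw [hfg, hfg, h]))
  rw [Measure.map_apply f.continuous.measurable hT, hm _ (f.continuous.measurable hT)
    injOn_preimage, image_preimage, hm T hT hinj]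
  exact hg.measure_preimage_emb g.measurableEmbedding _

end MeasureLift

section PerfectGroup

open MeasureTheory

variable {G : Type*} [Group G] [TopologicalSpace G] [IsTopologicalGroup G] [LocallyCompactSpace G]
  [SecondCountableTopology G] [MeasurableSpace G] [BorelSpace G]

lemma isMulRightInvariant_haar_of_commutator_eq_top (hG : commutator G = ⊤) :
    (Measure.haar : Measure G).IsMulRightInvariant := by
  have trivial_modularCharacter (g : G) : Measure.modularCharacterFun g = 1 := by
    have mem_ker : g ∈ (Measure.modularCharacter (G := G)).toHomUnits.ker :=
      Abelianization.commutator_subset_ker _ (hG ▸ Subgroup.mem_top g)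
    exact congrArg Units.val (MonoidHom.mem_ker.1 mem_ker)
  exact ⟨fun g => by
    rw [Measure.map_right_mul_eq_modularCharacterFun_smul, trivial_modularCharacter, one_smul]⟩

lemma isMulLeftInvariant_of_commutator_eq_top (hG : commutator G = ⊤) (m : Measure G)
    [IsFiniteMeasureOnCompacts m] [m.IsMulRightInvariant] : m.IsMulLeftInvariant := by
  have := isMulRightInvariant_haar_of_commutator_eq_top hG
  have : IsFiniteMeasureOnCompacts m.inv :=
    ⟨fun K hK => by rw [Measure.inv_apply]; exact hK.inv.measure_lt_top⟩
  have inv_eq_smul := Measure.isMulLeftInvariant_eq_smul m.inv (Measure.haar : Measure G)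
  rw [← Measure.inv_inv m, inv_eq_smul]
  infer_instance

end PerfectGroup

section MeasurePacking

open MeasureTheory

lemma exists_finite_maximal_disjoint_of_le_measure {ι Z : Type*} [MeasurableSpace Z] (μ : Measure Z)
    [IsFiniteMeasure μ] {c : ENNReal} (hc : 0 < c) {E : ι → Set Z} {t : Set ι}
    (hE : ∀ i ∈ t, MeasurableSet (E i)) (hcE : ∀ i ∈ t, c ≤ μ (E i)) :
    ∃ s : Set ι, s.Finite ∧ s ⊆ t ∧ ∀ i ∈ t, ∃ j ∈ s, (E i ∩ E j).Nonempty := by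
  obtain ⟨s, hst, hdisj, hmax⟩ := Vitali.exists_disjoint_subfamily_covering_enlargement E t
    (fun _ => 1) 2 one_lt_two (fun _ _ => zero_le_one) 1 (fun _ _ => le_rfl)
    fun i hi => nonempty_of_measure_ne_zero (hc.trans_le (hcE i hi)).ne'
  refine ⟨s, ?_, hst, fun i hi => (hmax i hi).imp fun j hj => ⟨hj.1, hj.2.1⟩⟩
  have finite_univ := Measure.finite_const_le_meas_of_disjoint_iUnion μ hc
    (As := fun i : s => E i) (fun i => hE i (hst i.2))
    (fun i j hij => hdisj i.2 j.2 (Subtype.coe_injective.ne hij)) (measure_ne_top μ _)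
  rw [eq_univ_of_forall (s := {i : s | c ≤ μ (E i)}) fun i => hcE i (hst i.2)] at finite_univ
  exact finite_univ_iff.1 finite_univ

end MeasurePacking

namespace SL2C

section Projection

lemma continuous_pr : Continuous pr := QuotientGroup.continuous_mk

lemma isOpenMap_pr : IsOpenMap pr := QuotientGroup.isOpenMap_coe

lemma pr_surjective : Function.Surjective pr := QuotientGroup.mk'_surjective _

lemma pr_eq_one_iff {g : SL2C} : pr g = 1 ↔ g = 1 ∨ g = -1 := by
  rw [pr, QuotientGroup.mk'_apply, QuotientGroup.eq_one_iff,
    Matrix.SpecialLinearGroup.mem_center_iff]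
  constructor
  · rintro ⟨r, hr, hg⟩
    obtain rfl | rfl : r = 1 ∨ r = -1 := by simpa using hr
    · exact .inl (Subtype.ext (by rw [← hg]; simp))
    · exact .inr (Subtype.ext (by rw [← hg, map_neg, map_one]; rfl))
  · rintro (rfl | rfl)
    · exact ⟨1, by simp, by simp⟩
    · exact ⟨-1, by simp, by rw [map_neg, map_one]; rfl⟩

lemma pr_neg (g : SL2C) : pr (-g) = pr g := by
  rw [← neg_one_mul, map_mul, pr_eq_one_iff.2 (.inr rfl), one_mul]

lemma neg_one_mem_comap_pr : (-1 : SL2C) ∈ Γ.comap pr := by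
  rw [Subgroup.mem_comap, pr_neg, map_one]
  exact Γ.one_mem

instance [DiscreteTopology Γ] : DiscreteTopology (Γ.comap pr) := by
  obtain ⟨V, hV, hVΓ⟩ := isOpen_induced_iff.1 (isOpen_discrete ({1} : Set Γ))
  refine discreteTopology_of_isOpen_singleton_one (isOpen_induced_iff.2
    ⟨pr ⁻¹' V ∩ {-1}ᶜ, (hV.preimage continuous_pr).inter isOpen_compl_singleton, ?_⟩)
  ext ⟨γ, hγ⟩
  have mem_V_iff : pr γ ∈ V ↔ pr γ = 1 := by
    have := Set.ext_iff.1 hVΓ ⟨pr γ, hγ⟩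
    simpa [Subtype.ext_iff] using this
  have := one_ne_neg_one
  simp only [mem_preimage, mem_inter_iff, mem_compl_iff, mem_singleton_iff, mem_V_iff,
    pr_eq_one_iff, Subtype.ext_iff, Subgroup.coe_one]
  aesop

/-- The projection `SL(2,ℂ) → Γ\G`, `g ↦ Γ π(g)`. -/
def cosetMk (g : SL2C) : XΓ Γ := mkX Γ (pr g)

variable {Γ}

lemma mkX_eq_iff {a b : PSL2C} : mkX Γ a = mkX Γ b ↔ b * a⁻¹ ∈ Γ := by
  rw [mkX, mkX, Quotient.eq'', QuotientGroup.rightRel_apply]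

lemma cosetMk_eq_iff {a b : SL2C} : cosetMk Γ a = cosetMk Γ b ↔ ∃ γ ∈ Γ.comap pr, b = γ * a := by
  rw [cosetMk, cosetMk, mkX_eq_iff]
  constructor
  · exact fun h => ⟨b * a⁻¹, by simpa using h, by group⟩
  · rintro ⟨γ, hγ, rfl⟩
    simpa using hγ

lemma act_cosetMk (g h : SL2C) : act Γ (cosetMk Γ g) (pr h) = cosetMk Γ (g * h) := by
  rw [cosetMk, cosetMk, map_mul]
  rfl

variable (Γ)

lemma continuous_cosetMk : Continuous (cosetMk Γ) := continuous_quotient_mk'.comp continuous_pr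

lemma cosetMk_surjective : Function.Surjective (cosetMk Γ) :=
  Quotient.mk''_surjective.comp pr_surjective

lemma preimage_image_cosetMk (V : Set SL2C) :
    cosetMk Γ ⁻¹' (cosetMk Γ '' V) = (Γ.comap pr : Set SL2C) * V := by
  ext x
  simp only [mem_preimage, mem_image, cosetMk_eq_iff, Set.mem_mul, SetLike.mem_coe]
  exact ⟨fun ⟨v, hv, γ, hγ, h⟩ => ⟨γ, hγ, v, hv, h.symm⟩,
    fun ⟨γ, hγ, v, hv, h⟩ => ⟨v, hv, γ, hγ, h.symm⟩⟩

lemma isQuotientMap_cosetMk : IsQuotientMap (cosetMk Γ) :=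
  isQuotientMap_quotient_mk'.comp (isOpenMap_pr.isQuotientMap continuous_pr pr_surjective)

lemma isOpenMap_cosetMk : IsOpenMap (cosetMk Γ) := fun V hV => by
  rw [← (isQuotientMap_cosetMk Γ).isOpen_preimage, preimage_image_cosetMk]
  exact hV.mul_left

lemma continuous_act (g : PSL2C) : Continuous (fun x => act Γ x g) := by
  obtain ⟨h, rfl⟩ := pr_surjective g
  refine (isQuotientMap_cosetMk Γ).continuous_iff.2 ?_
  simp only [Function.comp_def, act_cosetMk]
  exact (continuous_cosetMk Γ).comp (continuous_mul_const h)

/-- Right translation by `g` on `Γ\G`. -/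
def actHomeomorph (g : SL2C) : XΓ Γ ≃ₜ XΓ Γ where
  toFun x := act Γ x (pr g)
  invFun x := act Γ x (pr g⁻¹)
  left_inv x := by
    obtain ⟨h, rfl⟩ := cosetMk_surjective Γ x
    dsimp only
    rw [act_cosetMk, act_cosetMk, mul_inv_cancel_right]
  right_inv x := by
    obtain ⟨h, rfl⟩ := cosetMk_surjective Γ x
    dsimp only
    rw [act_cosetMk, act_cosetMk, inv_mul_cancel_right]
  continuous_toFun := continuous_act Γ _
  continuous_invFun := continuous_act Γ _

lemma actHomeomorph_cosetMk (g h : SL2C) :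
    actHomeomorph Γ h (cosetMk Γ g) = cosetMk Γ (g * h) := act_cosetMk g h

lemma iterate_actHomeomorph (a g : SL2C) (k : ℕ) :
    (actHomeomorph Γ a)^[k] (cosetMk Γ g) = cosetMk Γ (g * a ^ k) := by
  induction k with
  | zero => simp
  | succ k ih =>
    rw [Function.iterate_succ_apply', ih, actHomeomorph_cosetMk, pow_succ, mul_assoc]

end Projection

/-- The preimage in `SL(2,ℂ)` of the `ε`-thick part of `L\SL(2,ℂ)`: the set of `g` such that every
noncentral element of `g⁻¹ L g` is `ε`-far from the center. -/
def thickPart (L : Subgroup SL2C) (ε : ℝ) : Set SL2C :=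
  {g | ∀ γ ∈ L, scalarDist γ ≠ 0 → ε ≤ scalarDist (g⁻¹ * γ * g)}

/-- The three consequences of being a lattice on which the argument rests: discreteness, Poincaré
recurrence of every one-parameter flow, and compactness of the thick part modulo `L`. The center is
included because `L` is the full preimage of a lattice of `PSL(2,ℂ)`. -/
structure LatticeProperties (L : Subgroup SL2C) : Prop where
  neg_one_mem : (-1 : SL2C) ∈ L
  discrete : DiscreteTopology L
  recurrent : ∀ (a : SL2C) (V : Set SL2C), IsOpen V → V.Nonempty → ∀ N : ℕ,
    ∃ k ≥ N, ∃ x ∈ V, ∃ γ ∈ L, γ * x * a ^ k ∈ V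
  thickPart_subset : ∀ ε > 0, ∃ K, IsCompact K ∧ thickPart L ε ⊆ (L : Set SL2C) * K

section ThickPart

variable {L : Subgroup SL2C}

lemma eq_one_of_mem_thickPart {ε : ℝ} {g γ : SL2C} (hg : g ∈ thickPart L ε) (hγ : γ ∈ L)
    (hlt : scalarDist (g⁻¹ * γ * g) < ε) (hne : g⁻¹ * γ * g ≠ -1) : γ = 1 := by
  have scalarDist_eq : scalarDist γ = 0 := of_not_not fun h => (hg γ hγ h).not_gt hlt
  rcases scalarDist_eq_zero_iff.1 scalarDist_eq with rfl | rfl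
  · rfl
  · simp at hne

lemma finite_setOf_scalarDist_conj_le [DiscreteTopology L] (x : SL2C) (R : ℝ) :
    {γ | γ ∈ L ∧ scalarDist (x⁻¹ * γ * x) ≤ R}.Finite := by
  set c := ‖(↑x⁻¹ : Matrix (Fin 2) (Fin 2) ℂ)‖ ^ 2
  have finite_in_L : {γ : L | ‖((γ : SL2C) : Matrix (Fin 2) (Fin 2) ℂ)‖ ≤
      3 * (c * R) + 2}.Finite := by
    have escape := L.tendsto_coe_cofinite_of_discrete (isDiscrete_iff_discreteTopology.2 ‹_›)
      (isCompact_setOf_norm_le (3 * (c * R) + 2)).compl_mem_cocompact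
    simpa using escape
  refine (finite_in_L.image Subtype.val).subset fun γ hγ => ⟨⟨γ, hγ.1⟩, ?_, rfl⟩
  have conj_back := scalarDist_conj_le x⁻¹ (x⁻¹ * γ * x)
  rw [show x⁻¹⁻¹ * (x⁻¹ * γ * x) * x⁻¹ = γ by group] at conj_back
  calc ‖(γ : Matrix (Fin 2) (Fin 2) ℂ)‖ ≤ 3 * scalarDist γ + 2 := norm_coe_le_of_scalarDist γ
    _ ≤ 3 * (c * scalarDist (x⁻¹ * γ * x)) + 2 := by gcongr
    _ ≤ 3 * (c * R) + 2 := by gcongr; exact hγ.2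

lemma exists_minimal_scalarDist_conj [DiscreteTopology L] (x : SL2C) {γ₀ : SL2C} (hγ₀ : γ₀ ∈ L)
    (hne : scalarDist γ₀ ≠ 0) :
    ∃ γ ∈ L, scalarDist γ ≠ 0 ∧
      ∀ δ ∈ L, scalarDist δ ≠ 0 → scalarDist (x⁻¹ * γ * x) ≤ scalarDist (x⁻¹ * δ * x) := by
  let S := {γ | γ ∈ L ∧ scalarDist (x⁻¹ * γ * x) ≤ scalarDist (x⁻¹ * γ₀ * x)} ∩
    {γ | scalarDist γ ≠ 0}
  have S_finite : S.Finite := (finite_setOf_scalarDist_conj_le x _).inter_of_left _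
  obtain ⟨γ, hγ, hmin⟩ := S.exists_min_image (fun γ => scalarDist (x⁻¹ * γ * x)) S_finite
    ⟨γ₀, ⟨hγ₀, le_rfl⟩, hne⟩
  refine ⟨γ, hγ.1.1, hγ.2, fun δ hδ hδne => ?_⟩
  obtain h | h := le_total (scalarDist (x⁻¹ * δ * x)) (scalarDist (x⁻¹ * γ₀ * x))
  · exact hmin δ ⟨⟨hδ, h⟩, hδne⟩
  · exact hγ.1.2.trans h

lemma exists_mem_thickPart [DiscreteTopology L] (x : SL2C) : ∃ ε > 0, x ∈ thickPart L ε := by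
  by_cases h : ∃ γ₀ ∈ L, scalarDist γ₀ ≠ 0
  · obtain ⟨γ₀, hγ₀, hne⟩ := h
    obtain ⟨γ, -, hγne, hmin⟩ := exists_minimal_scalarDist_conj x hγ₀ hne
    exact ⟨_, (scalarDist_nonneg _).lt_of_ne' (scalarDist_conj_eq_zero_iff.not.2 hγne), hmin⟩
  · push Not at h
    exact ⟨1, one_pos, fun γ hγ hne => absurd (h γ hγ) hne⟩

end ThickPart

section InjectivityRadius

variable {Γ}

lemma injOn_cosetMk_smul {ε : ℝ} {g : SL2C} (hg : g ∈ thickPart (Γ.comap pr) ε) {B : Set SL2C}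
    (hB : ∀ b ∈ B, ∀ b' ∈ B, scalarDist (b / b') < ε ∧ b / b' ≠ -1) :
    InjOn (cosetMk Γ) (g • B) := by
  rintro _ ⟨b, hb, rfl⟩ _ ⟨b', hb', rfl⟩ h
  obtain ⟨γ, hγ, hγb⟩ := cosetMk_eq_iff.1 h
  have conj_eq : g⁻¹ * γ * g = b' / b := by
    have : b' = g⁻¹ * (γ * (g * b)) := by simpa [smul_eq_mul] using congrArg (g⁻¹ * ·) hγb
    rw [this, div_eq_mul_inv]
    group
  have γ_eq_one := eq_one_of_mem_thickPart hg hγ (conj_eq ▸ (hB b' hb' b hb).1)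
    (conj_eq ▸ (hB b' hb' b hb).2)
  rw [hγb, γ_eq_one, one_mul]

variable (Γ)

lemma exists_isOpen_injOn_cosetMk_smul {ε : ℝ} (hε : 0 < ε) :
    ∃ B C : Set SL2C, IsOpen B ∧ (1 : SL2C) ∈ B ∧ IsCompact C ∧ B / B ⊆ C ∧
      ∀ g ∈ thickPart (Γ.comap pr) ε, InjOn (cosetMk Γ) (g • B) := by
  obtain ⟨C, hC, hC_nhds⟩ := exists_compact_mem_nhds (1 : SL2C)
  have small_isOpen : IsOpen ({g : SL2C | scalarDist g < ε} ∩ {-1}ᶜ) :=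
    (isOpen_lt continuous_scalarDist continuous_const).inter isOpen_compl_singleton
  obtain ⟨W, hW, hWsub⟩ := exists_nhds_split_inv
    (inter_mem (small_isOpen.mem_nhds ⟨by simpa using hε, one_ne_neg_one⟩) hC_nhds)
  obtain ⟨B, hBW, hB, hB1⟩ := mem_nhds_iff.1 hW
  refine ⟨B, C, hB, hB1, hC, ?_, fun g hg => injOn_cosetMk_smul hg fun b hb b' hb' =>
    (hWsub b (hBW hb) b' (hBW hb')).1⟩
  rintro _ ⟨b, hb, b', hb', rfl⟩
  exact (hWsub b (hBW hb) b' (hBW hb')).2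

lemma isLocalHomeomorph_cosetMk [DiscreteTopology Γ] : IsLocalHomeomorph (cosetMk Γ) := by
  refine isLocalHomeomorph_iff_isOpenEmbedding_restrict.2 fun x => ?_
  obtain ⟨ε, hε, hx⟩ := exists_mem_thickPart (L := Γ.comap pr) x
  obtain ⟨B, -, hB, hB1, -, -, hinj⟩ := exists_isOpen_injOn_cosetMk_smul Γ hε
  have isOpen_smul : IsOpen (x • B) := hB.smul x
  exact ⟨x • B, isOpen_smul.mem_nhds ⟨1, hB1, mul_one x⟩,
    .of_continuous_injective_isOpenMap ((continuous_cosetMk Γ).comp continuous_subtype_val)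
      (injOn_iff_injective.1 (hinj x hx))
      ((isOpenMap_cosetMk Γ).comp isOpen_smul.isOpenMap_subtype_val)⟩

end InjectivityRadius

section InvariantMeasure

open MeasureTheory

instance : MeasurableSpace SL2C := borel SL2C

instance : BorelSpace SL2C := ⟨rfl⟩

variable {Γ} [MeasurableSpace (XΓ Γ)] [BorelSpace (XΓ Γ)] {μ : Measure (XΓ Γ)}

lemma measurePreserving_actHomeomorph (hinv : ∀ g, μ.map (fun x => act Γ x g) = μ) (g : SL2C) :
    MeasurePreserving (actHomeomorph Γ g) μ μ :=
  ⟨(actHomeomorph Γ g).continuous.measurable, hinv (pr g)⟩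

lemma measure_ne_zero_of_isOpen (hμ : μ ≠ 0) (hinv : ∀ g, μ.map (fun x => act Γ x g) = μ)
    {O : Set (XΓ Γ)} (hO : IsOpen O) (hne : O.Nonempty) : μ O ≠ 0 := by
  intro hzero
  obtain ⟨S, hS, hSd⟩ := TopologicalSpace.exists_countable_dense SL2C
  have translates_cover : univ ⊆ ⋃ s ∈ S, actHomeomorph Γ s ⁻¹' O := fun x _ => by
    obtain ⟨g, rfl⟩ := cosetMk_surjective Γ x
    obtain ⟨y, hy⟩ := hne
    obtain ⟨k, rfl⟩ := cosetMk_surjective Γ y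
    obtain ⟨s, hs, hsS⟩ := hSd.inter_open_nonempty {s | cosetMk Γ (g * s) ∈ O}
      (hO.preimage ((continuous_cosetMk Γ).comp (continuous_const_mul g)))
      ⟨g⁻¹ * k, by simpa using hy⟩
    exact mem_iUnion₂.2 ⟨s, hsS, by rwa [mem_preimage, actHomeomorph_cosetMk]⟩
  refine hμ (Measure.measure_univ_eq_zero.1 (measure_mono_null translates_cover ?_))
  refine (measure_biUnion_null_iff hS).2 fun s _ => ?_
  rw [(measurePreserving_actHomeomorph hinv s).measure_preimage
    hO.measurableSet.nullMeasurableSet, hzero]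

variable [IsFiniteMeasure μ]

lemma exists_return (hμ : μ ≠ 0) (hinv : ∀ g, μ.map (fun x => act Γ x g) = μ) (a : SL2C)
    {V : Set SL2C} (hV : IsOpen V) (hne : V.Nonempty) (N : ℕ) :
    ∃ k ≥ N, ∃ x ∈ V, ∃ γ ∈ Γ.comap pr, γ * x * a ^ k ∈ V := by
  have image_isOpen := isOpenMap_cosetMk Γ V hV
  obtain ⟨k, hk, hreturn⟩ :=
    (measurePreserving_actHomeomorph hinv a).conservative.exists_gt_measure_inter_ne_zero
      image_isOpen.measurableSet.nullMeasurableSet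
      (measure_ne_zero_of_isOpen hμ hinv image_isOpen (hne.image _)) N
  obtain ⟨_, ⟨x, hx, rfl⟩, hxk⟩ := nonempty_of_measure_ne_zero hreturn
  rw [mem_preimage, iterate_actHomeomorph] at hxk
  obtain ⟨y, hy, hxy⟩ := hxk
  obtain ⟨γ, hγ, rfl⟩ := cosetMk_eq_iff.1 hxy.symm
  exact ⟨k, hk.le, x, hx, γ, hγ, by rwa [mul_assoc]⟩

variable [DiscreteTopology Γ]

lemma exists_measure_image_smul_eq (hinv : ∀ g, μ.map (fun x => act Γ x g) = μ) :
    ∃ m : Measure SL2C, ∀ (g : SL2C) (B : Set SL2C), IsOpen B → InjOn (cosetMk Γ) (g • B) →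
      μ (cosetMk Γ '' (g • B)) = m B := by
  have cosetMk_local := isLocalHomeomorph_cosetMk Γ
  obtain ⟨m, hm⟩ := exists_lift_measure cosetMk_local μ
  have : IsLocallyFiniteMeasure m := isLocallyFiniteMeasure_of_lift cosetMk_local hm
  have : m.IsMulRightInvariant := ⟨fun g => (measurePreserving_of_lift cosetMk_local hm
    (f := Homeomorph.mulRight g) (fun x => (actHomeomorph_cosetMk Γ x g).symm)
    (measurePreserving_actHomeomorph hinv g)).map_eq⟩
  have : m.IsMulLeftInvariant := isMulLeftInvariant_of_commutator_eq_top
    (Matrix.SL2.commutator_eq_top (F := ℂ) (a := 2) (by norm_num) (by norm_num)) m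
  exact ⟨m, fun g B hB hinj => by rw [← hm _ (hB.smul g).measurableSet hinj, measure_smul]⟩

lemma exists_isCompact_thickPart_subset (hμ : μ ≠ 0)
    (hinv : ∀ g, μ.map (fun x => act Γ x g) = μ) {ε : ℝ} (hε : 0 < ε) :
    ∃ K, IsCompact K ∧ thickPart (Γ.comap pr) ε ⊆ (Γ.comap pr : Set SL2C) * K := by
  obtain h | ⟨g₀, hg₀⟩ := (thickPart (Γ.comap pr) ε).eq_empty_or_nonempty
  · exact ⟨∅, isCompact_empty, by simp [h]⟩
  obtain ⟨m, hm⟩ := exists_measure_image_smul_eq hinv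
  obtain ⟨B, C, hB, hB1, hC, hBC, hinj⟩ := exists_isOpen_injOn_cosetMk_smul Γ hε
  have isOpen_image (g : SL2C) : IsOpen (cosetMk Γ '' (g • B)) :=
    isOpenMap_cosetMk Γ _ (hB.smul g)
  have measure_pos : 0 < m B := by
    rw [← hm g₀ B hB (hinj g₀ hg₀), pos_iff_ne_zero]
    exact measure_ne_zero_of_isOpen hμ hinv (isOpen_image g₀) 
      ⟨_, mem_image_of_mem _ (smul_mem_smul_set hB1)⟩
  obtain ⟨s, hs, -, hmax⟩ := exists_finite_maximal_disjoint_of_le_measure μ measure_pos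
    (E := fun g => cosetMk Γ '' (g • B)) (fun g _ => (isOpen_image g).measurableSet)
    fun g hg => (hm g B hB (hinj g hg)).ge
  refine ⟨⋃ g ∈ s, g • C, hs.isCompact_biUnion fun g _ => hC.smul g, fun g hg => ?_⟩
  obtain ⟨g', hg's, _, ⟨_, ⟨b, hb, rfl⟩, rfl⟩, _, ⟨b', hb', rfl⟩, hbb'⟩ := hmax g hg
  obtain ⟨γ, hγ, hγb⟩ := cosetMk_eq_iff.1 hbb'
  refine ⟨γ, hγ, γ⁻¹ * g, mem_iUnion₂.2 ⟨g', hg's, b' / b, hBC (div_mem_div hb' hb), ?_⟩,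
    mul_inv_cancel_left γ g⟩
  have eq_mul : g = γ * (g' * b') * b⁻¹ := by
    rw [eq_mul_inv_iff_mul_eq]
    exact hγb
  change g' * (b' / b) = γ⁻¹ * g
  rw [eq_mul, div_eq_mul_inv]
  group

end InvariantMeasure

lemma latticeProperties_comap_pr [DiscreteTopology Γ] (hΓ : IsLattice Γ) :
    LatticeProperties (Γ.comap pr) := by
  let _ : MeasurableSpace (XΓ Γ) := borel _
  have : BorelSpace (XΓ Γ) := ⟨rfl⟩
  obtain ⟨μ, hμ, _, hinv⟩ := hΓ
  exact ⟨neg_one_mem_comap_pr Γ, inferInstance,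
    fun a V hV hne N => exists_return hμ hinv a hV hne N,
    fun ε hε => exists_isCompact_thickPart_subset hμ hinv hε⟩

section OneParameterSubgroups

@[simp] lemma uMat_zero_zero (z : ℂ) : uMat z 0 0 = 1 := rfl

@[simp] lemma uMat_zero_one (z : ℂ) : uMat z 0 1 = z := rfl

@[simp] lemma uMat_one_zero (z : ℂ) : uMat z 1 0 = 0 := rfl

@[simp] lemma uMat_one_one (z : ℂ) : uMat z 1 1 = 1 := rfl

lemma uMat_add (z w : ℂ) : uMat (z + w) = uMat z * uMat w := by
  apply ext_entries <;> simp [mul_apply, add_comm]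

lemma uMat_zero : uMat 0 = 1 := by
  apply ext_entries <;> simp

lemma uMat_inv (z : ℂ) : (uMat z)⁻¹ = uMat (-z) :=
  inv_eq_of_mul_eq_one_right (by rw [← uMat_add, add_neg_cancel, uMat_zero])

lemma continuous_uMat : Continuous uMat :=
  continuous_iff_continuousAt.2 fun z => tendsto_nhds_iff.2 fun i j => by
    fin_cases i <;> fin_cases j
    exacts [tendsto_const_nhds, tendsto_id, tendsto_const_nhds, tendsto_const_nhds]

/-- The diagonal matrix with entries `e ^ t` and `e ^ (-t)`; right multiplication by it is the
geodesic flow at time `2 * t`. -/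
def aMat (t : ℝ) : SL2C :=
  ⟨!![(Real.exp t : ℂ), 0; 0, (Real.exp (-t) : ℂ)], by
    rw [Matrix.det_fin_two_of, mul_zero, sub_zero, ← Complex.ofReal_mul, ← Real.exp_add]
    simp⟩

@[simp] lemma aMat_zero_zero (t : ℝ) : aMat t 0 0 = (Real.exp t : ℂ) := rfl

@[simp] lemma aMat_zero_one (t : ℝ) : aMat t 0 1 = 0 := rfl

@[simp] lemma aMat_one_zero (t : ℝ) : aMat t 1 0 = 0 := rfl

@[simp] lemma aMat_one_one (t : ℝ) : aMat t 1 1 = (Real.exp (-t) : ℂ) := rfl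

lemma aMat_add (s t : ℝ) : aMat (s + t) = aMat s * aMat t := by
  apply ext_entries <;> simp [mul_apply, Complex.exp_add, mul_comm]

lemma aMat_zero : aMat 0 = 1 := by
  apply ext_entries <;> simp

lemma aMat_inv (t : ℝ) : (aMat t)⁻¹ = aMat (-t) :=
  inv_eq_of_mul_eq_one_right (by rw [← aMat_add, add_neg_cancel, aMat_zero])

lemma aMat_pow (t : ℝ) (k : ℕ) : aMat t ^ k = aMat (k * t) := by
  induction k with
  | zero => simp [aMat_zero]
  | succ k ih => rw [pow_succ, ih, ← aMat_add, Nat.cast_succ, add_one_mul]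

lemma continuous_aMat : Continuous aMat :=
  continuous_iff_continuousAt.2 fun t => tendsto_nhds_iff.2 fun i j => by
    have entry_continuous (c : ℝ) : Continuous fun t : ℝ => (Real.exp (c * t) : ℂ) := by fun_prop
    fin_cases i <;> fin_cases j
    exacts [by simpa using (entry_continuous 1).tendsto t, tendsto_const_nhds, tendsto_const_nhds,
      by simpa using (entry_continuous (-1)).tendsto t]

lemma conj_uMat_mul_aMat_zero_one (s t : ℝ) (g : SL2C) :
    ((uMat s * aMat t)⁻¹ * g * (uMat s * aMat t)) 0 1 =
      (Real.exp (-t) : ℂ) ^ 2 * (g 0 1 + s * (g 0 0 - g 1 1) - s ^ 2 * g 1 0) := by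
  rw [_root_.mul_inv_rev, uMat_inv, aMat_inv]
  simp only [mul_apply, uMat_zero_zero, uMat_zero_one, uMat_one_zero, uMat_one_one, aMat_zero_zero,
    aMat_zero_one, aMat_one_one]
  ring

end OneParameterSubgroups

section Commute

variable {g h k : SL2C}

lemma tracelessPart_mul_eq_of_commute {P Q : Matrix (Fin 2) (Fin 2) ℂ} (hPQ : Commute P Q)
    (i j k l : Fin 2) :
    tracelessPart P i j * tracelessPart Q k l = tracelessPart Q i j * tracelessPart P k l := by
  have entry (i j : Fin 2) := congrFun (congrFun hPQ.eq i) j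
  simp only [Matrix.mul_apply, Fin.sum_univ_two] at entry
  have h₀₀ := entry 0 0
  have h₀₁ := entry 0 1
  have h₁₀ := entry 1 0
  fin_cases i <;> fin_cases j <;> fin_cases k <;> fin_cases l <;> simp <;> grind

lemma exists_tracelessPart_eq_smul_of_commute (hgh : Commute g h) (hg : scalarDist g ≠ 0) :
    ∃ c : ℂ, tracelessPart h = c • tracelessPart g := by
  obtain ⟨i, j, hij⟩ : ∃ i j, tracelessPart g i j ≠ 0 := by
    contrapose! hg
    exact scalarDist_eq_zero_iff_tracelessPart.2 (Matrix.ext hg)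
  have cross_mul := tracelessPart_mul_eq_of_commute
    (Q := h) (congrArg Subtype.val hgh.eq) i j
  refine ⟨tracelessPart h i j / tracelessPart g i j, Matrix.ext fun k l => ?_⟩
  rw [Matrix.smul_apply, smul_eq_mul, div_mul_eq_mul_div, eq_div_iff hij, mul_comm]
  exact cross_mul k l

lemma commute_of_tracelessPart_eq_smul {c : ℂ} (hc : tracelessPart h = c • tracelessPart g) :
    Commute g h := by
  have commute_coe : Commute (g : Matrix (Fin 2) (Fin 2) ℂ) (h : Matrix (Fin 2) (Fin 2) ℂ) := by
    rw [← smul_one_add_tracelessPart (h : Matrix (Fin 2) (Fin 2) ℂ), hc, tracelessPart]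
    exact ((Commute.one_right _).smul_right _).add_right
      (((Commute.refl _).sub_right ((Commute.one_right _).smul_right _)).smul_right _)
  exact Subtype.ext commute_coe

lemma commute_of_scalarDist_eq_zero (hg : scalarDist g = 0) (h : SL2C) : Commute g h := by
  obtain rfl | rfl := scalarDist_eq_zero_iff.1 hg
  · exact .one_left h
  · exact (Commute.one_left h).neg_left

lemma commute_trans (hh : scalarDist h ≠ 0) (hgh : Commute g h) (hhk : Commute h k) :
    Commute g k := by
  obtain ⟨c, hc⟩ := exists_tracelessPart_eq_smul_of_commute hgh.symm hh
  obtain ⟨d, hd⟩ := exists_tracelessPart_eq_smul_of_commute hhk hh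
  obtain rfl | hc0 := eq_or_ne c 0
  · exact commute_of_scalarDist_eq_zero
      (scalarDist_eq_zero_iff_tracelessPart.2 (by rw [hc, zero_smul])) k
  · exact commute_of_tracelessPart_eq_smul (c := d / c)
      (by rw [hd, hc, smul_smul, div_mul_cancel₀ _ hc0])

lemma scalarDist_eq_of_tracelessPart_eq_smul {c : ℂ} (hc : tracelessPart h = c • tracelessPart g)
    (x : SL2C) : scalarDist (x⁻¹ * h * x) = ‖c‖ * scalarDist (x⁻¹ * g * x) := by
  simp only [scalarDist, tracelessPart_conj, hc, mul_smul_comm, smul_mul_assoc, norm_smul]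

end Commute

section Zassenhaus

open scoped commutatorElement

variable {L : Subgroup SL2C} {g h : SL2C}

lemma coe_commutator_sub_one (g h : SL2C) :
    (↑⁅g, h⁆ : Matrix (Fin 2) (Fin 2) ℂ) - 1 =
      (tracelessPart g * tracelessPart h - tracelessPart h * tracelessPart g) *
        (↑g⁻¹ : Matrix (Fin 2) (Fin 2) ℂ) * (↑h⁻¹ : Matrix (Fin 2) (Fin 2) ℂ) := by
  have bracket_eq : tracelessPart g * tracelessPart h - tracelessPart h * tracelessPart g =
      (g : Matrix (Fin 2) (Fin 2) ℂ) * (h : Matrix (Fin 2) (Fin 2) ℂ) -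
        (h : Matrix (Fin 2) (Fin 2) ℂ) * (g : Matrix (Fin 2) (Fin 2) ℂ) := by
    simp only [tracelessPart, mul_sub, sub_mul, smul_mul_assoc, mul_smul_comm, one_mul, mul_one]
    module
  have cancel : h * g * g⁻¹ * h⁻¹ = 1 := by group
  rw [bracket_eq, sub_mul, sub_mul]
  exact congrArg _ (congrArg Subtype.val cancel).symm

lemma scalarDist_commutator_le (g h : SL2C) :
    scalarDist ⁅g, h⁆ ≤ 2 * ‖(g : Matrix (Fin 2) (Fin 2) ℂ)‖ *
      ‖(h : Matrix (Fin 2) (Fin 2) ℂ)‖ * scalarDist g * scalarDist h := by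
  have bracket_le : ‖tracelessPart g * tracelessPart h - tracelessPart h * tracelessPart g‖ ≤
      2 * (scalarDist g * scalarDist h) :=
    calc _ ≤ ‖tracelessPart g * tracelessPart h‖ + ‖tracelessPart h * tracelessPart g‖ :=
          norm_sub_le _ _
      _ ≤ scalarDist g * scalarDist h + scalarDist h * scalarDist g :=
          add_le_add (norm_mul_le _ _) (norm_mul_le _ _)
      _ = 2 * (scalarDist g * scalarDist h) := by ring
  calc scalarDist ⁅g, h⁆ ≤ ‖(↑⁅g, h⁆ : Matrix (Fin 2) (Fin 2) ℂ) - 1‖ :=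
        scalarDist_le_norm_sub_one _
    _ ≤ 2 * (scalarDist g * scalarDist h) * ‖(↑g⁻¹ : Matrix (Fin 2) (Fin 2) ℂ)‖ *
          ‖(↑h⁻¹ : Matrix (Fin 2) (Fin 2) ℂ)‖ := by
        rw [coe_commutator_sub_one]
        exact norm_mul₃_le.trans (by gcongr)
    _ = _ := by rw [norm_coe_inv, norm_coe_inv]; ring

lemma commutator_ne_neg_one (hg : scalarDist g < 1) : ⁅g, h⁆ ≠ -1 := by
  intro hcomm
  have anticommute : h * g * h⁻¹ = -g := by
    have : h * g * h⁻¹ = ⁅g, h⁆⁻¹ * g := by group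
    rw [this, hcomm]
    simp
  have trace_eq_zero : (g : Matrix (Fin 2) (Fin 2) ℂ).trace = 0 := by
    have trace_conj : (↑(h * g * h⁻¹) : Matrix (Fin 2) (Fin 2) ℂ).trace =
        (g : Matrix (Fin 2) (Fin 2) ℂ).trace :=
      (Matrix.trace_mul_comm (h * g : Matrix (Fin 2) (Fin 2) ℂ) _).trans
        (congrArg (fun k : SL2C => (k : Matrix (Fin 2) (Fin 2) ℂ).trace) (inv_mul_cancel_left h g))
    rwa [anticommute, Matrix.SpecialLinearGroup.coe_neg, Matrix.trace_neg, neg_eq_self]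
      at trace_conj
  have one_le := norm_half_trace_sq_sub_one_le g
  rw [trace_eq_zero] at one_le
  norm_num [abs_of_nonneg (scalarDist_nonneg g)] at one_le
  exact one_le.not_gt hg

lemma commute_of_commute_commutator (hg : scalarDist g < 1) (hcg : Commute ⁅g, h⁆ g)
    (hch : Commute ⁅g, h⁆ h) : Commute g h := by
  by_cases hcentral : scalarDist ⁅g, h⁆ = 0
  · exact commutatorElement_eq_one_iff_commute.1
      ((scalarDist_eq_zero_iff.1 hcentral).resolve_right (commutator_ne_neg_one hg))
  · exact commute_trans hcentral hcg.symm hch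

/-- A Zassenhaus radius for `SL(2,ℂ)`: elements of a discrete subgroup that are closer than this to
the center commute with one another. The value makes commutators contract, as the estimate
`scalarDist_commutator_le` has the constant `2` and the norms in it are at most `3`. -/
def zassenhausRadius : ℝ := 1 / 18

lemma zassenhausRadius_pos : 0 < zassenhausRadius := by norm_num [zassenhausRadius]

lemma scalarDist_commutator_lt (hg : scalarDist g < zassenhausRadius) (hg0 : scalarDist g ≠ 0)
    (hh : scalarDist h < zassenhausRadius) : scalarDist ⁅g, h⁆ < scalarDist g := by
  rw [zassenhausRadius] at hg hh
  have g_pos := (scalarDist_nonneg g).lt_of_ne' hg0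
  calc scalarDist ⁅g, h⁆ ≤ 2 * ‖(g : Matrix (Fin 2) (Fin 2) ℂ)‖ *
      ‖(h : Matrix (Fin 2) (Fin 2) ℂ)‖ * scalarDist g * scalarDist h :=
        scalarDist_commutator_le g h
    _ ≤ 2 * 3 * 3 * scalarDist g * scalarDist h := by
      have := scalarDist_nonneg h
      gcongr
      · linarith [norm_coe_le_of_scalarDist g]
      · linarith [norm_coe_le_of_scalarDist h]
    _ < scalarDist g := by nlinarith

lemma conj_commutator (x a b : SL2C) : x⁻¹ * ⁅a, b⁆ * x = ⁅x⁻¹ * a * x, x⁻¹ * b * x⁆ := by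
  group

lemma commute_conj_iff {x a b : SL2C} : Commute (x⁻¹ * a * x) (x⁻¹ * b * x) ↔ Commute a b := by
  simpa using Commute.conj_iff (a := a) (b := b) x⁻¹

theorem commute_of_scalarDist_conj_lt [DiscreteTopology L] {x a b : SL2C} (ha : a ∈ L) (hb : b ∈ L)
    (hax : scalarDist (x⁻¹ * a * x) < zassenhausRadius)
    (hbx : scalarDist (x⁻¹ * b * x) < zassenhausRadius) : Commute a b := by
  by_contra hab
  let short : Set SL2C := {γ | γ ∈ L ∧ scalarDist (x⁻¹ * γ * x) < zassenhausRadius}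
  have short_finite : short.Finite := (finite_setOf_scalarDist_conj_le x zassenhausRadius).subset
    fun γ hγ => ⟨hγ.1, hγ.2.le⟩
  obtain ⟨g, ⟨hg, h, hh, hgh⟩, hmin⟩ := Set.exists_min_image
    (short ∩ {γ | ∃ δ ∈ short, ¬Commute γ δ}) (fun γ => scalarDist (x⁻¹ * γ * x))
    (short_finite.inter_of_left _) ⟨a, ⟨ha, hax⟩, b, ⟨hb, hbx⟩, hab⟩
  have noncentral : scalarDist (x⁻¹ * g * x) ≠ 0 := fun h0 =>
    hgh (commute_of_scalarDist_eq_zero (scalarDist_conj_eq_zero_iff.1 h0) h)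
  have contracts := scalarDist_commutator_lt hg.2 noncentral hh.2
  have commutator_short : ⁅g, h⁆ ∈ short := by
    refine ⟨mul_mem (mul_mem (mul_mem hg.1 hh.1) (inv_mem hg.1)) (inv_mem hh.1), ?_⟩
    rw [conj_commutator]
    exact contracts.trans hg.2
  have commutator_commute {δ : SL2C} (hδ : δ ∈ short) : Commute ⁅g, h⁆ δ := by
    by_contra hne
    have := hmin _ ⟨commutator_short, δ, hδ, hne⟩
    rw [conj_commutator] at this
    exact this.not_gt contracts
  refine hgh (commute_conj_iff (x := x).1 (commute_of_commute_commutator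
    (hg.2.trans (by norm_num [zassenhausRadius])) ?_ ?_)) <;>
  rw [← conj_commutator, commute_conj_iff]
  exacts [commutator_commute hg, commutator_commute hh]

end Zassenhaus

section Nondivergence

lemma continuous_scalarDist_conj (γ : SL2C) : Continuous fun y => scalarDist (y⁻¹ * γ * y) :=
  continuous_scalarDist.comp ((continuous_inv.mul continuous_const).mul continuous_id)

lemma scalarDist_eq_zero_of_conj_le {q : SL2C} {T R : ℝ}
    (h : ∀ s t : ℝ, t < T → scalarDist ((uMat s * aMat t)⁻¹ * q * (uMat s * aMat t)) ≤ R) :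
    scalarDist q = 0 := by
  have polynomial_eq_zero (s : ℝ) : q 0 1 + s * (q 0 0 - q 1 1) - s ^ 2 * q 1 0 = 0 := by
    by_contra hne
    have blowup : Tendsto (fun t : ℝ => Real.exp (-t) ^ 2 *
        ‖q 0 1 + s * (q 0 0 - q 1 1) - s ^ 2 * q 1 0‖) atBot atTop :=
      ((tendsto_pow_atTop two_ne_zero).comp
        (Real.tendsto_exp_atTop.comp tendsto_neg_atBot_atTop)).atTop_mul_const (norm_pos_iff.2 hne)
    obtain ⟨t, hRt, htT⟩ := ((blowup.eventually_gt_atTop R).and (eventually_lt_atBot T)).exists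
    have entry_le := (norm_entry_le_scalarDist _ 0 1).trans (h s t htT)
    rw [tracelessPart_zero_one, conj_uMat_mul_aMat_zero_one, norm_mul, norm_pow,
      Complex.norm_of_nonneg (Real.exp_pos _).le] at entry_le
    exact entry_le.not_gt hRt
  have at_zero := polynomial_eq_zero 0
  have at_one := polynomial_eq_zero 1
  have at_neg_one := polynomial_eq_zero (-1)
  push_cast at at_zero at_one at_neg_one
  have h₀₁ : q 0 1 = 0 := by linear_combination at_zero
  have h₁₀ : q 1 0 = 0 := by linear_combination at_zero - (at_one + at_neg_one) / 2
  have h_diag : q 0 0 - q 1 1 = 0 := by linear_combination (at_one - at_neg_one) / 2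
  refine scalarDist_eq_zero_iff_tracelessPart.2 (Matrix.ext fun i j => ?_)
  fin_cases i <;> fin_cases j <;> simp [h₀₁, h₁₀, h_diag]

variable {L : Subgroup SL2C} [DiscreteTopology L] {Ω : Set SL2C}

lemma commute_of_isPreconnected (hΩ : IsPreconnected Ω)
    (hdisj : Disjoint Ω (thickPart L zassenhausRadius)) {x y γ δ : SL2C} (hx : x ∈ Ω) (hy : y ∈ Ω)
    (hγ : γ ∈ L) (hγx : scalarDist (x⁻¹ * γ * x) < zassenhausRadius)
    (hδ : δ ∈ L) (hδy : scalarDist (y⁻¹ * δ * y) < zassenhausRadius) : Commute γ δ := by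
  let short (x : SL2C) : Set SL2C := {γ | γ ∈ L ∧ scalarDist (x⁻¹ * γ * x) < zassenhausRadius}
  refine hΩ.induction₂ (fun x y => ∀ γ ∈ short x, ∀ δ ∈ short y, Commute γ δ) ?_ ?_ ?_ hx hy
    γ ⟨hγ, hγx⟩ δ ⟨hδ, hδy⟩
  · intro x _
    have short_finite : (short x).Finite :=
      (finite_setOf_scalarDist_conj_le x zassenhausRadius).subset fun γ hγ => ⟨hγ.1, hγ.2.le⟩
    have eventually_commute : ∀ γ ∈ short x, ∀ᶠ y in 𝓝 x, ∀ δ ∈ short y, Commute γ δ := by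
      intro γ hγ
      filter_upwards [(continuous_scalarDist_conj γ).continuousAt.eventually_lt_const hγ.2]
        with y hy δ hδ
      exact commute_of_scalarDist_conj_lt hγ.1 hδ.1 hy hδ.2
    exact ((eventually_all_finite short_finite).2 eventually_commute).filter_mono
      nhdsWithin_le_nhds
  · intro x y z _ hy _ hxy hyz γ hγ δ hδ
    obtain ⟨κ, hκ, hκ0, hκy⟩ : ∃ κ ∈ L, scalarDist κ ≠ 0 ∧
        scalarDist (y⁻¹ * κ * y) < zassenhausRadius := by
      simpa [thickPart] using hdisj.notMem_of_mem_left hy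
    exact commute_trans hκ0 (hxy γ hγ κ ⟨hκ, hκy⟩) (hyz κ ⟨hκ, hκy⟩ δ hδ)
  · exact fun x y _ _ hxy δ hδ γ hγ => (hxy γ hγ δ hδ).symm

lemma exists_scalarDist_conj_le_of_isPreconnected (hΩ : IsPreconnected Ω)
    (hdisj : Disjoint Ω (thickPart L zassenhausRadius)) (hne : Ω.Nonempty) :
    ∃ q ∈ L, scalarDist q ≠ 0 ∧ ∃ R, ∀ x ∈ Ω, scalarDist (x⁻¹ * q * x) ≤ R := by
  have exists_short {x : SL2C} (hx : x ∈ Ω) : ∃ γ ∈ L, scalarDist γ ≠ 0 ∧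
      scalarDist (x⁻¹ * γ * x) < zassenhausRadius := by
    simpa [thickPart] using hdisj.notMem_of_mem_left hx
  obtain ⟨x₀, hx₀⟩ := hne
  obtain ⟨q, hq, hq0, hqx₀⟩ := exists_short hx₀
  obtain ⟨η, hη, hthick⟩ := exists_mem_thickPart (L := L) 1
  refine ⟨q, hq, hq0, zassenhausRadius * scalarDist q / η, fun x hx => ?_⟩
  obtain ⟨γ, hγ, hγ0, hγx⟩ := exists_short hx
  obtain ⟨c, hc⟩ := exists_tracelessPart_eq_smul_of_commute
    (commute_of_isPreconnected hΩ hdisj hx₀ hx hq hqx₀ hγ hγx) hq0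
  have le_scale : η ≤ ‖c‖ * scalarDist q := by
    simpa using (hthick γ hγ hγ0).trans_eq (scalarDist_eq_of_tracelessPart_eq_smul hc 1)
  rw [scalarDist_eq_of_tracelessPart_eq_smul hc] at hγx
  have := scalarDist_nonneg (x⁻¹ * q * x)
  rw [le_div_iff₀ hη]
  calc scalarDist (x⁻¹ * q * x) * η ≤ scalarDist (x⁻¹ * q * x) * (‖c‖ * scalarDist q) := by gcongr
    _ = ‖c‖ * scalarDist (x⁻¹ * q * x) * scalarDist q := by ring
    _ ≤ zassenhausRadius * scalarDist q := by
      have := scalarDist_nonneg q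
      gcongr

theorem exists_mul_uMat_mul_aMat_mem_thickPart (L : Subgroup SL2C) [DiscreteTopology L] (y : SL2C)
    (T : ℝ) : ∃ s t : ℝ, t < T ∧ y * (uMat s * aMat t) ∈ thickPart L zassenhausRadius := by
  by_contra! hno
  let flow : ℝ × ℝ → SL2C := fun z => y * (uMat z.1 * aMat z.2)
  have flow_continuous : Continuous flow := continuous_const.mul
    ((continuous_uMat.comp (by fun_prop)).mul (continuous_aMat.comp (by fun_prop)))
  have isPreconnected : IsPreconnected (flow '' univ ×ˢ Iio T) :=
    (convex_univ.prod (convex_Iio T)).isPreconnected.image _ flow_continuous.continuousOn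
  have disjoint : Disjoint (flow '' univ ×ˢ Iio T) (thickPart L zassenhausRadius) := by
    rw [Set.disjoint_left]
    rintro _ ⟨⟨s, t⟩, ⟨-, ht⟩, rfl⟩
    exact hno s t ht
  obtain ⟨q, -, hq0, R, hR⟩ := exists_scalarDist_conj_le_of_isPreconnected isPreconnected disjoint
    ⟨_, mem_image_of_mem flow ⟨trivial, sub_one_lt T⟩ (x := (0, T - 1))⟩
  refine hq0 (scalarDist_conj_eq_zero_iff (x := y).1
    (scalarDist_eq_zero_of_conj_le (T := T) (R := R) fun s t ht => ?_))
  convert hR _ (mem_image_of_mem flow (x := (s, t)) ⟨trivial, ht⟩) using 2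
  simp only [flow]
  group

end Nondivergence

section MinimalSets

/-- Closed sets `C` with `L * C ⊆ C` and `C * S ⊆ C`, that is, preimages in `SL(2,ℂ)` of the closed
`S`-invariant subsets of `L \ SL(2,ℂ)`. -/
structure IsClosedInvariant (L : Subgroup SL2C) (S C : Set SL2C) : Prop where
  isClosed : IsClosed C
  left_mul_mem : ∀ γ ∈ L, ∀ x ∈ C, γ * x ∈ C
  mul_right_mem : ∀ s ∈ S, ∀ x ∈ C, x * s ∈ C

/-- Minimal elements among the nonempty closed invariant sets. -/
structure IsMinimalInvariant (L : Subgroup SL2C) (S M : Set SL2C) : Prop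
    extends IsClosedInvariant L S M where
  nonempty : M.Nonempty
  subset_of_inter_nonempty : ∀ C, IsClosedInvariant L S C → (C ∩ M).Nonempty → M ⊆ C

variable {L : Subgroup SL2C} {S C D E K : Set SL2C}

lemma IsClosedInvariant.inter (hC : IsClosedInvariant L S C) (hD : IsClosedInvariant L S D) :
    IsClosedInvariant L S (C ∩ D) where
  isClosed := hC.isClosed.inter hD.isClosed
  left_mul_mem γ hγ x hx := ⟨hC.left_mul_mem γ hγ x hx.1, hD.left_mul_mem γ hγ x hx.2⟩
  mul_right_mem s hs x hx := ⟨hC.mul_right_mem s hs x hx.1, hD.mul_right_mem s hs x hx.2⟩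

lemma IsClosedInvariant.sInter {𝒞 : Set (Set SL2C)} (h𝒞 : ∀ C ∈ 𝒞, IsClosedInvariant L S C) :
    IsClosedInvariant L S (⋂₀ 𝒞) where
  isClosed := isClosed_sInter fun C hC => (h𝒞 C hC).isClosed
  left_mul_mem γ hγ x hx C hC := (h𝒞 C hC).left_mul_mem γ hγ x (hx C hC)
  mul_right_mem s hs x hx C hC := (h𝒞 C hC).mul_right_mem s hs x (hx C hC)

lemma sInter_nonempty_of_isChain {𝒞 : Set (Set SL2C)} (hchain : IsChain (· ⊆ ·) 𝒞)
    (hne : 𝒞.Nonempty) (hclosed : ∀ C ∈ 𝒞, IsClosed C) (hK : IsCompact K)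
    (hmeets : ∀ C ∈ 𝒞, (C ∩ K).Nonempty) : (⋂₀ 𝒞).Nonempty := by
  have : Nonempty 𝒞 := hne.to_subtype
  obtain ⟨z, hz⟩ : (⋂ C : 𝒞, (C : Set SL2C) ∩ K).Nonempty := by
    refine IsCompact.nonempty_iInter_of_directed_nonempty_isCompact_isClosed _ (fun C D => ?_)
      (fun C => hmeets C C.2) (fun C => hK.inter_left (hclosed C C.2))
      (fun C => (hclosed C C.2).inter hK.isClosed)
    obtain hCD | hDC := hchain.total C.2 D.2
    · exact ⟨C, subset_rfl, inter_subset_inter_left _ hCD⟩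
    · exact ⟨D, inter_subset_inter_left _ hDC, subset_rfl⟩
  exact ⟨z, fun C hC => (mem_iInter.1 hz ⟨C, hC⟩).1⟩

lemma exists_isMinimalInvariant (hE : IsClosedInvariant L S E) (hne : E.Nonempty)
    (hK : IsCompact K) (hmeets : ∀ C ⊆ E, IsClosedInvariant L S C → C.Nonempty → (C ∩ K).Nonempty) :
    ∃ M ⊆ E, IsMinimalInvariant L S M := by
  obtain ⟨M, hME, hM⟩ := zorn_superset_nonempty
    {C | IsClosedInvariant L S C ∧ C.Nonempty ∧ C ⊆ E} (fun 𝒞 h𝒞 hchain hne𝒞 =>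
      ⟨⋂₀ 𝒞, ⟨.sInter fun C hC => (h𝒞 hC).1,
        sInter_nonempty_of_isChain hchain hne𝒞 (fun C hC => (h𝒞 hC).1.isClosed) hK
          fun C hC => hmeets C (h𝒞 hC).2.2 (h𝒞 hC).1 (h𝒞 hC).2.1,
        let ⟨C, hC⟩ := hne𝒞; (sInter_subset_of_mem hC).trans (h𝒞 hC).2.2⟩,
        fun C hC => sInter_subset_of_mem hC⟩) E ⟨hE, hne, subset_rfl⟩
  refine ⟨M, hME, hM.prop.1, hM.prop.2.1, fun C hC hCM => ?_⟩
  exact (hM.le_of_le ⟨hC.inter hM.prop.1, hCM, inter_subset_right.trans hME⟩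
    inter_subset_right).trans inter_subset_left

end MinimalSets

section LowerTriangular

/-- The lower triangular unipotent matrix `[[1, 0], [z, 1]]`. -/
def lMat (z : ℂ) : SL2C := ⟨!![1, 0; z, 1], by simp [Matrix.det_fin_two_of]⟩

@[simp] lemma lMat_zero_zero (z : ℂ) : lMat z 0 0 = 1 := rfl

@[simp] lemma lMat_zero_one (z : ℂ) : lMat z 0 1 = 0 := rfl

@[simp] lemma lMat_one_zero (z : ℂ) : lMat z 1 0 = z := rfl

@[simp] lemma lMat_one_one (z : ℂ) : lMat z 1 1 = 1 := rfl

lemma lMat_zero : lMat 0 = 1 := by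
  apply ext_entries <;> simp

lemma lMat_mul_lMat_neg (z : ℂ) : lMat z * lMat (-z) = 1 := by
  apply ext_entries <;> simp [mul_apply]

lemma continuous_lMat : Continuous lMat :=
  continuous_iff_continuousAt.2 fun z => tendsto_nhds_iff.2 fun i j => by
    fin_cases i <;> fin_cases j
    exacts [tendsto_const_nhds, tendsto_const_nhds, tendsto_id, tendsto_const_nhds]

lemma eq_uMat_mul_lMat_mul_uMat {g : SL2C} (hg : g 1 0 ≠ 0) :
    g = uMat ((g 0 0 - 1) / g 1 0) * lMat (g 1 0) * uMat ((g 1 1 - 1) / g 1 0) := by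
  have det := det_eq_one g
  apply ext_entries <;> simp [mul_apply] <;> field_simp <;> grind

lemma eq_univ_of_mul_uMat_mem_of_mul_lMat_mem {C : Set SL2C} (hne : C.Nonempty)
    (hu : ∀ z, ∀ x ∈ C, x * uMat z ∈ C) (hl : ∀ z, ∀ x ∈ C, x * lMat z ∈ C) : C = univ := by
  have mul_mem_of_ne_zero {g x : SL2C} (hg : g 1 0 ≠ 0) (hx : x ∈ C) : x * g ∈ C := by
    rw [eq_uMat_mul_lMat_mul_uMat hg, ← mul_assoc, ← mul_assoc]
    exact hu _ _ (hl _ _ (hu _ _ hx))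
  have mul_mem {g x : SL2C} (hx : x ∈ C) : x * g ∈ C := by
    by_cases hg : g 1 0 = 0
    · have hg' : (g * lMat 1) 1 0 ≠ 0 := fun h => by
        have hg₁₁ : g 1 1 = 0 := by simpa [mul_apply, hg] using h
        simpa [hg, hg₁₁] using det_eq_one g
      simpa [mul_assoc, lMat_mul_lMat_neg] using hl (-1) _ (mul_mem_of_ne_zero hg' hx)
    · exact mul_mem_of_ne_zero hg hx
  obtain ⟨x, hx⟩ := hne
  exact eq_univ_of_forall fun g => by simpa using mul_mem (g := x⁻¹ * g) hx

variable (t : ℝ) (g : SL2C)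

@[simp] lemma conj_aMat_zero_zero : ((aMat t)⁻¹ * g * aMat t) 0 0 = g 0 0 := by
  have exp_neg_mul_exp : (Real.exp (-t) : ℂ) * Real.exp t = 1 := by simp [← Complex.exp_add]
  simp only [mul_apply, aMat_inv, aMat_zero_zero, aMat_zero_one, aMat_one_zero]
  linear_combination g 0 0 * exp_neg_mul_exp

@[simp] lemma conj_aMat_one_one : ((aMat t)⁻¹ * g * aMat t) 1 1 = g 1 1 := by
  have exp_mul_exp_neg : (Real.exp (-(-t)) : ℂ) * Real.exp (-t) = 1 := by
    simp [← Complex.exp_add]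
  simp only [mul_apply, aMat_inv, aMat_zero_one, aMat_one_zero, aMat_one_one]
  linear_combination g 1 1 * exp_mul_exp_neg

@[simp] lemma conj_aMat_zero_one :
    ((aMat t)⁻¹ * g * aMat t) 0 1 = (Real.exp (-2 * t) : ℂ) * g 0 1 := by
  have exp_sq : Real.exp (-2 * t) = Real.exp (-t) * Real.exp (-t) := by
    rw [← Real.exp_add]; ring_nf
  simp only [mul_apply, aMat_inv, aMat_zero_zero, aMat_zero_one, aMat_one_one, exp_sq,
    Complex.ofReal_mul]
  ring

@[simp] lemma conj_aMat_one_zero :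
    ((aMat t)⁻¹ * g * aMat t) 1 0 = (Real.exp (2 * t) : ℂ) * g 1 0 := by
  have exp_sq : Real.exp (2 * t) = Real.exp t * Real.exp t := by
    rw [← Real.exp_add]; ring_nf
  simp only [mul_apply, aMat_inv, aMat_zero_zero, aMat_one_zero, aMat_one_one, exp_sq,
    Complex.ofReal_mul, neg_neg]
  ring

lemma conj_aMat_uMat (z : ℂ) :
    (aMat t)⁻¹ * uMat z * aMat t = uMat ((Real.exp (-2 * t) : ℂ) * z) := by
  apply ext_entries <;> simp

lemma conj_aMat_lMat (z : ℂ) :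
    (aMat t)⁻¹ * lMat z * aMat t = lMat ((Real.exp (2 * t) : ℂ) * z) := by
  apply ext_entries <;> simp

lemma norm_conj_aMat_sub_one_le {t : ℝ} {g : SL2C} (ht : t ≤ 0) (hg : g 0 1 = 0) :
    ‖((((aMat t)⁻¹ * g * aMat t : SL2C)) : Matrix (Fin 2) (Fin 2) ℂ) - 1‖
      ≤ ‖(g : Matrix (Fin 2) (Fin 2) ℂ) - 1‖ := by
  have norm_exp_mul_le : ‖(Real.exp (2 * t) : ℂ) * g 1 0‖ ≤ ‖g 1 0‖ := by
    rw [norm_mul, Complex.norm_real, Real.norm_of_nonneg (Real.exp_pos _).le]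
    exact mul_le_of_le_one_left (norm_nonneg _) (Real.exp_le_one_iff.2 (by linarith))
  refine le_of_sq_le_sq ?_ (norm_nonneg _)
  simp only [frobenius_norm_sq, Fin.sum_univ_two, Matrix.sub_apply, conj_aMat_zero_zero,
    conj_aMat_zero_one, conj_aMat_one_zero, conj_aMat_one_one, hg, mul_zero]
  gcongr ?_ + (?_ ^ 2 + _)
  · rfl
  · simpa using norm_exp_mul_le

lemma tendsto_exp_neg_two_mul_nat (z : ℂ) :
    Tendsto (fun k : ℕ => (Real.exp (-2 * k) : ℂ) * z) atTop (𝓝 0) := by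
  have exp_tendsto : Tendsto (fun k : ℕ => Real.exp (-2 * k)) atTop (𝓝 0) :=
    Real.tendsto_exp_atBot.comp
      (tendsto_natCast_atTop_atTop.const_mul_atTop_of_neg (by norm_num))
  simpa using ((Complex.continuous_ofReal.tendsto 0).comp exp_tendsto).mul_const z

lemma tendsto_aMat_pow_mul_uMat_mul_inv (z : ℂ) :
    Tendsto (fun k : ℕ => aMat (-1) ^ k * uMat z * (aMat (-1) ^ k)⁻¹) atTop (𝓝 1) := by
  have conj_eq (k : ℕ) : aMat (-1) ^ k * uMat z * (aMat (-1) ^ k)⁻¹ =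
      uMat ((Real.exp (-2 * k) : ℂ) * z) := by
    rw [← conj_aMat_uMat, aMat_pow, aMat_inv, aMat_inv, mul_neg_one, neg_neg]
  simpa [Function.comp_def, conj_eq, uMat_zero] using
    (continuous_uMat.tendsto 0).comp (tendsto_exp_neg_two_mul_nat z)

lemma tendsto_aMat_pow_inv_mul_lMat_mul (z : ℂ) :
    Tendsto (fun k : ℕ => (aMat (-1) ^ k)⁻¹ * lMat z * aMat (-1) ^ k) atTop (𝓝 1) := by
  have conj_eq (k : ℕ) : (aMat (-1) ^ k)⁻¹ * lMat z * aMat (-1) ^ k =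
      lMat ((Real.exp (-2 * k) : ℂ) * z) := by
    rw [aMat_pow, conj_aMat_lMat]
    ring_nf
  simpa [Function.comp_def, conj_eq, lMat_zero] using
    (continuous_lMat.tendsto 0).comp (tendsto_exp_neg_two_mul_nat z)

end LowerTriangular

section Transitivity

variable {L : Subgroup SL2C} {D : Set SL2C} {a g : SL2C}

lemma exists_nhds_forall_mul_mem (hD : IsOpen D) {x : SL2C} (hx : x ∈ D) {f : ℕ → SL2C}
    (hf : Tendsto f atTop (𝓝 1)) : ∃ V ∈ 𝓝 x, ∃ N, ∀ k ≥ N, ∀ v ∈ V, v * f k ∈ D := by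
  have mul_tendsto : Tendsto (fun p : SL2C × ℕ => p.1 * f p.2) (𝓝 x ×ˢ atTop) (𝓝 x) := by
    simpa using tendsto_fst.mul (hf.comp tendsto_snd)
  obtain ⟨V, hV, T, hT, hVT⟩ := mem_prod_iff.1 (mul_tendsto (hD.mem_nhds hx))
  obtain ⟨N, hN⟩ := mem_atTop_sets.1 hT
  exact ⟨V, hV, N, fun k hk v hv => hVT (mk_mem_prod hv (hN k hk))⟩

lemma mul_mem_closure_of_returns (hL : LatticeProperties L)
    (h : ∀ x₀ ∈ D, ∃ V ∈ 𝓝 x₀, ∃ N, ∀ k ≥ N, ∀ x ∈ V, ∀ γ ∈ L, γ * x * a ^ k ∈ V →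
      x * g ∈ closure D ∨ γ * x * a ^ k * g ∈ closure D) :
    ∀ x ∈ closure D, x * g ∈ closure D := by
  suffices ∀ x ∈ D, x * g ∈ closure D from fun x hx =>
    closure_minimal (t := (· * g) ⁻¹' closure D) this
      (isClosed_closure.preimage (continuous_id.mul continuous_const)) hx
  by_contra! hx₀
  obtain ⟨x₀, hx₀, hx₀g⟩ := hx₀
  obtain ⟨V, hV, N, hN⟩ := h x₀ hx₀
  have hW : IsOpen (interior V ∩ (· * g) ⁻¹' (closure D)ᶜ) :=
    isOpen_interior.inter
      (isClosed_closure.isOpen_compl.preimage (continuous_id.mul continuous_const))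
  obtain ⟨k, hk, x, hx, γ, hγ, hγx⟩ :=
    hL.recurrent a _ hW ⟨x₀, mem_interior_iff_mem_nhds.2 hV, hx₀g⟩ N
  exact (hN k hk x (interior_subset hx.1) γ hγ (interior_subset hγx.1)).elim hx.2 hγx.2

lemma mul_pow_mem (hDa : ∀ x ∈ D, x * a ∈ D) (k : ℕ) : ∀ x ∈ D, x * a ^ k ∈ D := by
  induction k with
  | zero => simp
  | succ k ih => exact fun x hx => by simpa [pow_succ, ← mul_assoc] using hDa _ (ih x hx)

lemma mul_inv_pow_mem_closure (hL : LatticeProperties L) (hD : IsOpen D)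
    (hDL : ∀ γ ∈ L, ∀ x ∈ D, γ * x ∈ D) (hDa : ∀ x ∈ D, x * a ∈ D) (k : ℕ) :
    ∀ x ∈ closure D, x * (a ^ k)⁻¹ ∈ closure D := by
  have mul_inv_mem : ∀ x ∈ closure D, x * a⁻¹ ∈ closure D := by
    refine mul_mem_closure_of_returns hL (a := a) fun x₀ hx₀ =>
      ⟨D, hD.mem_nhds hx₀, 1, fun k hk x hx γ hγ _ => .inr (subset_closure ?_)⟩
    obtain ⟨j, rfl⟩ := Nat.exists_eq_add_of_le' hk
    simpa [pow_succ, mul_assoc] using hDL γ hγ _ (mul_pow_mem hDa j x hx)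
  rw [← inv_pow]
  exact mul_pow_mem mul_inv_mem k

lemma mul_mem_closure_of_contracted (hL : LatticeProperties L) (hD : IsOpen D)
    (hDL : ∀ γ ∈ L, ∀ x ∈ D, γ * x ∈ D) (hDa : ∀ x ∈ D, x * a ∈ D)
    (hg : Tendsto (fun k : ℕ => a ^ k * g * (a ^ k)⁻¹) atTop (𝓝 1)) :
    ∀ x ∈ closure D, x * g ∈ closure D := by
  refine mul_mem_closure_of_returns hL (a := a) fun x₀ hx₀ => ?_
  obtain ⟨V, hV, N, hVD⟩ := exists_nhds_forall_mul_mem hD hx₀ hg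
  refine ⟨V, hV, N, fun k hk x hx γ hγ _ => .inr (subset_closure ?_)⟩
  convert hDL γ hγ _ (mul_pow_mem hDa k _ (hVD k hk x hx)) using 1
  group

lemma mul_mem_closure_of_expanded (hL : LatticeProperties L) (hD : IsOpen D)
    (hDL : ∀ γ ∈ L, ∀ x ∈ D, γ * x ∈ D) (hDa : ∀ x ∈ D, x * a ∈ D)
    (hg : Tendsto (fun k : ℕ => (a ^ k)⁻¹ * g * a ^ k) atTop (𝓝 1)) :
    ∀ x ∈ closure D, x * g ∈ closure D := by
  refine mul_mem_closure_of_returns hL (a := a) fun x₀ hx₀ => ?_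
  obtain ⟨V, hV, N, hVD⟩ := exists_nhds_forall_mul_mem hD hx₀ hg
  refine ⟨V, hV, N, fun k hk x _ γ hγ hγx => .inl ?_⟩
  have returned_mem : γ * x * g ∈ closure D := by
    convert mul_inv_pow_mem_closure hL hD hDL hDa k _ (subset_closure (hVD k hk _ hγx)) using 1
    group
  have inv_mul_mem : ∀ y ∈ closure D, γ⁻¹ * y ∈ closure D := fun y hy =>
    map_mem_closure (continuous_const.mul continuous_id) hy (hDL _ (L.inv_mem hγ))
  simpa [mul_assoc] using inv_mul_mem _ returned_mem

/-- Mautner phenomenon: the closure of the union of the forward translates of an open set is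
invariant under both the contracted and the expanded unipotent group, which generate. -/
theorem exists_mul_mul_aMat_pow_mem (hL : LatticeProperties L) {W O : Set SL2C} (hW : IsOpen W)
    (hWne : W.Nonempty) (hO : IsOpen O) (hOne : O.Nonempty) :
    ∃ k : ℕ, ∃ x ∈ W, ∃ γ ∈ L, γ * x * aMat (-1) ^ k ∈ O := by
  set a := aMat (-1)
  set D : Set SL2C := ⋃ k : ℕ, ⋃ γ ∈ L, (fun g => γ⁻¹ * g * (a ^ k)⁻¹) ⁻¹' W with D_def
  have mem_D {g : SL2C} : g ∈ D ↔ ∃ k : ℕ, ∃ γ ∈ L, γ⁻¹ * g * (a ^ k)⁻¹ ∈ W := by simp [D_def]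
  have hD : IsOpen D := isOpen_iUnion fun k => isOpen_biUnion fun γ _ => hW.preimage
    ((continuous_const.mul continuous_id).mul continuous_const)
  have hDL : ∀ γ ∈ L, ∀ x ∈ D, γ * x ∈ D := fun γ hγ x hx => by
    obtain ⟨k, δ, hδ, hx⟩ := mem_D.1 hx
    exact mem_D.2 ⟨k, γ * δ, L.mul_mem hγ hδ, by simpa [mul_assoc] using hx⟩
  have hDa : ∀ x ∈ D, x * a ∈ D := fun x hx => by
    obtain ⟨k, δ, hδ, hx⟩ := mem_D.1 hx
    exact mem_D.2 ⟨k + 1, δ, hδ, by simpa [pow_succ, mul_assoc] using hx⟩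
  have hDne : D.Nonempty := hWne.mono fun x hx => mem_D.2 ⟨0, 1, L.one_mem, by simpa using hx⟩
  have hdense : Dense D := dense_iff_closure_eq.2 <|
    eq_univ_of_mul_uMat_mem_of_mul_lMat_mem hDne.closure
      (fun z => mul_mem_closure_of_contracted hL hD hDL hDa (tendsto_aMat_pow_mul_uMat_mul_inv z))
      (fun z => mul_mem_closure_of_expanded hL hD hDL hDa (tendsto_aMat_pow_inv_mul_lMat_mul z))
  obtain ⟨g, hgO, hgD⟩ := hdense.inter_open_nonempty O hO hOne
  obtain ⟨k, γ, hγ, hx⟩ := mem_D.1 hgD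
  exact ⟨k, _, hx, γ, hγ, by simpa [mul_assoc] using hgO⟩

end Transitivity

section RealMatrices

/-- `SL(2,ℝ)` as a subgroup of `SL(2,ℂ)`. -/
def realSL2 : Subgroup SL2C := (SpecialLinearGroup.map (algebraMap ℝ ℂ)).range

lemma mem_realSL2_iff {g : SL2C} : g ∈ realSL2 ↔ ∀ i j, (g i j).im = 0 := by
  constructor
  · rintro ⟨h, rfl⟩ i j
    exact Complex.ofReal_im _
  · intro hg
    have coe_re (i j : Fin 2) : ((g i j).re : ℂ) = g i j := Complex.ext rfl (by simp [hg i j])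
    refine ⟨⟨Matrix.of fun i j => (g i j).re, Complex.ofReal_injective ?_⟩, ?_⟩
    · rw [Matrix.det_fin_two, Matrix.of_apply]
      push_cast [Matrix.of_apply, coe_re]
      exact det_eq_one g
    · exact Subtype.ext (Matrix.ext coe_re)

lemma mem_realSL2_of_im_eq_zero {g : SL2C} (h₀₀ : (g 0 0).im = 0) (h₀₁ : (g 0 1).im = 0)
    (h₁₀ : (g 1 0).im = 0) (h₁₁ : (g 1 1).im = 0) : g ∈ realSL2 :=
  mem_realSL2_iff.2 fun i j => by fin_cases i <;> fin_cases j <;> assumption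

lemma isClosed_realSL2 : IsClosed (realSL2 : Set SL2C) := by
  have coe_eq : (realSL2 : Set SL2C) = ⋂ i, ⋂ j, {g | (g i j).im = 0} := by
    ext g
    simp [mem_realSL2_iff]
  rw [coe_eq]
  exact isClosed_iInter fun i => isClosed_iInter fun j => isClosed_eq (by fun_prop) (by fun_prop)

lemma aMat_mem_realSL2 (t : ℝ) : aMat t ∈ realSL2 := by
  apply mem_realSL2_of_im_eq_zero <;> simp [-Complex.ofReal_exp]

lemma uMat_mem_realSL2 (t : ℝ) : uMat t ∈ realSL2 := by
  apply mem_realSL2_of_im_eq_zero <;> simp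

end RealMatrices

section Density

variable {L : Subgroup SL2C} {S F : Set SL2C}

lemma eventually_eq_uMat_mul_lower {z₀ : ℂ} {Ω : Set ℂ} (hΩ : Ω ∈ 𝓝 z₀) {B : Set SL2C}
    (hB : B ∈ 𝓝 1) : ∀ᶠ g in 𝓝 (uMat z₀), ∃ z ∈ Ω, ∃ b ∈ B, b 0 1 = 0 ∧ g = uMat z * b := by
  have entry_continuous (i j : Fin 2) : Continuous fun g : SL2C => g i j := by fun_prop
  have ne_zero : ∀ᶠ g : SL2C in 𝓝 (uMat z₀), g 1 1 ≠ 0 :=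
    (entry_continuous 1 1).continuousAt.eventually_ne (by simp)
  have quotient_tendsto : Tendsto (fun g : SL2C => g 0 1 / g 1 1) (𝓝 (uMat z₀)) (𝓝 z₀) := by
    simpa [Pi.div_def] using ((entry_continuous 0 1).tendsto (uMat z₀)).div
      ((entry_continuous 1 1).tendsto (uMat z₀)) (by simp)
  have lower_tendsto :
      Tendsto (fun g : SL2C => (uMat (g 0 1 / g 1 1))⁻¹ * g) (𝓝 (uMat z₀)) (𝓝 1) := by
    simpa using ((continuous_uMat.tendsto z₀).comp quotient_tendsto).inv.mul tendsto_id
  filter_upwards [ne_zero, quotient_tendsto hΩ, lower_tendsto hB] with g hg hz hb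
  refine ⟨_, hz, _, hb, ?_, by simp⟩
  change ((uMat (g 0 1 / g 1 1))⁻¹ * g) 0 1 = 0
  simp [mul_apply, hg]

lemma eventually_forall_conj_aMat_pow_mem {B : Set SL2C} (hB : B ∈ 𝓝 1) :
    ∀ᶠ b in 𝓝 (1 : SL2C), b 0 1 = 0 → ∀ k : ℕ, (aMat (-1) ^ k)⁻¹ * b * aMat (-1) ^ k ∈ B := by
  have basis := isClosedEmbedding_coe.isInducing.basis_nhds (x := (1 : SL2C)) Metric.nhds_basis_ball
  obtain ⟨δ, hδ, hδB⟩ := basis.mem_iff.1 hB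
  filter_upwards [basis.mem_of_mem hδ] with b hb hb₀₁ k
  refine hδB (mem_ball_iff_norm.2 ?_)
  rw [aMat_pow]
  exact (norm_conj_aMat_sub_one_le (by simp) hb₀₁).trans_lt (mem_ball_iff_norm.1 hb)

/-- Conjugating by `aMat (-1) ^ k` does not expand the lower triangular group, so a translate of
`{y * uMat z | z ∈ Ω}` follows the dense forward trajectories of its neighbourhood. -/
theorem IsClosedInvariant.eq_univ_of_mul_uMat_mem (hL : LatticeProperties L)
    (hF : IsClosedInvariant L S F) (ha : aMat (-1) ∈ S) {y : SL2C} {Ω : Set ℂ} (hΩ : IsOpen Ω)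
    (hne : Ω.Nonempty) (h : ∀ z ∈ Ω, y * uMat z ∈ F) : F = univ := by
  by_contra hFne
  obtain ⟨g₀, hg₀⟩ := (ne_univ_iff_exists_notMem F).1 hFne
  obtain ⟨z₀, hz₀⟩ := hne
  have mul_inv_tendsto :
      Tendsto (fun p : SL2C × SL2C => p.1 * p.2⁻¹) (𝓝 g₀ ×ˢ 𝓝 1) (𝓝 g₀) := by
    simpa using (tendsto_fst (f := 𝓝 g₀) (g := 𝓝 (1 : SL2C))).mul tendsto_snd.inv
  obtain ⟨V, hV, B, hB, hVB⟩ :=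
    mem_prod_iff.1 (mul_inv_tendsto (hF.isClosed.isOpen_compl.mem_nhds hg₀))
  have near : ∀ᶠ x in 𝓝 (y * uMat z₀), ∃ z ∈ Ω, ∃ b : SL2C, x = y * uMat z * b ∧
      ∀ k : ℕ, (aMat (-1) ^ k)⁻¹ * b * aMat (-1) ^ k ∈ B := by
    have inv_mul_tendsto : Tendsto (y⁻¹ * ·) (𝓝 (y * uMat z₀)) (𝓝 (uMat z₀)) := by
      simpa using (continuous_const.mul continuous_id).tendsto (y * uMat z₀) (f := (y⁻¹ * ·))
    filter_upwards [inv_mul_tendsto.eventually (eventually_eq_uMat_mul_lower (hΩ.mem_nhds hz₀)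
      (eventually_forall_conj_aMat_pow_mem hB))] with x ⟨z, hz, b, hb, hb₀₁, hx⟩
    exact ⟨z, hz, b, by rw [mul_assoc, ← hx, mul_inv_cancel_left], hb hb₀₁⟩
  obtain ⟨W, hW, hWo, hzW⟩ := mem_nhds_iff.1 near
  obtain ⟨k, x, hx, γ, hγ, hxV⟩ := exists_mul_mul_aMat_pow_mem hL hWo ⟨_, hzW⟩ isOpen_interior
    ⟨g₀, mem_interior_iff_mem_nhds.2 hV⟩
  obtain ⟨z, hz, b, rfl, hb⟩ := hW hx
  refine hVB (mk_mem_prod (interior_subset hxV) (hb k)) ?_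
  have translate_mem : γ * (y * uMat z) * aMat (-1) ^ k ∈ F :=
    mul_pow_mem (hF.mul_right_mem _ ha) k _ (hF.left_mul_mem γ hγ _ (h z hz))
  convert translate_mem using 1
  group

end Density

section Twist

/-- Entrywise complex conjugation. -/
def complexConj : SL2C →* SL2C := SpecialLinearGroup.map (starRingEnd ℂ)

@[simp] lemma complexConj_apply (g : SL2C) (i j : Fin 2) :
    complexConj g i j = starRingEnd ℂ (g i j) := rfl

lemma continuous_complexConj : Continuous complexConj :=
  continuous_iff_continuousAt.2 fun g => tendsto_nhds_iff.2 fun i j =>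
    (Complex.continuous_conj.comp (by fun_prop : Continuous fun g : SL2C => g i j)).tendsto g

@[simp] lemma complexConj_complexConj (g : SL2C) : complexConj (complexConj g) = g := by
  apply ext_entries <;> simp

lemma complexConj_eq_self_iff {g : SL2C} : complexConj g = g ↔ g ∈ realSL2 := by
  simp only [mem_realSL2_iff, ← Complex.conj_eq_iff_im, ← complexConj_apply]
  exact ⟨fun h i j => by rw [h], fun h => Subtype.ext (Matrix.ext h)⟩

/-- The map `g ↦ g * ḡ⁻¹`, which identifies `SL(2,ℂ) / SL(2,ℝ)` with its image in `SL(2,ℂ)`. -/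
def twist (g : SL2C) : SL2C := g * (complexConj g)⁻¹

variable (g h : SL2C)

lemma continuous_twist : Continuous twist := continuous_id.mul continuous_complexConj.inv

lemma complexConj_twist : complexConj (twist g) = (twist g)⁻¹ := by
  rw [twist, map_mul, map_inv, complexConj_complexConj, _root_.mul_inv_rev, inv_inv]

lemma twist_mul : twist (g * h) = g * twist h * (complexConj g)⁻¹ := by
  rw [twist, twist, map_mul]
  group

variable {g h}

lemma twist_eq_one_iff : twist g = 1 ↔ g ∈ realSL2 := by
  rw [← complexConj_eq_self_iff, twist, mul_inv_eq_one, eq_comm]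

lemma twist_eq_twist_iff : twist g = twist h ↔ g⁻¹ * h ∈ realSL2 := by
  rw [← twist_eq_one_iff, twist_mul, map_inv, inv_inv, mul_assoc, inv_mul_eq_one, twist,
    mul_inv_eq_iff_eq_mul]

lemma eq_im_mul_I_of_conj_eq_neg {z : ℂ} (hz : starRingEnd ℂ z = -z) : z = z.im * Complex.I := by
  have := congrArg Complex.re hz
  rw [Complex.conj_re, Complex.neg_re] at this
  apply Complex.ext
  · simp
    linarith
  · simp

lemma conj_apply_of_complexConj_eq_inv (hg : complexConj g = g⁻¹) (i j : Fin 2) :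
    starRingEnd ℂ (g i j) = g⁻¹ i j := by
  rw [← complexConj_apply, hg]

/-- By Cayley–Hamilton `(1 + S) ^ 2 = (tr S + 2) • S`, so that a multiple of `1 + S` is a square
root of `S`. -/
lemma exists_twist_eq {S : SL2C} (hS : complexConj S = S⁻¹) (hpos : -1 < (S 0 0).re) :
    ∃ g : SL2C, (g : Matrix (Fin 2) (Fin 2) ℂ) = ((√(2 * (S 0 0).re + 2) : ℝ) : ℂ)⁻¹ • (1 + S.1) ∧
      twist g = S := by
  set d : ℝ := 2 * (S 0 0).re + 2 with hd
  set r : ℂ := ((√d : ℝ) : ℂ)⁻¹ with hr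
  have trace_eq : S 0 0 + S 1 1 + 2 = d := by
    rw [← inv_apply_zero_zero S, ← conj_apply_of_complexConj_eq_inv hS, Complex.add_conj, hd]
    push_cast
    rfl
  have r_sq_mul : r ^ 2 * d = 1 := by
    rw [hr, inv_pow, ← Complex.ofReal_pow, Real.sq_sqrt (by linarith)]
    exact inv_mul_cancel₀ (Complex.ofReal_ne_zero.2 (by linarith))
  have conj_r : starRingEnd ℂ r = r := by rw [hr, map_inv₀, Complex.conj_ofReal]
  have det := det_eq_one S
  obtain ⟨g, hg⟩ : ∃ g : SL2C, (g : Matrix (Fin 2) (Fin 2) ℂ) = r • (1 + S.1) := by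
    refine ⟨⟨r • (1 + S.1), ?_⟩, rfl⟩
    rw [Matrix.det_fin_two]
    simp
    linear_combination r_sq_mul + r ^ 2 * det + r ^ 2 * trace_eq
  have entry (i j) : g i j = r * ((1 : Matrix (Fin 2) (Fin 2) ℂ) i j + S i j) :=
    congrFun₂ hg i j
  refine ⟨g, hg, mul_inv_eq_iff_eq_mul.2 ?_⟩
  apply ext_entries <;>
    simp [mul_apply, entry, conj_apply_of_complexConj_eq_inv hS, conj_r]
  · linear_combination -r * det
  · ring
  · ring
  · linear_combination -r * det

lemma eventually_exists_mem_twist_eq {U : Set SL2C} (hU : U ∈ 𝓝 1) :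
    ∀ᶠ S in 𝓝 (1 : SL2C), complexConj S = S⁻¹ → ∃ g ∈ U, twist g = S := by
  obtain ⟨V, hV, hVU⟩ := mem_comap.1
    ((isClosedEmbedding_coe.isInducing.nhds_eq_comap (1 : SL2C)).ge hU)
  have root_tendsto : Tendsto
      (fun S : SL2C => ((√(2 * (S 0 0).re + 2) : ℝ) : ℂ)⁻¹ • (1 + S.1)) (𝓝 1) (𝓝 1) := by
    have sqrt_eq : √(2 + 2) = 2 := by
      rw [show (2 : ℝ) + 2 = 2 ^ 2 by norm_num, Real.sqrt_sq zero_le_two]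
    have half_add : ((√(2 * ((1 : SL2C) 0 0).re + 2) : ℝ) : ℂ)⁻¹ • (1 + (1 : SL2C).1) = 1 := by
      simp [sqrt_eq, ← two_smul ℂ (1 : Matrix (Fin 2) (Fin 2) ℂ), smul_smul]
    nth_rw 2 [← half_add]
    refine Tendsto.smul (Tendsto.inv₀ ?_ ?_) ?_
    · exact Continuous.tendsto (by fun_prop) 1
    · simp [sqrt_eq]
    · exact Continuous.tendsto (by fun_prop) 1
  have re_pos : ∀ᶠ S : SL2C in 𝓝 1, -1 < (S 0 0).re :=
    (Continuous.tendsto (by fun_prop : Continuous fun S : SL2C => (S 0 0).re) 1).eventually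
      (lt_mem_nhds (by simp))
  filter_upwards [root_tendsto hV, re_pos] with S hSV hre hS
  obtain ⟨g, hg, hgS⟩ := exists_twist_eq hS hre
  exact ⟨g, hVU (show (g : Matrix (Fin 2) (Fin 2) ℂ) ∈ V from hg ▸ hSV), hgS⟩

lemma mem_of_tendsto_of_tendsto_twist {F : Set SL2C} (hF : IsClosed F)
    (hFH : ∀ h ∈ realSL2, ∀ x ∈ F, x * h ∈ F) {ι : Type*} {l : Filter ι} [l.NeBot]
    {x f : ι → SL2C} {z : SL2C} (hx : Tendsto x l (𝓝 z))
    (hf : Tendsto (fun n => twist (f n)) l (𝓝 1)) (hxf : ∀ n, x n * f n ∈ F) : z ∈ F := by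
  by_contra hz
  have mul_tendsto : Tendsto (fun p : SL2C × SL2C => p.1 * p.2) (𝓝 z ×ˢ 𝓝 1) (𝓝 z) := by
    simpa using (tendsto_fst (f := 𝓝 z) (g := 𝓝 (1 : SL2C))).mul tendsto_snd
  obtain ⟨V, hV, U, hU, hVU⟩ := mem_prod_iff.1 (mul_tendsto (hF.isOpen_compl.mem_nhds hz))
  obtain ⟨n, hxV, hn⟩ :=
    ((hx.eventually hV).and (hf.eventually (eventually_exists_mem_twist_eq hU))).exists
  obtain ⟨g, hgU, hg⟩ := hn (complexConj_twist _)
  refine hVU (mk_mem_prod hxV hgU) ?_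
  have := hFH _ (twist_eq_twist_iff.1 hg.symm) _ (hxf n)
  rwa [mul_assoc, mul_inv_cancel_left] at this

end Twist

section ImaginaryUnipotents

/-- The one-parameter group of real upper triangular unipotents. -/
def realUnipotents : Subgroup SL2C where
  carrier := range fun t : ℝ => uMat t
  one_mem' := ⟨0, by simp [uMat_zero]⟩
  mul_mem' := by
    rintro _ _ ⟨s, rfl⟩ ⟨t, rfl⟩
    exact ⟨s + t, by simp [uMat_add]⟩
  inv_mem' := by
    rintro _ ⟨t, rfl⟩
    exact ⟨-t, by simp [uMat_inv]⟩

lemma uMat_mem_realUnipotents (t : ℝ) : uMat t ∈ realUnipotents := mem_range_self t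

lemma realUnipotents_le_realSL2 : realUnipotents ≤ realSL2 := by
  rintro _ ⟨t, rfl⟩
  exact uMat_mem_realSL2 t

/-- The purely imaginary unipotents, which commute with the real ones and are transverse to
`SL(2,ℝ)`. -/
def vMat (s : ℝ) : SL2C := uMat (s * Complex.I)

lemma vMat_add (s t : ℝ) : vMat (s + t) = vMat s * vMat t := by
  rw [vMat, Complex.ofReal_add, add_mul, uMat_add, vMat, vMat]

lemma vMat_zero : vMat 0 = 1 := by
  rw [vMat, Complex.ofReal_zero, zero_mul, uMat_zero]

lemma vMat_inv (s : ℝ) : (vMat s)⁻¹ = vMat (-s) :=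
  inv_eq_of_mul_eq_one_right (by rw [← vMat_add, add_neg_cancel, vMat_zero])

lemma continuous_vMat : Continuous vMat := continuous_uMat.comp (by fun_prop)

lemma vMat_mul_uMat (s : ℝ) (z : ℂ) : vMat s * uMat z = uMat z * vMat s := by
  rw [vMat, ← uMat_add, add_comm, uMat_add]

lemma complexConj_vMat (s : ℝ) : complexConj (vMat s) = vMat (-s) := by
  apply ext_entries <;> simp [vMat]

lemma complexConj_uMat_ofReal (t : ℝ) : complexConj (uMat t) = uMat t :=
  complexConj_eq_self_iff.2 (uMat_mem_realSL2 t)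

lemma twist_vMat_mul (s : ℝ) {h : SL2C} (hh : h ∈ realSL2) :
    twist (vMat s * h) = vMat (2 * s) := by
  rw [twist_mul, twist_eq_one_iff.2 hh, mul_one, complexConj_vMat, vMat_inv, neg_neg,
    ← vMat_add, two_mul]

/-- The set `V H`, where `V` consists of the purely imaginary unipotents and `H = SL(2,ℝ)`. -/
def imagUnipotentMulReal : Set SL2C := range vMat * (realSL2 : Set SL2C)

lemma mem_imagUnipotentMulReal_of_twist_eq {g : SL2C} {s : ℝ} (hg : twist g = vMat (2 * s)) :
    g ∈ imagUnipotentMulReal := by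
  refine ⟨vMat s, mem_range_self s, (vMat s)⁻¹ * g, twist_eq_twist_iff.1 ?_,
    mul_inv_cancel_left _ _⟩
  rw [hg, ← mul_one (vMat s), twist_vMat_mul s realSL2.one_mem]

lemma mem_imagUnipotentMulReal_of_im_eq_zero {g : SL2C} (h₀₀ : (twist g 0 0).im = 0)
    (h₁₀ : (twist g 1 0).im = 0) (hne : twist g 0 0 ≠ -1) : g ∈ imagUnipotentMulReal := by
  have conj_twist := conj_apply_of_complexConj_eq_inv (complexConj_twist g)
  have one_zero_eq_zero : twist g 1 0 = 0 := by
    rw [eq_im_mul_I_of_conj_eq_neg ((conj_twist 1 0).trans (inv_apply_one_zero _)), h₁₀,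
      Complex.ofReal_zero, zero_mul]
  have one_one_eq : twist g 1 1 = twist g 0 0 := by
    rw [← inv_apply_zero_zero, ← conj_twist, Complex.conj_eq_iff_im.2 h₀₀]
  have zero_zero_eq_one : twist g 0 0 = 1 := by
    have det := det_eq_one (twist g)
    rw [one_zero_eq_zero, one_one_eq] at det
    exact mul_left_cancel₀ (sub_ne_zero.2 hne) (by linear_combination det)
  have zero_one_eq : twist g 0 1 = (2 * ((twist g 0 1).im / 2) : ℝ) * Complex.I := by
    rw [mul_div_cancel₀ _ two_ne_zero]
    exact eq_im_mul_I_of_conj_eq_neg ((conj_twist 0 1).trans (inv_apply_zero_one _))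
  refine mem_imagUnipotentMulReal_of_twist_eq (s := (twist g 0 1).im / 2) ?_
  apply ext_entries <;>
    simp only [vMat, uMat_zero_zero, uMat_zero_one, uMat_one_zero, uMat_one_one]
  exacts [zero_zero_eq_one, zero_one_eq, one_zero_eq_zero, one_one_eq.trans zero_zero_eq_one]

end ImaginaryUnipotents

section Pushing

variable {L : Subgroup SL2C} {F Y K : Set SL2C}

lemma IsClosedInvariant.mono {S T C : Set SL2C} (hC : IsClosedInvariant L T C) (hST : S ⊆ T) :
    IsClosedInvariant L S C where
  isClosed := hC.isClosed
  left_mul_mem := hC.left_mul_mem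
  mul_right_mem s hs := hC.mul_right_mem s (hST hs)

lemma IsClosedInvariant.preimage_mul_vMat {C : Set SL2C}
    (hC : IsClosedInvariant L realUnipotents C) (r : ℝ) :
    IsClosedInvariant L realUnipotents {x | x * vMat r ∈ C} where
  isClosed := hC.isClosed.preimage (continuous_id.mul continuous_const)
  left_mul_mem γ hγ x hx := by
    simpa only [mem_ofPred_eq, mul_assoc] using hC.left_mul_mem γ hγ _ hx
  mul_right_mem := by
    rintro _ ⟨t, rfl⟩ x hx
    have := hC.mul_right_mem _ (uMat_mem_realUnipotents t) _ hx
    rwa [mul_assoc, vMat_mul_uMat, ← mul_assoc] at this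

/-- Shear the returns: writing `y * g n = (y * u) * (u⁻¹ * g n)` with `u = uMat (t n)`, the first
factor subconverges in `Y` modulo `L` and the second one tends to `vMat r` modulo `SL(2,ℝ)`. -/
lemma mul_vMat_mem_of_tendsto_conj_twist (hF : IsClosedInvariant L realSL2 F)
    (hY : IsMinimalInvariant L realUnipotents Y) (hK : IsCompact K)
    (hYK : Y ⊆ (L : Set SL2C) * K) {y : SL2C} (hy : y ∈ Y) {g : ℕ → SL2C}
    (hg : ∀ n, y * g n ∈ F) {t : ℕ → ℝ} {r : ℝ}
    (ht : Tendsto (fun n => uMat (-t n) * twist (g n) * uMat (t n)) atTop (𝓝 (vMat (2 * r)))) :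
    ∀ x ∈ Y, x * vMat r ∈ F := by
  have hyu (n) : y * uMat (t n) ∈ Y := hY.mul_right_mem _ (uMat_mem_realUnipotents _) _ hy
  choose γ hγ k hk hγk using fun n => hYK (hyu n)
  obtain ⟨z, -, φ, hφ, hz⟩ := hK.tendsto_subseq hk
  have k_eq (n) : k n = (γ n)⁻¹ * (y * uMat (t n)) := eq_inv_mul_iff_mul_eq.2 (hγk n)
  have hzY : z ∈ Y := hY.isClosed.mem_of_tendsto hz <| .of_forall fun n => by
    rw [Function.comp_apply, k_eq]
    exact hY.left_mul_mem _ (L.inv_mem (hγ _)) _ (hyu _)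
  have twist_tendsto : Tendsto (fun n => twist (vMat (-r) * uMat (-t n) * g n)) atTop (𝓝 1) := by
    have limit_eq : vMat (-r) * vMat (2 * r) * vMat (-r) = 1 := by
      rw [← vMat_add, ← vMat_add, ← vMat_zero]
      ring_nf
    refine limit_eq ▸ ((ht.const_mul (vMat (-r))).mul_const (vMat (-r))).congr fun n => ?_
    have conj_uMat : complexConj (uMat (-t n)) = uMat (-t n) := by
      exact_mod_cast complexConj_uMat_ofReal (-t n)
    rw [twist_mul, map_mul, complexConj_vMat, conj_uMat, _root_.mul_inv_rev, vMat_inv, uMat_inv]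
    simp only [neg_neg, mul_assoc]
  have hzF : z * vMat r ∈ F := by
    refine mem_of_tendsto_of_tendsto_twist hF.isClosed hF.mul_right_mem
      (hz.mul_const (vMat r)) (twist_tendsto.comp hφ.tendsto_atTop) fun n => ?_
    have mul_eq : k (φ n) * vMat r * (vMat (-r) * uMat (-t (φ n)) * g (φ n)) =
        (γ (φ n))⁻¹ * (y * g (φ n)) := by
      rw [k_eq, ← vMat_inv, ← uMat_inv]
      group
    simp only [Function.comp_apply, mul_eq]
    exact hF.left_mul_mem _ (L.inv_mem (hγ _)) _ (hg _)
  exact hY.subset_of_inter_nonempty _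
    ((hF.mono realUnipotents_le_realSL2).preimage_mul_vMat r) ⟨z, hzF, hzY⟩

/-- After rescaling time by `τ`, the quadratic polynomials `t ↦ t * p n - t ^ 2 * c n` converge to
a nonzero polynomial. -/
lemma exists_renormalization {p c : ℕ → ℝ} (hp : Tendsto p atTop (𝓝 0))
    (hc : Tendsto c atTop (𝓝 0)) (hpc : ∀ n, p n ≠ 0 ∨ c n ≠ 0) :
    ∃ φ : ℕ → ℕ, StrictMono φ ∧ ∃ (τ : ℕ → ℝ) (β κ : ℝ), (β ≠ 0 ∨ κ ≠ 0) ∧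
      Tendsto (fun n => τ n * p (φ n)) atTop (𝓝 β) ∧
      Tendsto (fun n => τ n ^ 2 * c (φ n)) atTop (𝓝 κ) ∧
      Tendsto (fun n => τ n * c (φ n)) atTop (𝓝 0) := by
  set m : ℕ → ℝ := fun n => max |p n| √|c n|
  have m_pos (n) : 0 < m n := by
    rcases hpc n with h | h
    · exact lt_max_of_lt_left (abs_pos.2 h)
    · exact lt_max_of_lt_right (Real.sqrt_pos.2 (abs_pos.2 h))
  have m_tendsto : Tendsto m atTop (𝓝 0) := by
    simpa using hp.abs.max ((Real.continuous_sqrt.tendsto _).comp hc.abs)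
  set x : ℕ → ℝ × ℝ := fun n => ((m n)⁻¹ * p n, (m n)⁻¹ ^ 2 * c n) with hx
  have max_eq_one (n) : max |(x n).1| √|(x n).2| = 1 := by
    have inv_pos := inv_pos.2 (m_pos n)
    simp only [hx, abs_mul, abs_pow, abs_of_pos inv_pos, Real.sqrt_mul (sq_nonneg _),
      Real.sqrt_sq inv_pos.le]
    rw [← mul_max_of_nonneg _ _ inv_pos.le, inv_mul_cancel₀ (m_pos n).ne']
  have x_mem (n) : x n ∈ Metric.closedBall (0 : ℝ × ℝ) 1 := by
    obtain ⟨h₁, h₂⟩ := max_le_iff.1 (max_eq_one n).le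
    exact mem_closedBall_zero_iff.2 (max_le h₁ (Real.sqrt_le_one.1 h₂))
  obtain ⟨⟨β, κ⟩, -, φ, hφ, hlim⟩ := (isCompact_closedBall (0 : ℝ × ℝ) 1).tendsto_subseq x_mem
  have hβ : Tendsto (fun n => (m (φ n))⁻¹ * p (φ n)) atTop (𝓝 β) := hlim.fst_nhds
  have hκ : Tendsto (fun n => (m (φ n))⁻¹ ^ 2 * c (φ n)) atTop (𝓝 κ) := hlim.snd_nhds
  refine ⟨φ, hφ, fun n => (m (φ n))⁻¹, β, κ, ?_, hβ, hκ, ?_⟩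
  · by_contra! h
    have limit_max := hβ.abs.max ((Real.continuous_sqrt.tendsto _).comp hκ.abs)
    have := tendsto_nhds_unique limit_max
      (tendsto_const_nhds.congr fun n => (max_eq_one (φ n)).symm)
    simp [h.1, h.2] at this
  · refine (zero_mul κ ▸ (m_tendsto.comp hφ.tendsto_atTop).mul hκ).congr fun n => ?_
    have := (m_pos (φ n)).ne'
    simp only [Function.comp_apply]
    field_simp

lemma tendsto_conj_uMat {ι : Type*} {l : Filter ι} {S : ι → SL2C}
    (hS : ∀ n, complexConj (S n) = (S n)⁻¹) (hlim : Tendsto S l (𝓝 1)) {t : ι → ℝ} {β κ : ℝ}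
    (hβ : Tendsto (fun n => t n * (S n 0 0).im) l (𝓝 β))
    (hκ : Tendsto (fun n => t n ^ 2 * (S n 1 0).im) l (𝓝 κ))
    (h₀ : Tendsto (fun n => t n * (S n 1 0).im) l (𝓝 0)) :
    Tendsto (fun n => uMat (-t n) * S n * uMat (t n)) l (𝓝 (vMat (2 * β - κ))) := by
  have entry := tendsto_nhds_iff.1 hlim
  have sub_eq (n) : S n 0 0 - S n 1 1 = 2 * (S n 0 0).im * Complex.I := by
    rw [← inv_apply_zero_zero, ← conj_apply_of_complexConj_eq_inv (hS n), Complex.sub_conj]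
    push_cast
    rfl
  have one_zero_eq (n) : S n 1 0 = (S n 1 0).im * Complex.I :=
    eq_im_mul_I_of_conj_eq_neg <|
      (conj_apply_of_complexConj_eq_inv (hS n) 1 0).trans (inv_apply_one_zero _)
  have mul_I_tendsto {f : ι → ℝ} {a : ℝ} (hf : Tendsto f l (𝓝 a)) :
      Tendsto (fun n => (f n * Complex.I : ℂ)) l (𝓝 (a * Complex.I)) :=
    ((Complex.continuous_ofReal.tendsto a).comp hf).mul_const Complex.I
  have shear_tendsto : Tendsto (fun n => t n * S n 1 0) l (𝓝 0) := by
    refine (zero_mul Complex.I ▸ mul_I_tendsto h₀ :).congr fun n => ?_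
    rw [one_zero_eq, Complex.ofReal_mul, mul_assoc]
    simp
  have zero_one_eq (n) : (uMat (-t n) * S n * uMat (t n)) 0 1 =
      S n 0 1 + 2 * ((t n * (S n 0 0).im : ℝ) * Complex.I) -
        (t n ^ 2 * (S n 1 0).im : ℝ) * Complex.I := by
    have := one_zero_eq n
    simp [mul_apply]
    linear_combination t n * sub_eq n - t n ^ 2 * one_zero_eq n
  refine tendsto_nhds_iff.2 fun i j => ?_
  fin_cases i <;> fin_cases j
  · simpa [mul_apply, vMat, sub_eq_add_neg] using (entry 0 0).sub shear_tendsto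
  · refine Tendsto.congr (fun n => (zero_one_eq n).symm) ?_
    convert ((entry 0 1).add ((mul_I_tendsto hβ).const_mul 2)).sub (mul_I_tendsto hκ) using 2
    simp [vMat]
    ring
  · simpa [mul_apply, vMat] using entry 1 0
  · simpa [mul_apply, vMat, add_comm, mul_comm] using (entry 1 1).add shear_tendsto

lemma exists_forall_mul_vMat_mem_of_returns (hF : IsClosedInvariant L realSL2 F)
    (hY : IsMinimalInvariant L realUnipotents Y) (hK : IsCompact K)
    (hYK : Y ⊆ (L : Set SL2C) * K) {y : SL2C} (hy : y ∈ Y) {g : ℕ → SL2C}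
    (hg : Tendsto g atTop (𝓝 1)) (hgF : ∀ n, y * g n ∈ F)
    (hgVH : ∀ n, g n ∉ imagUnipotentMulReal) (hne : ∀ n, twist (g n) 0 0 ≠ -1) :
    ∃ β κ : ℝ, (β ≠ 0 ∨ κ ≠ 0) ∧ ∀ s : ℝ, ∀ x ∈ Y, x * vMat (s * β - s ^ 2 * κ / 2) ∈ F := by
  have hlim : Tendsto (fun n => twist (g n)) atTop (𝓝 1) :=
    twist_eq_one_iff.2 realSL2.one_mem ▸ (continuous_twist.tendsto 1).comp hg
  have im_tendsto (i) : Tendsto (fun n => (twist (g n) i 0).im) atTop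
      (𝓝 ((1 : SL2C) i 0).im) :=
    (Complex.continuous_im.tendsto _).comp (tendsto_nhds_iff.1 hlim i 0)
  obtain ⟨φ, hφ, τ, β, κ, hβκ, hβ, hκ, hτ⟩ := exists_renormalization
    (by simpa using im_tendsto 0) (by simpa using im_tendsto 1) fun n => by
      by_contra! him
      exact hgVH n (mem_imagUnipotentMulReal_of_im_eq_zero him.1 him.2 (hne n))
  refine ⟨β, κ, hβκ, fun s => ?_⟩
  have conj_tendsto := tendsto_conj_uMat (fun n => complexConj_twist (g (φ n)))
    (hlim.comp hφ.tendsto_atTop) (t := fun n => s * τ n) (β := s * β) (κ := s ^ 2 * κ)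
    (by simpa only [mul_assoc] using hβ.const_mul s)
    (by simpa only [mul_assoc, mul_pow] using hκ.const_mul (s ^ 2))
    (by simpa only [mul_assoc, mul_zero] using hτ.const_mul s)
  rw [show 2 * (s * β) - s ^ 2 * κ = 2 * (s * β - s ^ 2 * κ / 2) by ring] at conj_tendsto
  exact mul_vMat_mem_of_tendsto_conj_twist hF hY hK hYK hy (fun n => hgF (φ n)) conj_tendsto

/-- Otherwise the renormalized limits of the returns under the shear push `Y` into `F` by an
interval of imaginary unipotents, so that `F` contains an open piece of a horosphere. -/
theorem eventually_mem_imagUnipotentMulReal (hL : LatticeProperties L)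
    (hF : IsClosedInvariant L realSL2 F) (hFne : F ≠ univ)
    (hY : IsMinimalInvariant L realUnipotents Y) (hK : IsCompact K)
    (hYK : Y ⊆ (L : Set SL2C) * K) {y : SL2C} (hy : y ∈ Y) :
    ∀ᶠ g in 𝓝 (1 : SL2C), y * g ∈ F → g ∈ imagUnipotentMulReal := by
  by_contra h
  have ne_neg_one : ∀ᶠ g in 𝓝 (1 : SL2C), twist g 0 0 ≠ -1 := by
    refine (tendsto_nhds_iff.1 (continuous_twist.tendsto 1) 0 0).eventually_ne ?_
    rw [twist_eq_one_iff.2 realSL2.one_mem]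
    simp
    norm_num
  simp only [not_eventually, Classical.not_imp] at h
  obtain ⟨g, hg, hgF⟩ := exists_seq_forall_of_frequently (h.and_eventually ne_neg_one)
  obtain ⟨β, κ, hβκ, hq⟩ := exists_forall_mul_vMat_mem_of_returns hF hY hK hYK hy hg
    (fun n => (hgF n).1.1) (fun n => (hgF n).1.2) (fun n => (hgF n).2)
  set q : ℝ → ℝ := fun s => s * β - s ^ 2 * κ / 2 with q_def
  obtain ⟨s₀, hs₀⟩ : ∃ s₀, q 0 ≠ q s₀ := by
    by_contra! hconst
    have h₁ := hconst 1
    have h₂ := hconst (-1)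
    simp only [q_def] at h₁ h₂
    rcases hβκ with h | h <;> exact h (by linarith)
  have hcont : Continuous q := by fun_prop
  refine hFne (hF.eq_univ_of_mul_uMat_mem hL (aMat_mem_realSL2 _) (y := y)
    (Ω := {z | z.im ∈ Ioo (min (q 0) (q s₀)) (max (q 0) (q s₀))})
    (isOpen_Ioo.preimage Complex.continuous_im) ?_ fun z hz => ?_)
  · obtain ⟨ρ, hρ⟩ := nonempty_Ioo.2 (min_lt_max.2 hs₀)
    exact ⟨⟨0, ρ⟩, hρ⟩
  · obtain ⟨s, -, hs⟩ := intermediate_value_uIcc hcont.continuousOn (Ioo_subset_Icc_self hz)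
    have := hq s _ (hY.mul_right_mem _ (uMat_mem_realUnipotents z.re) _ hy)
    rwa [show s * β - s ^ 2 * κ / 2 = z.im from hs, mul_assoc, vMat, ← uMat_add,
      Complex.re_add_im] at this

end Pushing

section DoubleCosets

/-- By the Baire property, the closed set `L * g * S` is locally a single left translate of `S`. -/
theorem eventually_mem_of_isClosed_doubleCoset {G : Type*} [Group G] [TopologicalSpace G]
    [IsTopologicalGroup G] [T2Space G] [LocallyCompactSpace G] {L S : Subgroup G} [Countable L]
    (hS : IsClosed (S : Set G)) {g : G} (hg : IsClosed (DoubleCoset.doubleCoset g L S)) :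
    ∀ᶠ e in 𝓝 (1 : G), g * e ∈ DoubleCoset.doubleCoset g L S → e ∈ S := by
  let D := DoubleCoset.doubleCoset g (L : Set G) S
  let sheet (γ : L) : Set D := {x | (γ * g)⁻¹ * (x : G) ∈ S}
  have : LocallyCompactSpace D := hg.isClosedEmbedding_subtypeVal.locallyCompactSpace
  have : Nonempty D := ⟨⟨g, DoubleCoset.mem_doubleCoset_self L S g⟩⟩
  have sheet_closed (γ : L) : IsClosed (sheet γ) :=
    hS.preimage (continuous_const.mul continuous_subtype_val)
  have iUnion_sheet : ⋃ γ, sheet γ = univ := by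
    refine eq_univ_of_forall fun ⟨x, hx⟩ => ?_
    obtain ⟨γ, hγ, s, hs, rfl⟩ := DoubleCoset.mem_doubleCoset.1 hx
    exact mem_iUnion.2 ⟨⟨γ, hγ⟩, by simpa [sheet, mul_assoc] using hs⟩
  obtain ⟨γ, x, hx⟩ := nonempty_interior_of_iUnion_of_closed sheet_closed iUnion_sheet
  obtain ⟨U, hU, hUsub⟩ := mem_nhds_subtype _ _ _ |>.1 (mem_interior_iff_mem_nhds.1 hx)
  let s := (γ * g)⁻¹ * (x : G)
  have hs : s ∈ S := (interior_subset hx : x ∈ sheet γ)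
  have translate_tendsto : Tendsto (fun e => γ * (g * e) * s) (𝓝 1) (𝓝 (x : G)) := by
    have translate_continuous : Continuous fun e : G => γ * (g * e) * s := by fun_prop
    simpa [s, mul_assoc] using translate_continuous.tendsto 1
  filter_upwards [translate_tendsto hU] with e he hge
  obtain ⟨δ, hδ, r, hr, hδr⟩ := DoubleCoset.mem_doubleCoset.1 hge
  have translate_mem : γ * (g * e) * s ∈ D := DoubleCoset.mem_doubleCoset.2
    ⟨γ * δ, L.mul_mem γ.2 hδ, r * s, S.mul_mem hr hs, by rw [hδr]; group⟩
  have mem_sheet : (γ * g)⁻¹ * (γ * (g * e) * s) ∈ S := hUsub (a := ⟨_, translate_mem⟩) he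
  rw [show (γ * g)⁻¹ * (γ * (g * e) * s) = e * s by group] at mem_sheet
  exact (S.mul_mem_cancel_right hs).1 mem_sheet

variable {L : Subgroup SL2C}

lemma isClosedInvariant_closure {S C : Set SL2C} (hleft : ∀ γ ∈ L, ∀ x ∈ C, γ * x ∈ C)
    (hright : ∀ s ∈ S, ∀ x ∈ C, x * s ∈ C) : IsClosedInvariant L S (closure C) where
  isClosed := isClosed_closure
  left_mul_mem γ hγ _ hx :=
    map_mem_closure (continuous_const.mul continuous_id) hx (hleft γ hγ)
  mul_right_mem s hs _ hx :=
    map_mem_closure (f := (· * s)) (continuous_id.mul continuous_const) hx (hright s hs)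

lemma isClosedInvariant_closure_iUnion {ι : Sort*} {S : Set SL2C} {Z : ι → Set SL2C}
    (hZ : ∀ i, IsClosedInvariant L S (Z i)) : IsClosedInvariant L S (closure (⋃ i, Z i)) := by
  refine isClosedInvariant_closure (fun γ hγ x hx => ?_) fun s hs x hx => ?_ <;>
    obtain ⟨i, hi⟩ := mem_iUnion.1 hx
  exacts [mem_iUnion.2 ⟨i, (hZ i).left_mul_mem γ hγ x hi⟩,
    mem_iUnion.2 ⟨i, (hZ i).mul_right_mem s hs x hi⟩]

lemma isClosedInvariant_closure_doubleCoset (S : Subgroup SL2C) (g : SL2C) :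
    IsClosedInvariant L S (closure (DoubleCoset.doubleCoset g (L : Set SL2C) S)) := by
  refine isClosedInvariant_closure (fun γ hγ x hx => ?_) fun r hr x hx => ?_ <;>
    obtain ⟨δ, hδ, s, hs, rfl⟩ := DoubleCoset.mem_doubleCoset.1 hx
  exacts [DoubleCoset.mem_doubleCoset.2 ⟨γ * δ, L.mul_mem hγ hδ, s, hs, by group⟩,
    DoubleCoset.mem_doubleCoset.2 ⟨δ, hδ, s * r, S.mul_mem hs hr, by group⟩]

lemma LatticeProperties.exists_isCompact_inter_nonempty (hL : LatticeProperties L) :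
    ∃ K, IsCompact K ∧ ∀ C, IsClosedInvariant L realSL2 C → C.Nonempty → (C ∩ K).Nonempty := by
  have := hL.discrete
  obtain ⟨K, hK, hthick⟩ := hL.thickPart_subset _ zassenhausRadius_pos
  refine ⟨K, hK, fun C hC ⟨x, hx⟩ => ?_⟩
  obtain ⟨s, t, -, hst⟩ := exists_mul_uMat_mul_aMat_mem_thickPart L x 0
  obtain ⟨γ, hγ, k, hk, hγk⟩ := hthick hst
  have k_eq : k = γ⁻¹ * (x * (uMat s * aMat t)) := eq_inv_mul_of_mul_eq hγk
  refine ⟨k, ?_, hk⟩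
  rw [k_eq]
  exact hC.left_mul_mem _ (L.inv_mem hγ) _ (hC.mul_right_mem _
    (realSL2.mul_mem (uMat_mem_realSL2 s) (aMat_mem_realSL2 t)) _ hx)

end DoubleCosets

section Cusps

variable {L : Subgroup SL2C}

lemma scalarDist_uMat_eq_zero_iff {w : ℂ} : scalarDist (uMat w) = 0 ↔ w = 0 := by
  refine ⟨fun h => ?_, fun h => by rw [h, uMat_zero, scalarDist_one]⟩
  simpa [h] using norm_entry_le_scalarDist (uMat w) 0 1

lemma commute_uMat (z w : ℂ) : Commute (uMat z) (uMat w) := by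
  rw [Commute, SemiconjBy, ← uMat_add, ← uMat_add, add_comm]

lemma exists_scalarDist_conj_aMat_uMat_lt (w : ℂ) {ε : ℝ} (hε : 0 < ε) :
    ∃ t : ℝ, scalarDist ((aMat t)⁻¹ * uMat w * aMat t) < ε := by
  have exp_tendsto : Tendsto (fun t : ℝ => (Real.exp (-2 * t) : ℂ) * w) atTop (𝓝 0) := by
    rw [← zero_mul w, ← Complex.ofReal_zero]
    exact ((Complex.continuous_ofReal.tendsto 0).comp (Real.tendsto_exp_atBot.comp
      (tendsto_id.const_mul_atTop_of_neg (by norm_num)))).mul_const w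
  have scalarDist_tendsto :=
    ((continuous_scalarDist.comp continuous_uMat).tendsto 0).comp exp_tendsto
  simp only [Function.comp_def, uMat_zero, scalarDist_one] at scalarDist_tendsto
  obtain ⟨t, ht⟩ := (scalarDist_tendsto.eventually_lt_const hε).exists
  exact ⟨t, by rwa [conj_aMat_uMat]⟩

/-- A closed horocycle stays in a thick part: flowing towards the cusp, an element that is short at
some point of the horocycle becomes comparable with the unipotent of the cusp, hence commutes with
it, and so is equally short all along the horocycle. -/
theorem exists_forall_mul_uMat_mem_thickPart [DiscreteTopology L] {y γ : SL2C} {w : ℂ} (hγ : γ ∈ L)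
    (hγy : y⁻¹ * γ * y = uMat w) (hw : w ≠ 0) :
    ∃ ε > 0, ∀ s : ℝ, y * uMat s ∈ thickPart L ε := by
  obtain ⟨ε, hε, hy⟩ := exists_mem_thickPart (L := L) y
  obtain ⟨t, ht⟩ := exists_scalarDist_conj_aMat_uMat_lt w zassenhausRadius_pos
  set N := ‖(aMat t : Matrix (Fin 2) (Fin 2) ℂ)‖ ^ 2
  have _N_nonneg : 0 ≤ N := sq_nonneg _
  refine ⟨min ε (zassenhausRadius / (N + 1)),
    lt_min hε (div_pos zassenhausRadius_pos (by positivity)), fun s δ hδ hδ0 => ?_⟩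
  by_contra! hlt
  have cusp_short : scalarDist ((y * uMat s * aMat t)⁻¹ * γ * (y * uMat s * aMat t)) <
      zassenhausRadius := by
    have : (y * uMat s * aMat t)⁻¹ * γ * (y * uMat s * aMat t) =
        (aMat t)⁻¹ * ((uMat s)⁻¹ * (y⁻¹ * γ * y) * uMat s) * aMat t := by group
    rw [this, hγy, (commute_uMat s w).inv_mul_cancel]
    exact ht
  have short : scalarDist ((y * uMat s * aMat t)⁻¹ * δ * (y * uMat s * aMat t)) <
      zassenhausRadius := by
    have : (y * uMat s * aMat t)⁻¹ * δ * (y * uMat s * aMat t) =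
        (aMat t)⁻¹ * ((y * uMat s)⁻¹ * δ * (y * uMat s)) * aMat t := by group
    rw [this]
    refine (scalarDist_conj_le _ _).trans_lt ?_
    have lt_div := hlt.trans_le (min_le_right _ _)
    rw [lt_div_iff₀ (by positivity)] at lt_div
    nlinarith [scalarDist_nonneg ((y * uMat s)⁻¹ * δ * (y * uMat s))]
  have commute_cusp : Commute (y⁻¹ * δ * y) (uMat w) := by
    rw [← hγy, commute_conj_iff]
    exact commute_of_scalarDist_conj_lt hδ hγ short cusp_short
  have commute_horocycle : Commute (y⁻¹ * δ * y) (uMat s) :=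
    commute_trans (scalarDist_uMat_eq_zero_iff.not.2 hw) commute_cusp (commute_uMat w s)
  have conj_eq : (y * uMat s)⁻¹ * δ * (y * uMat s) = y⁻¹ * δ * y := by
    rw [← commute_horocycle.symm.inv_mul_cancel]
    group
  rw [conj_eq] at hlt
  exact (hlt.trans_le (min_le_left _ _)).not_ge (hy δ hδ hδ0)

lemma mem_thickPart_of_minimal [DiscreteTopology L] {x y γ : SL2C} (hγ : γ ∈ L)
    (hγ0 : scalarDist γ ≠ 0)
    (hmin : ∀ δ ∈ L, scalarDist δ ≠ 0 → scalarDist (x⁻¹ * γ * x) ≤ scalarDist (x⁻¹ * δ * x))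
    (hy : scalarDist (y⁻¹ * γ * y) < zassenhausRadius) :
    y ∈ thickPart L (scalarDist (y⁻¹ * γ * y)) := by
  intro δ hδ hδ0
  by_contra! hlt
  obtain ⟨c, hc⟩ := exists_tracelessPart_eq_smul_of_commute
    (commute_of_scalarDist_conj_lt hγ hδ hy (hlt.trans hy)) hγ0
  have one_le_c : 1 ≤ ‖c‖ := by
    have := hmin δ hδ hδ0
    rw [scalarDist_eq_of_tracelessPart_eq_smul hc] at this
    exact one_le_of_le_mul_right₀ ((scalarDist_nonneg _).lt_of_ne'
      (scalarDist_conj_eq_zero_iff.not.2 hγ0)) this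
  rw [scalarDist_eq_of_tracelessPart_eq_smul hc] at hlt
  exact hlt.not_ge (le_mul_of_one_le_left (scalarDist_nonneg _) one_le_c)

lemma exists_conj_uMat_zero_one_ne_zero {q : SL2C} (hq : scalarDist q ≠ 0) :
    ∃ t : ℝ, |t| ≤ 1 ∧ ((uMat t)⁻¹ * q * uMat t) 0 1 ≠ 0 := by
  contrapose! hq
  have polynomial_eq_zero (t : ℝ) (ht : |t| ≤ 1) :
      q 0 1 + t * (q 0 0 - q 1 1) - t ^ 2 * q 1 0 = 0 := by
    rw [← hq t ht]
    simp only [mul_apply, uMat_inv, uMat_zero_zero, uMat_zero_one, uMat_one_one]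
    ring
  have at_zero := polynomial_eq_zero 0 (by norm_num)
  have at_one := polynomial_eq_zero 1 (by norm_num)
  have at_neg_one := polynomial_eq_zero (-1) (by norm_num)
  push_cast at at_zero at_one at_neg_one
  rw [scalarDist_eq_zero_iff_tracelessPart]
  ext i j
  fin_cases i <;> fin_cases j <;> simp <;> grind

lemma scalarDist_conj_uMat_le {t : ℝ} (ht : |t| ≤ 1) (q : SL2C) :
    scalarDist ((uMat t)⁻¹ * q * uMat t) ≤ 3 * scalarDist q := by
  refine (scalarDist_conj_le _ _).trans (mul_le_mul_of_nonneg_right ?_ (scalarDist_nonneg q))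
  have := (sq_le_one_iff_abs_le_one t).2 ht
  simp [frobenius_norm_sq, Fin.sum_univ_two]
  linarith

lemma norm_zero_one_le_scalarDist (q : SL2C) : ‖q 0 1‖ ≤ scalarDist q := by
  simpa using norm_entry_le_scalarDist q 0 1

lemma norm_one_zero_le_scalarDist (q : SL2C) : ‖q 1 0‖ ≤ scalarDist q := by
  simpa using norm_entry_le_scalarDist q 1 0

lemma norm_zero_zero_sub_one_one_le_scalarDist (q : SL2C) :
    ‖q 0 0 - q 1 1‖ ≤ 2 * scalarDist q := by
  have := norm_entry_le_scalarDist q 0 0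
  rw [tracelessPart_zero_zero, norm_div, RCLike.norm_ofNat] at this
  linarith

lemma scalarDist_le_sum_norm (q : SL2C) :
    scalarDist q ≤ ‖q 0 0 - q 1 1‖ + ‖q 0 1‖ + ‖q 1 0‖ := by
  refine (frobenius_norm_le_sum _).trans_eq ?_
  simp only [Fin.sum_univ_two, tracelessPart_zero_zero, tracelessPart_zero_one,
    tracelessPart_one_zero, tracelessPart_one_one, norm_neg, norm_div, RCLike.norm_ofNat]
  ring

lemma exists_conj_aMat_norm_eq {q : SL2C} (hq : q 0 1 ≠ 0) {r η : ℝ} (hqr : scalarDist q ≤ r / 6)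
    (hqη : scalarDist q ≤ η / 2) :
    ∃ t : ℝ, scalarDist ((aMat t)⁻¹ * q * aMat t) < 2 * r ∧ ‖((aMat t)⁻¹ * q * aMat t) 0 1‖ = r ∧
      ‖((aMat t)⁻¹ * q * aMat t) 1 0‖ ≤ η ∧
      ‖((aMat t)⁻¹ * q * aMat t) 0 0 - ((aMat t)⁻¹ * q * aMat t) 1 1‖ ≤ η := by
  have q_pos : 0 < ‖q 0 1‖ := norm_pos_iff.2 hq
  have b_le := norm_zero_one_le_scalarDist q
  have c_le := norm_one_zero_le_scalarDist q
  have e_le := norm_zero_zero_sub_one_one_le_scalarDist q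
  have r_pos : 0 < r := by linarith
  let t := Real.log (‖q 0 1‖ / r) / 2
  have exp_two_mul : Real.exp (2 * t) = ‖q 0 1‖ / r := by
    rw [mul_div_cancel₀ _ two_ne_zero, Real.exp_log (by positivity)]
  have norm_b : ‖((aMat t)⁻¹ * q * aMat t) 0 1‖ = r := by
    rw [conj_aMat_zero_one, norm_mul, Complex.norm_real, Real.norm_of_nonneg (Real.exp_pos _).le,
      neg_mul, Real.exp_neg, exp_two_mul]
    field_simp
  have norm_c : ‖((aMat t)⁻¹ * q * aMat t) 1 0‖ ≤ ‖q 1 0‖ := by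
    rw [conj_aMat_one_zero, norm_mul, Complex.norm_real, Real.norm_of_nonneg (Real.exp_pos _).le,
      exp_two_mul]
    exact mul_le_of_le_one_left (norm_nonneg _) ((div_le_one r_pos).2 (by linarith))
  have sum_bound := scalarDist_le_sum_norm ((aMat t)⁻¹ * q * aMat t)
  refine ⟨t, ?_, norm_b, by linarith, ?_⟩ <;> rw [conj_aMat_zero_zero, conj_aMat_one_one] at *
    <;> linarith

/-- Flowing from a point where a minimal element is very short until its upper right entry has a
fixed size makes it nearly unipotent without shortening the other elements. -/
lemma exists_nearly_unipotent_mem_thickPart [DiscreteTopology L] {M : Set SL2C}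
    (hM : IsClosedInvariant L realSL2 M) (hthin : ∀ ε > 0, ¬ M ⊆ thickPart L ε) {η : ℝ}
    (hη : 0 < η) :
    ∃ x ∈ M ∩ thickPart L (zassenhausRadius / 2), ∃ q : SL2C, x * q * x⁻¹ ∈ L ∧
      scalarDist q < zassenhausRadius ∧ ‖q 0 1‖ = zassenhausRadius / 2 ∧
      ‖q 1 0‖ ≤ η ∧ ‖q 0 0 - q 1 1‖ ≤ η := by
  have radius_pos := zassenhausRadius_pos
  obtain ⟨x, hxM, hx⟩ := not_subset.1 (hthin (min (zassenhausRadius / 36) (η / 6)) (by positivity))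
  simp only [thickPart, mem_ofPred_eq] at hx
  push Not at hx
  obtain ⟨γ₀, hγ₀, hγ₀_ne, hγ₀_lt⟩ := hx
  obtain ⟨γ, hγ, hγ_ne, hmin⟩ := exists_minimal_scalarDist_conj x hγ₀ hγ₀_ne
  have γ_lt := (hmin γ₀ hγ₀ hγ₀_ne).trans_lt hγ₀_lt
  rw [lt_min_iff] at γ_lt
  obtain ⟨s, hs, hs_ne⟩ :=
    exists_conj_uMat_zero_one_ne_zero ((scalarDist_conj_eq_zero_iff (x := x)).not.2 hγ_ne)
  have shear_le := scalarDist_conj_uMat_le hs (x⁻¹ * γ * x)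
  obtain ⟨t, q_lt, norm_b, norm_c, norm_e⟩ := exists_conj_aMat_norm_eq hs_ne
    (r := zassenhausRadius / 2) (η := η) (by linarith) (by linarith)
  rw [mul_div_cancel₀ _ two_ne_zero] at q_lt
  set q := (aMat t)⁻¹ * ((uMat s)⁻¹ * (x⁻¹ * γ * x) * uMat s) * aMat t with hq
  let y := x * (uMat s * aMat t)
  have q_eq : y⁻¹ * γ * y = q := by simp only [y, hq]; group
  have half_le : zassenhausRadius / 2 ≤ scalarDist q := norm_b ▸ norm_zero_one_le_scalarDist q
  have y_thick : y ∈ thickPart L (scalarDist q) :=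
    q_eq ▸ mem_thickPart_of_minimal hγ hγ_ne hmin (q_eq ▸ q_lt)
  refine ⟨y, ⟨hM.mul_right_mem _ (realSL2.mul_mem (uMat_mem_realSL2 s) (aMat_mem_realSL2 t)) _ hxM,
    fun δ hδ hδ_ne => half_le.trans (y_thick δ hδ hδ_ne)⟩, q, ?_, q_lt, norm_b, norm_c, norm_e⟩
  rw [← q_eq]
  simpa [mul_assoc] using hγ

lemma eq_uMat_or_neg_eq_uMat {q : SL2C} (h₁₀ : q 1 0 = 0) (hdiag : q 0 0 = q 1 1) :
    q = uMat (q 0 1) ∨ -q = uMat (-q 0 1) := by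
  have det := det_eq_one q
  rw [h₁₀, mul_zero, sub_zero, ← hdiag, mul_self_eq_one_iff] at det
  rcases det with h | h
  · exact .inl (by apply ext_entries <;> simp [h, h₁₀, ← hdiag])
  · exact .inr (by apply ext_entries <;> simp [h, h₁₀, ← hdiag])

theorem LatticeProperties.exists_conj_eq_uMat (hL : LatticeProperties L) {M : Set SL2C}
    (hM : IsClosedInvariant L realSL2 M) (hthin : ∀ ε > 0, ¬ M ⊆ thickPart L ε) :
    ∃ y ∈ M, ∃ γ ∈ L, ∃ w ≠ 0, y⁻¹ * γ * y = uMat w := by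
  have := hL.discrete
  have radius_pos := zassenhausRadius_pos
  choose x hx q hqL hq norm_b norm_c norm_e using fun n : ℕ =>
    exists_nearly_unipotent_mem_thickPart hM hthin (Nat.one_div_pos_of_nat (n := n) (α := ℝ))
  obtain ⟨K, hK, hthick⟩ := hL.thickPart_subset _ (half_pos radius_pos)
  choose δ hδ k hk hδk using fun n => hthick (hx n).2
  have q_bounded (n : ℕ) : ‖(q n : Matrix (Fin 2) (Fin 2) ℂ)‖ ≤ 3 * zassenhausRadius + 2 :=
    (norm_coe_le_of_scalarDist _).trans (by linarith [hq n])
  obtain ⟨⟨y, p⟩, -, φ, hφ, hlim⟩ := (hK.prod (isCompact_setOf_norm_le _)).tendsto_subseq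
    (x := fun n => (k n, q n)) fun n => ⟨hk n, q_bounded n⟩
  obtain ⟨hy, hp⟩ := Prod.tendsto_iff _ _ |>.1 hlim
  have k_eq (n : ℕ) : k n = (δ n)⁻¹ * x n := eq_inv_mul_of_mul_eq (hδk n)
  have hyM : y ∈ M := hM.isClosed.mem_of_tendsto hy <| .of_forall fun n => by
    simpa [k_eq] using hM.left_mul_mem _ (L.inv_mem (hδ _)) _ (hx _).1
  have hpL : y * p * y⁻¹ ∈ L := by
    refine (Subgroup.isClosed_of_discrete (H := L)).mem_of_tendsto ((hy.mul hp).mul hy.inv)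
      (.of_forall fun n => ?_)
    have := L.mul_mem (L.mul_mem (L.inv_mem (hδ (φ n))) (hqL (φ n))) (hδ (φ n))
    simpa [k_eq, mul_assoc] using this
  have entries := tendsto_nhds_iff.1 hp
  have bound_tendsto := (tendsto_one_div_add_atTop_nhds_zero_nat (𝕜 := ℝ)).comp hφ.tendsto_atTop
  have p_b : p 0 1 ≠ 0 := by
    have : ‖p 0 1‖ = zassenhausRadius / 2 := tendsto_nhds_unique (entries 0 1).norm
      (tendsto_const_nhds.congr fun n => (norm_b (φ n)).symm)
    exact norm_pos_iff.1 (this ▸ half_pos radius_pos)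
  have p_c : p 1 0 = 0 := tendsto_nhds_unique (entries 1 0)
    (squeeze_zero_norm (fun n => norm_c (φ n)) bound_tendsto)
  have p_e : p 0 0 = p 1 1 := sub_eq_zero.1 <| tendsto_nhds_unique ((entries 0 0).sub (entries 1 1))
    (squeeze_zero_norm (fun n => norm_e (φ n)) bound_tendsto)
  rcases eq_uMat_or_neg_eq_uMat p_c p_e with h | h
  · exact ⟨y, hyM, _, hpL, _, p_b, by rw [← h]; group⟩
  · refine ⟨y, hyM, _, L.mul_mem hL.neg_one_mem hpL, _, neg_ne_zero.2 p_b, ?_⟩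
    rw [← h]
    simp [mul_assoc]

end Cusps

section UnipotentMinimalSets

variable {L : Subgroup SL2C} {M Y : Set SL2C} {ε : ℝ}

lemma isClosed_thickPart : IsClosed (thickPart L ε) := by
  have thickPart_eq :
      thickPart L ε = ⋂ γ ∈ L, ⋂ _ : scalarDist γ ≠ 0, {g | ε ≤ scalarDist (g⁻¹ * γ * g)} := by
    ext g
    simp [thickPart]
  rw [thickPart_eq]
  exact isClosed_biInter fun γ _ => isClosed_iInter fun _ =>
    isClosed_le continuous_const (continuous_scalarDist_conj γ)

lemma mul_mem_thickPart {γ g : SL2C} (hγ : γ ∈ L) (hg : g ∈ thickPart L ε) :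
    γ * g ∈ thickPart L ε := by
  intro δ hδ hδ0
  rw [show (γ * g)⁻¹ * δ * (γ * g) = g⁻¹ * (γ⁻¹ * δ * γ) * g by group]
  exact hg _ (L.mul_mem (L.mul_mem (L.inv_mem hγ) hδ) hγ)
    (mt (scalarDist_conj_eq_zero_iff (x := γ)).1 hδ0)

/-- If `M` is not itself contained in a thick part, it goes up a cusp, and there the closed
horocycles stay in a thick part. -/
lemma LatticeProperties.exists_isClosedInvariant_subset_thickPart (hL : LatticeProperties L)
    (hM : IsClosedInvariant L realSL2 M) (hne : M.Nonempty) :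
    ∃ P ⊆ M, P.Nonempty ∧ IsClosedInvariant L realUnipotents P ∧ ∃ ε > 0, P ⊆ thickPart L ε := by
  by_cases h : ∃ ε > 0, M ⊆ thickPart L ε
  · exact ⟨M, subset_rfl, hne, hM.mono realUnipotents_le_realSL2, h⟩
  push Not at h
  have := hL.discrete
  obtain ⟨y, hy, γ, hγ, w, hw, hγy⟩ := hL.exists_conj_eq_uMat hM h
  obtain ⟨ε, hε, hthick⟩ := exists_forall_mul_uMat_mem_thickPart hγ hγy hw
  refine ⟨closure (DoubleCoset.doubleCoset y (L : Set SL2C) realUnipotents), ?_, ?_,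
    isClosedInvariant_closure_doubleCoset _ _, ε, hε, ?_⟩
  · refine closure_minimal (fun x hx => ?_) hM.isClosed
    obtain ⟨δ, hδ, s, hs, rfl⟩ := DoubleCoset.mem_doubleCoset.1 hx
    exact hM.mul_right_mem s (realUnipotents_le_realSL2 hs) _ (hM.left_mul_mem δ hδ y hy)
  · exact ⟨y, subset_closure (DoubleCoset.mem_doubleCoset_self L realUnipotents y)⟩
  · refine closure_minimal (fun x hx => ?_) isClosed_thickPart
    obtain ⟨δ, hδ, _, ⟨s, rfl⟩, rfl⟩ := DoubleCoset.mem_doubleCoset.1 hx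
    exact mul_assoc δ y _ ▸ mul_mem_thickPart hδ (hthick s)

lemma LatticeProperties.exists_isMinimalInvariant_realUnipotents (hL : LatticeProperties L)
    (hM : IsClosedInvariant L realSL2 M) (hne : M.Nonempty) :
    ∃ Y ⊆ M, IsMinimalInvariant L realUnipotents Y ∧
      ∃ K, IsCompact K ∧ Y ⊆ (L : Set SL2C) * K := by
  obtain ⟨P, hPM, hPne, hP, ε, hε, hPε⟩ :=
    hL.exists_isClosedInvariant_subset_thickPart hM hne
  obtain ⟨K, hK, hthick⟩ := hL.thickPart_subset ε hε
  obtain ⟨Y, hYP, hY⟩ := exists_isMinimalInvariant hP hPne hK fun C hCP hC ⟨x, hx⟩ => by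
    obtain ⟨γ, hγ, k, hk, hγk⟩ := hthick (hPε (hCP hx))
    have k_mem := hC.left_mul_mem _ (L.inv_mem hγ) x hx
    rw [← eq_inv_mul_of_mul_eq hγk] at k_mem
    exact ⟨k, k_mem, hk⟩
  exact ⟨Y, hYP.trans hPM, hY, K, hK, (hYP.trans hPε).trans hthick⟩

lemma IsMinimalInvariant.preimage_mul_vMat (hY : IsMinimalInvariant L realUnipotents Y) (r : ℝ) :
    IsMinimalInvariant L realUnipotents {x | x * vMat r ∈ Y} where
  toIsClosedInvariant := hY.toIsClosedInvariant.preimage_mul_vMat r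
  nonempty := by
    obtain ⟨y, hy⟩ := hY.nonempty
    exact ⟨y * (vMat r)⁻¹, by simpa using hy⟩
  subset_of_inter_nonempty C hC := by
    rintro ⟨z, hzC, hz⟩ x hx
    have := hY.subset_of_inter_nonempty _ (hC.preimage_mul_vMat (-r))
      ⟨z * vMat r, by simpa [← vMat_inv] using hzC, hz⟩ hx
    simpa [← vMat_inv] using this

end UnipotentMinimalSets

section Normalizers

variable {s : ℝ} {g h : SL2C}

lemma one_zero_eq_zero_of_conj_vMat_mem (hs : s ≠ 0) (hh : h ∈ realSL2)
    (hmem : h⁻¹ * vMat s * h ∈ imagUnipotentMulReal) : h 1 0 = 0 := by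
  obtain ⟨_, ⟨r, rfl⟩, b, hb, hrb⟩ := hmem
  have twist_eq : twist (h⁻¹ * vMat s * h) = vMat (2 * r) := hrb ▸ twist_vMat_mul r hb
  rw [mul_assoc, twist_mul, twist_vMat_mul s hh, map_inv, complexConj_eq_self_iff.2 hh] at twist_eq
  have entry_eq := congrArg (fun g : SL2C => g 1 0) twist_eq
  simp only [vMat, inv_inv, mul_apply, inv_apply_one_zero, inv_apply_one_one, uMat_zero_zero,
    uMat_zero_one, uMat_one_zero, uMat_one_one, Complex.ofReal_mul,
    Complex.ofReal_ofNat] at entry_eq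
  have square_eq : 2 * (s : ℂ) * Complex.I * h 1 0 ^ 2 = 0 := by linear_combination -entry_eq
  simpa [hs] using square_eq

lemma entries_of_conj_vMat_mem_realSL2 {s₁ s₂ : ℝ} (hs : s₁ ≠ s₂)
    (h₁ : (vMat s₁)⁻¹ * g * vMat s₁ ∈ realSL2) (h₂ : (vMat s₂)⁻¹ * g * vMat s₂ ∈ realSL2) :
    g 1 0 = 0 ∧ g 0 0 = g 1 1 ∧ (g 0 1).im = 0 := by
  have conditions (s : ℝ) (hg : (vMat s)⁻¹ * g * vMat s ∈ realSL2) :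
      (g 1 0).im = 0 ∧ (g 0 0).im = s * (g 1 0).re ∧ (g 1 1).im = -(s * (g 1 0).re) ∧
        (g 0 1).im + s * ((g 0 0).re - (g 1 1).re) + s ^ 2 * (g 1 0).im = 0 := by
    have im_eq_zero := mem_realSL2_iff.1 hg
    have h₀₀ := im_eq_zero 0 0
    have h₀₁ := im_eq_zero 0 1
    have h₁₀ := im_eq_zero 1 0
    have h₁₁ := im_eq_zero 1 1
    simp only [vMat, mul_apply, inv_apply_zero_zero, inv_apply_zero_one, inv_apply_one_zero,
      inv_apply_one_one, uMat_zero_zero, uMat_zero_one, uMat_one_zero, uMat_one_one,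
      Complex.add_im, Complex.neg_im, Complex.mul_im, Complex.add_re, Complex.neg_re,
      Complex.mul_re, Complex.ofReal_re, Complex.ofReal_im, Complex.I_re, Complex.I_im,
      Complex.one_re, Complex.one_im, Complex.zero_re, Complex.zero_im] at h₀₀ h₀₁ h₁₀ h₁₁
    exact ⟨by linarith, by linarith, by linarith, by linear_combination h₀₁⟩
  obtain ⟨im₁₀, im₀₀, im₁₁, im₀₁⟩ := conditions s₁ h₁
  obtain ⟨-, im₀₀', -, im₀₁'⟩ := conditions s₂ h₂
  have hs' : s₁ - s₂ ≠ 0 := sub_ne_zero.2 hs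
  have re₁₀ : (g 1 0).re = 0 :=
    (mul_eq_zero.1 (by linarith : (s₁ - s₂) * (g 1 0).re = 0)).resolve_left hs'
  rw [im₁₀] at im₀₁ im₀₁'
  have re_sub : (g 0 0).re - (g 1 1).re = 0 := (mul_eq_zero.1
    (by linarith : (s₁ - s₂) * ((g 0 0).re - (g 1 1).re) = 0)).resolve_left hs'
  rw [re₁₀] at im₀₀ im₁₁
  rw [re_sub] at im₀₁
  exact ⟨Complex.ext re₁₀ im₁₀, Complex.ext (by linarith) (by linarith), by linarith⟩

lemma conj_uMat_of_one_zero_eq_zero (hg : g 1 0 = 0) (z : ℂ) :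
    g * uMat z * g⁻¹ = uMat (z * g 0 0 ^ 2) := by
  have det := det_eq_one g
  rw [hg] at det
  apply ext_entries <;> simp [mul_apply, hg]
  · linear_combination det
  · ring
  · linear_combination det

variable {L : Subgroup SL2C} [DiscreteTopology L] {y : SL2C} {w : ℂ}

lemma eventually_eq_one_of_tendsto {f : ℕ → SL2C} (hfL : ∀ n, f n ∈ L)
    (hf : Tendsto f atTop (𝓝 1)) : ∀ᶠ n in atTop, f n = 1 := by
  have lift_tendsto : Tendsto (fun n => (⟨f n, hfL n⟩ : L)) atTop (𝓝 1) :=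
    tendsto_subtype_rng.2 hf
  rw [nhds_discrete, tendsto_pure] at lift_tendsto
  exact lift_tendsto.mono fun n hn => congrArg Subtype.val hn

/-- Otherwise conjugation by powers of `g` contracts `uMat w` to the identity. -/
lemma one_le_norm_zero_zero (hgL : y * g * y⁻¹ ∈ L) (hg : g 1 0 = 0) (hw : w ≠ 0)
    (hwL : y * uMat w * y⁻¹ ∈ L) : 1 ≤ ‖g 0 0‖ := by
  by_contra! hlt
  have mem (n : ℕ) : y * uMat (w * (g 0 0 ^ 2) ^ n) * y⁻¹ ∈ L := by
    induction n with
    | zero => simpa using hwL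
    | succ n ih =>
      rw [pow_succ, ← mul_assoc, ← conj_uMat_of_one_zero_eq_zero hg]
      convert L.mul_mem (L.mul_mem hgL ih) (L.inv_mem hgL) using 1
      group
  have pow_tendsto : Tendsto (fun n : ℕ => w * (g 0 0 ^ 2) ^ n) atTop (𝓝 0) := by
    refine mul_zero w ▸ (tendsto_pow_atTop_nhds_zero_of_norm_lt_one ?_).const_mul w
    rw [norm_pow]
    exact pow_lt_one₀ (norm_nonneg _) hlt two_ne_zero
  have conj_tendsto :
      Tendsto (fun n : ℕ => y * uMat (w * (g 0 0 ^ 2) ^ n) * y⁻¹) atTop (𝓝 1) := by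
    simpa [uMat_zero, Function.comp_def] using
      (((continuous_uMat.tendsto 0).comp pow_tendsto).const_mul y).mul_const y⁻¹
  obtain ⟨n, hn⟩ := (eventually_eq_one_of_tendsto mem conj_tendsto).exists
  rw [conj_eq_one_iff] at hn
  have g_ne_zero : g 0 0 ≠ 0 := fun h => by simpa [h, hg] using det_eq_one g
  simpa [hw, g_ne_zero] using congrArg (fun g : SL2C => g 0 1) hn

lemma norm_one_one_eq_one (hgL : y * g * y⁻¹ ∈ L) (hg : g 1 0 = 0) (hw : w ≠ 0)
    (hwL : y * uMat w * y⁻¹ ∈ L) : ‖g 1 1‖ = 1 := by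
  have le₀ := one_le_norm_zero_zero hgL hg hw hwL
  have le₁ : 1 ≤ ‖g 1 1‖ := by
    have inv_mem : y * g⁻¹ * y⁻¹ ∈ L := by simpa [mul_assoc] using L.inv_mem hgL
    simpa using one_le_norm_zero_zero inv_mem (by simpa using hg) hw hwL
  have norm_mul_eq : ‖g 0 0‖ * ‖g 1 1‖ = 1 := by
    have det := det_eq_one g
    rw [hg, mul_zero, sub_zero] at det
    rw [← norm_mul, det, norm_one]
  nlinarith

end Normalizers

section NonDenseUnions

/-- A sequence of disjoint, locally single closed orbit preimages `Z i` whose union is not dense,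
together with a set `M` on which they accumulate and a thick unipotent-minimal subset `Y` of `M`.
The main theorem amounts to the statement that no such configuration exists. -/
structure NonDenseConfiguration (L : Subgroup SL2C) (Z : ℕ → Set SL2C) (M Y K : Set SL2C) :
    Prop where
  lattice : LatticeProperties L
  isClosedInvariant : ∀ i, IsClosedInvariant L realSL2 (Z i)
  eventually_mem_realSL2 : ∀ i, ∀ z ∈ Z i, ∀ᶠ e in 𝓝 (1 : SL2C), z * e ∈ Z i → e ∈ realSL2
  disjoint : Pairwise (Function.onFun Disjoint Z)
  not_dense : ¬ Dense (⋃ i, Z i)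
  minimal : IsMinimalInvariant L realSL2 M
  subset_closure : ∀ m, M ⊆ closure (⋃ n, Z (m + n))
  minimal_unipotent : IsMinimalInvariant L realUnipotents Y
  subset : Y ⊆ M
  isCompact : IsCompact K
  subset_mul : Y ⊆ (L : Set SL2C) * K

lemma conj_uMat_eq_inv_mul {γ₁ γ₂ y z : SL2C} {a₁ a₂ w₁ w₂ : ℂ}
    (h₁ : γ₁⁻¹ * (y * uMat a₁) = z * uMat w₁) (h₂ : γ₂⁻¹ * (y * uMat a₂) = z * uMat w₂) :
    z * uMat ((a₂ - w₂) - (a₁ - w₁)) * z⁻¹ = γ₁⁻¹ * γ₂ := by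
  have uMat_eq : uMat ((a₂ - w₂) - (a₁ - w₁)) =
      uMat w₁ * (uMat a₁)⁻¹ * (uMat a₂ * (uMat w₂)⁻¹) := by
    rw [uMat_inv, uMat_inv, ← uMat_add, ← uMat_add, ← uMat_add]
    ring_nf
  calc _ = z * uMat w₁ * (uMat a₁)⁻¹ * uMat a₂ * (z * uMat w₂)⁻¹ := by rw [uMat_eq]; group
    _ = _ := by rw [← h₁, ← h₂]; group

variable {L : Subgroup SL2C} {Z : ℕ → Set SL2C} {M Y K : Set SL2C} {y : SL2C}

namespace NonDenseConfiguration

lemma isClosedInvariant_closure_iUnion (h : NonDenseConfiguration L Z M Y K) :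
    IsClosedInvariant L realSL2 (closure (⋃ i, Z i)) :=
  SL2C.isClosedInvariant_closure_iUnion h.isClosedInvariant

lemma closure_iUnion_ne_univ (h : NonDenseConfiguration L Z M Y K) : closure (⋃ i, Z i) ≠ univ :=
  mt dense_iff_closure_eq.2 h.not_dense

lemma subset_closure_iUnion (h : NonDenseConfiguration L Z M Y K) :
    M ⊆ closure (⋃ i, Z i) := by
  simpa using h.subset_closure 0

lemma eventually_exists_vMat_mul_eq (h : NonDenseConfiguration L Z M Y K) (hy : y ∈ Y) {η : ℝ}
    (hη : 0 < η) : ∀ᶠ g in 𝓝 (1 : SL2C), y * g ∈ ⋃ i, Z i →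
      ∃ s : ℝ, |s| < η ∧ ∃ b ∈ realSL2, g = vMat s * b := by
  have twist_small : ∀ᶠ g in 𝓝 (1 : SL2C), ‖twist g 0 1‖ < 2 * η := by
    have twist_tendsto := (tendsto_nhds_iff.1 (continuous_twist.tendsto 1) 0 1).norm
    rw [twist_eq_one_iff.2 realSL2.one_mem] at twist_tendsto
    exact twist_tendsto.eventually_lt_const (by simpa using hη)
  filter_upwards [twist_small, eventually_mem_imagUnipotentMulReal h.lattice
    h.isClosedInvariant_closure_iUnion h.closure_iUnion_ne_univ h.minimal_unipotent h.isCompact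
    h.subset_mul hy] with g hg hgVH hyg
  obtain ⟨_, ⟨s, rfl⟩, b, hb, rfl⟩ := hgVH (_root_.subset_closure hyg)
  refine ⟨s, ?_, b, hb, rfl⟩
  rw [twist_vMat_mul s hb] at hg
  simpa [vMat] using hg

lemma exists_mul_vMat_mem (h : NonDenseConfiguration L Z M Y K) (hy : y ∈ Y) (m : ℕ) {η : ℝ}
    (hη : 0 < η) : ∃ i ≥ m, ∃ s : ℝ, |s| < η ∧ s ≠ 0 ∧ y * vMat s ∈ Z i := by
  obtain ⟨m', hmm', hm'⟩ : ∃ m' ≥ m, ∀ i ≥ m', y ∉ Z i := by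
    by_cases hyZ : ∃ j, y ∈ Z j
    · obtain ⟨j, hj⟩ := hyZ
      exact ⟨max m (j + 1), le_max_left _ _, fun i hi hyi => disjoint_left.1
        (h.disjoint (by have := le_of_max_le_right hi; omega)) hj hyi⟩
    · exact ⟨m, le_rfl, fun i _ hyi => hyZ ⟨i, hyi⟩⟩
  have frequently_mem : ∃ᶠ g in 𝓝 (1 : SL2C), y * g ∈ ⋃ n, Z (m' + n) := by
    have mem_iff := mem_closure_iff_frequently.1 (h.subset_closure m' (h.subset hy))
    have inv_mul_tendsto : Tendsto (y⁻¹ * ·) (𝓝 y) (𝓝 1) := by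
      simpa using (continuous_const.mul continuous_id).tendsto y (f := (y⁻¹ * ·))
    exact inv_mul_tendsto.frequently (mem_iff.mono fun x hx => by simpa using hx)
  obtain ⟨g, hg, hgs⟩ :=
    (frequently_mem.and_eventually (h.eventually_exists_vMat_mul_eq hy hη)).exists
  obtain ⟨n, hn⟩ := mem_iUnion.1 hg
  obtain ⟨s, hs, b, hb, rfl⟩ := hgs (mem_iUnion.2 ⟨_, hn⟩)
  have mem_Z : y * vMat s ∈ Z (m' + n) := by
    have := (h.isClosedInvariant _).mul_right_mem _ (realSL2.inv_mem hb) _ hn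
    simpa [mul_assoc] using this
  refine ⟨m' + n, by omega, s, hs, ?_, mem_Z⟩
  rintro rfl
  exact hm' (m' + n) (by omega) (by simpa [vMat_zero] using mem_Z)

lemma mul_vMat_mem (h : NonDenseConfiguration L Z M Y K) {i : ℕ} {s : ℝ} (hy : y ∈ Y)
    (hys : y * vMat s ∈ Z i) : ∀ x ∈ Y, x * vMat s ∈ Z i :=
  h.minimal_unipotent.subset_of_inter_nonempty _
    (((h.isClosedInvariant i).mono realUnipotents_le_realSL2).preimage_mul_vMat s) ⟨y, hys, hy⟩

lemma eventually_conj_vMat_mem_realSL2 (h : NonDenseConfiguration L Z M Y K) {i : ℕ} {s : ℝ}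
    (hy : y ∈ Y) (hys : y * vMat s ∈ Z i) :
    ∀ᶠ g in 𝓝 (1 : SL2C), y * g ∈ Y → (vMat s)⁻¹ * g * vMat s ∈ realSL2 := by
  have conj_tendsto : Tendsto (fun g => (vMat s)⁻¹ * g * vMat s) (𝓝 1) (𝓝 1) := by
    simpa using ((continuous_const.mul continuous_id).mul continuous_const).tendsto
      (f := fun g => (vMat s)⁻¹ * g * vMat s) 1
  filter_upwards [conj_tendsto.eventually (h.eventually_mem_realSL2 i _ hys)] with g hg hyg
  refine hg ?_
  rw [show y * vMat s * ((vMat s)⁻¹ * g * vMat s) = y * g * vMat s by group]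
  exact h.mul_vMat_mem hy hys _ hyg

/-- Two different shears of `Y` lie on single orbits, so that returns to `Y` are real after
conjugation by both of them. -/
lemma eventually_eq_uMat_of_mul_mem (h : NonDenseConfiguration L Z M Y K) (hy : y ∈ Y) {ε : ℝ}
    (hε : 0 < ε) : ∀ᶠ g in 𝓝 (1 : SL2C), y * g ∈ Y → ∃ t : ℝ, |t| < ε ∧ g = uMat t := by
  obtain ⟨i₁, -, s₁, -, -, h₁⟩ := h.exists_mul_vMat_mem hy 0 one_pos
  obtain ⟨i₂, hi, s₂, -, -, h₂⟩ := h.exists_mul_vMat_mem hy (i₁ + 1) one_pos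
  have hs : s₁ ≠ s₂ := by
    rintro rfl
    exact disjoint_left.1 (h.disjoint (by omega)) h₁ h₂
  have entry_tendsto := tendsto_nhds_iff.1 (tendsto_id (x := 𝓝 (1 : SL2C)))
  have small : ∀ᶠ g in 𝓝 (1 : SL2C), ‖g 0 1‖ < ε :=
    (entry_tendsto 0 1).norm.eventually_lt_const (by simpa using hε)
  have ne_neg_one : ∀ᶠ g in 𝓝 (1 : SL2C), g 0 0 ≠ -1 := by
    refine (entry_tendsto 0 0).eventually_ne ?_
    simp
    norm_num
  filter_upwards [small, ne_neg_one, h.eventually_conj_vMat_mem_realSL2 hy h₁,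
    h.eventually_conj_vMat_mem_realSL2 hy h₂] with g hgε hg₀₀ hg₁ hg₂ hyg
  obtain ⟨g₁₀, g_diag, g₀₁⟩ := entries_of_conj_vMat_mem_realSL2 hs (hg₁ hyg) (hg₂ hyg)
  have coe_re : ((g 0 1).re : ℂ) = g 0 1 := Complex.ext rfl (by simp [g₀₁])
  refine ⟨(g 0 1).re, (Complex.abs_re_le_norm _).trans_lt hgε, ?_⟩
  rw [coe_re]
  refine (eq_uMat_or_neg_eq_uMat g₁₀ g_diag).resolve_right fun hneg => hg₀₀ ?_
  have := congrArg (fun q : SL2C => q 0 0) hneg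
  simp only [uMat_zero_zero] at this
  exact neg_eq_iff_eq_neg.1 this

lemma exists_conj_eq_uMat (h : NonDenseConfiguration L Z M Y K) :
    ∃ y ∈ Y, ∃ t : ℝ, t ≠ 0 ∧ y * uMat t * y⁻¹ ∈ L := by
  obtain ⟨y₀, hy₀⟩ := h.minimal_unipotent.nonempty
  have orbit_mem (n : ℕ) : y₀ * uMat (n : ℝ) ∈ Y :=
    h.minimal_unipotent.mul_right_mem _ (uMat_mem_realUnipotents n) _ hy₀
  choose γ hγ k hk hγk using fun n => h.subset_mul (orbit_mem n)
  have k_eq (n) : k n = (γ n)⁻¹ * (y₀ * uMat (n : ℝ)) := eq_inv_mul_of_mul_eq (hγk n)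
  obtain ⟨z, -, φ, hφ, hz⟩ := h.isCompact.tendsto_subseq hk
  have k_mem (n) : k n ∈ Y :=
    k_eq n ▸ h.minimal_unipotent.left_mul_mem _ (L.inv_mem (hγ n)) _ (orbit_mem n)
  have hzY : z ∈ Y := h.minimal_unipotent.isClosed.mem_of_tendsto hz (.of_forall fun n => k_mem _)
  have inv_mul_tendsto : Tendsto (fun n => z⁻¹ * k (φ n)) atTop (𝓝 1) := by
    simpa using hz.const_mul z⁻¹
  obtain ⟨N, hN⟩ := eventually_atTop.1 <| inv_mul_tendsto.eventually
    (h.eventually_eq_uMat_of_mul_mem hzY (ε := 1 / 2) (by norm_num))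
  have k_eq_uMat (n) (hn : N ≤ n) : ∃ t : ℝ, |t| < 1 / 2 ∧ k (φ n) = z * uMat t := by
    obtain ⟨t, ht, heq⟩ := hN n hn (by simpa using k_mem _)
    exact ⟨t, ht, eq_mul_of_inv_mul_eq heq⟩
  obtain ⟨t₁, ht₁, h₁⟩ := k_eq_uMat N le_rfl
  obtain ⟨t₂, ht₂, h₂⟩ := k_eq_uMat (N + 1) N.le_succ
  rw [k_eq] at h₁ h₂
  refine ⟨z, hzY, (φ (N + 1) - t₂) - (φ N - t₁), ?_, ?_⟩
  · have φ_lt : (φ N : ℝ) + 1 ≤ φ (N + 1) := by exact_mod_cast hφ N.lt_succ_self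
    rw [abs_lt] at ht₁ ht₂
    linarith
  · push_cast at h₁ h₂ ⊢
    rw [conj_uMat_eq_inv_mul h₁ h₂]
    exact L.mul_mem (L.inv_mem (hγ _)) (hγ _)

/-- The local structure of the non-dense union at `y * vMat σ` shows that conjugation by `b` maps
small imaginary unipotents into `V H`. -/
lemma one_zero_eq_zero (h : NonDenseConfiguration L Z M Y K) (hy : y ∈ Y) {γ b : SL2C} {σ : ℝ}
    (hγ : γ ∈ L) (hb : b ∈ realSL2) (heq : y * vMat σ = γ * y * b) : b 1 0 = 0 := by
  have sheared_subset : {x | x * vMat (-σ) ∈ Y} ⊆ (L : Set SL2C) * ((· * vMat σ) '' K) := by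
    intro x hx
    obtain ⟨δ, hδ, k, hk, hδk⟩ := h.subset_mul hx
    refine ⟨δ, hδ, _, mem_image_of_mem _ hk, ?_⟩
    have : δ * k = x * vMat (-σ) := hδk
    simp only [← mul_assoc, this, ← vMat_inv, inv_mul_cancel_right]
  have near := eventually_mem_imagUnipotentMulReal h.lattice h.isClosedInvariant_closure_iUnion
    h.closure_iUnion_ne_univ (h.minimal_unipotent.preimage_mul_vMat (-σ))
    (h.isCompact.image (continuous_id.mul continuous_const)) sheared_subset
    (y := y * vMat σ) (by simpa [← vMat_inv] using hy)
  have conj_tendsto : Tendsto (fun s => b⁻¹ * vMat s * b) (𝓝 0) (𝓝 1) := by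
    simpa [vMat_zero] using ((continuous_vMat.tendsto 0).const_mul b⁻¹).mul_const b
  obtain ⟨η, hη, hnear⟩ := Metric.eventually_nhds_iff.1 (conj_tendsto.eventually near)
  obtain ⟨i, -, s, hs, hs0, hys⟩ := h.exists_mul_vMat_mem hy 0 hη
  refine one_zero_eq_zero_of_conj_vMat_mem hs0 hb (hnear (by simpa using hs)
    (_root_.subset_closure (mem_iUnion.2 ⟨i, ?_⟩)))
  rw [heq, show γ * y * b * (b⁻¹ * vMat s * b) = γ * (y * vMat s) * b by group]
  exact (h.isClosedInvariant i).mul_right_mem _ hb _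
    ((h.isClosedInvariant i).left_mul_mem _ hγ _ hys)

lemma norm_one_apply_eq (h : NonDenseConfiguration L Z M Y K) (hy : y ∈ Y) {t : ℝ} (ht : t ≠ 0)
    (hyt : y * uMat t * y⁻¹ ∈ L) {γ b : SL2C} (hγ : γ ∈ L) (hb : b ∈ realSL2)
    (hmem : y⁻¹ * γ * y * b ∈ imagUnipotentMulReal) (j : Fin 2) :
    ‖b 1 j‖ = ‖(y⁻¹ * γ * y * b) 1 j‖ := by
  have := h.lattice.discrete
  obtain ⟨_, ⟨σ, rfl⟩, c, hc, hσc⟩ := hmem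
  have eq_mul : y⁻¹ * γ * y * b = vMat σ * c := hσc.symm
  have vMat_eq : vMat σ = y⁻¹ * γ * y * (b * c⁻¹) := by
    rw [← mul_assoc, eq_mul, mul_inv_cancel_right]
  have one_zero : (b * c⁻¹) 1 0 = 0 :=
    h.one_zero_eq_zero hy hγ (realSL2.mul_mem hb (realSL2.inv_mem hc)) (by rw [vMat_eq]; group)
  have one_one : ‖(b * c⁻¹) 1 1‖ = 1 := by
    have conj_mem : y * (b * c⁻¹ * vMat (-σ)) * y⁻¹ ∈ L := by
      rw [← vMat_inv, vMat_eq]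
      convert L.inv_mem hγ using 1
      group
    have one_zero' : (b * c⁻¹ * vMat (-σ)) 1 0 = 0 := by
      rw [mul_apply, one_zero, vMat, uMat_one_zero]
      simp
    have one_one' : (b * c⁻¹ * vMat (-σ)) 1 1 = (b * c⁻¹) 1 1 := by
      rw [mul_apply, one_zero, vMat, uMat_one_one, zero_mul, zero_add, mul_one]
    exact one_one' ▸ norm_one_one_eq_one conj_mem one_zero' (Complex.ofReal_ne_zero.2 ht) hyt
  calc ‖b 1 j‖ = ‖(b * c⁻¹ * c) 1 j‖ := by rw [inv_mul_cancel_right]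
    _ = ‖c 1 j‖ := by rw [mul_apply, one_zero, zero_mul, zero_add, norm_mul, one_one, one_mul]
    _ = ‖(y⁻¹ * γ * y * b) 1 j‖ := by rw [eq_mul, mul_apply]; simp [vMat]

end NonDenseConfiguration

lemma LatticeProperties.exists_tendsto_mul_uMat_mul_aMat (hL : LatticeProperties L) (y : SL2C) :
    ∃ z, ∃ (γ : ℕ → SL2C) (s t : ℕ → ℝ), (∀ n, γ n ∈ L) ∧ Tendsto t atTop atBot ∧
      Tendsto (fun n => γ n * (y * (uMat (s n) * aMat (t n)))) atTop (𝓝 z) := by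
  have := hL.discrete
  obtain ⟨K, hK, hthick⟩ := hL.thickPart_subset _ zassenhausRadius_pos
  choose s t ht hst using fun n : ℕ => exists_mul_uMat_mul_aMat_mem_thickPart L y (-n)
  choose γ hγ k hk hγk using fun n => hthick (hst n)
  obtain ⟨z, -, φ, hφ, hz⟩ := hK.tendsto_subseq hk
  have t_tendsto : Tendsto t atTop atBot := tendsto_atBot_mono (fun n => (ht n).le)
    (tendsto_neg_atTop_atBot.comp tendsto_natCast_atTop_atTop)
  refine ⟨z, fun n => (γ (φ n))⁻¹, s ∘ φ, t ∘ φ, fun n => L.inv_mem (hγ _),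
    t_tendsto.comp hφ.tendsto_atTop, hz.congr fun n => ?_⟩
  exact eq_inv_mul_of_mul_eq (hγk _)

lemma uMat_mul_aMat_mul_one_apply (z : ℂ) (t : ℝ) (g : SL2C) (j : Fin 2) :
    (uMat z * aMat t * g) 1 j = Real.exp (-t) * g 1 j := by
  rw [mul_apply, mul_apply, mul_apply]
  simp

lemma exists_one_apply_ne_zero (g : SL2C) : ∃ j, g 1 j ≠ 0 := by
  by_contra! h
  simpa [h] using det_eq_one g

lemma IsMinimalInvariant.exists_mul_mul_mem {S : Subgroup SL2C} {z : SL2C}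
    (hM : IsMinimalInvariant L S M) (hy : y ∈ M) (hz : z ∈ M) {U : Set SL2C} (hU : U ∈ 𝓝 y) :
    ∃ γ ∈ L, ∃ s ∈ S, γ * z * s ∈ U := by
  have subset := hM.subset_of_inter_nonempty _ (isClosedInvariant_closure_doubleCoset S z)
    ⟨z, subset_closure (DoubleCoset.mem_doubleCoset_self L S z), hz⟩
  obtain ⟨_, hxU, hx⟩ := mem_closure_iff_nhds.1 (subset hy) U hU
  obtain ⟨γ, hγ, s, hs, rfl⟩ := DoubleCoset.mem_doubleCoset.1 hx
  exact ⟨γ, hγ, s, hs, hxU⟩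

lemma NonDenseConfiguration.exists_tendsto_mem_imagUnipotentMulReal
    (h : NonDenseConfiguration L Z M Y K) (hy : y ∈ Y) :
    ∃ (γ : ℕ → SL2C) (s t : ℕ → ℝ) (b g : SL2C), (∀ n, γ n ∈ L) ∧ b ∈ realSL2 ∧
      Tendsto t atTop atBot ∧
      Tendsto (fun n => y⁻¹ * γ n * y * (uMat (s n) * aMat (t n) * b)) atTop (𝓝 g) ∧
      ∀ᶠ n in atTop, y⁻¹ * γ n * y * (uMat (s n) * aMat (t n) * b) ∈ imagUnipotentMulReal := by
  have hM := h.minimal.toIsClosedInvariant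
  obtain ⟨z, γ, s, t, hγ, ht, hz⟩ := h.lattice.exists_tendsto_mul_uMat_mul_aMat y
  have translate_mem (n) : γ n * (y * (uMat (s n) * aMat (t n))) ∈ M :=
    hM.left_mul_mem _ (hγ n) _ <| hM.mul_right_mem _
      (realSL2.mul_mem (uMat_mem_realSL2 _) (aMat_mem_realSL2 _)) _ (h.subset hy)
  have hzM : z ∈ M := hM.isClosed.mem_of_tendsto hz (.of_forall translate_mem)
  have near := eventually_mem_imagUnipotentMulReal h.lattice h.isClosedInvariant_closure_iUnion
    h.closure_iUnion_ne_univ h.minimal_unipotent h.isCompact h.subset_mul hy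
  have inv_mul_tendsto : Tendsto (y⁻¹ * ·) (𝓝 y) (𝓝 1) := by
    simpa using (continuous_const.mul continuous_id).tendsto y (f := (y⁻¹ * ·))
  obtain ⟨δ, hδ, b, hb, hnear⟩ := h.minimal.exists_mul_mul_mem (h.subset hy) hzM
    (inv_mul_tendsto.eventually near.eventually_nhds)
  have g_tendsto : Tendsto (fun n => y⁻¹ * (δ * γ n) * y * (uMat (s n) * aMat (t n) * b)) atTop
      (𝓝 (y⁻¹ * (δ * z * b))) :=
    (((hz.const_mul δ).mul_const b).const_mul y⁻¹).congr fun n => by group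
  refine ⟨fun n => δ * γ n, s, t, b, _, fun n => L.mul_mem hδ (hγ n), hb, ht, g_tendsto, ?_⟩
  filter_upwards [g_tendsto.eventually hnear] with n hn
  have mem_M := hM.left_mul_mem _ hδ _ (hM.mul_right_mem _ hb _ (translate_mem n))
  exact hn (h.subset_closure_iUnion (by simpa [mul_assoc] using mem_M))

theorem not_nonDenseConfiguration : ¬ NonDenseConfiguration L Z M Y K := by
  intro h
  obtain ⟨y, hy, t₀, ht₀, hyt₀⟩ := h.exists_conj_eq_uMat
  obtain ⟨γ, s, t, b, g, hγ, hb, ht, hg, hmem⟩ := h.exists_tendsto_mem_imagUnipotentMulReal hy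
  obtain ⟨j, hj⟩ := exists_one_apply_ne_zero b
  have norm_eq : ∀ᶠ n in atTop, ‖(y⁻¹ * γ n * y * (uMat (s n) * aMat (t n) * b)) 1 j‖ =
      Real.exp (-t n) * ‖b 1 j‖ := by
    filter_upwards [hmem] with n hn
    have hub : uMat (s n) * aMat (t n) * b ∈ realSL2 :=
      realSL2.mul_mem (realSL2.mul_mem (uMat_mem_realSL2 _) (aMat_mem_realSL2 _)) hb
    rw [← h.norm_one_apply_eq hy ht₀ hyt₀ (hγ n) hub hn, uMat_mul_aMat_mul_one_apply, norm_mul,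
      Complex.norm_real, Real.norm_of_nonneg (Real.exp_pos _).le]
  have tendsto_top : Tendsto (fun n => Real.exp (-t n) * ‖b 1 j‖) atTop atTop :=
    (Real.tendsto_exp_atTop.comp (tendsto_neg_atBot_atTop.comp ht)).atTop_mul_const
      (norm_pos_iff.2 hj)
  exact not_tendsto_nhds_of_tendsto_atTop tendsto_top _
    ((tendsto_nhds_iff.1 hg 1 j).norm.congr' norm_eq)

end NonDenseUnions

section ClosedOrbits

variable {L : Subgroup SL2C} {Z : ℕ → Set SL2C}

lemma LatticeProperties.exists_isMinimalInvariant_forall_subset_closure (hL : LatticeProperties L)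
    (hZ : ∀ i, IsClosedInvariant L realSL2 (Z i)) (hne : ∀ i, (Z i).Nonempty) :
    ∃ M, IsMinimalInvariant L realSL2 M ∧ ∀ m, M ⊆ closure (⋃ n, Z (m + n)) := by
  obtain ⟨K, hK, hmeets⟩ := hL.exists_isCompact_inter_nonempty
  let tail (m : ℕ) := closure (⋃ n, Z (m + n))
  have tail_invariant (m) : IsClosedInvariant L realSL2 (tail m) :=
    isClosedInvariant_closure_iUnion fun n => hZ (m + n)
  have tail_nonempty (m) : (tail m).Nonempty :=
    (hne (m + 0)).mono ((subset_iUnion (fun n => Z (m + n)) 0).trans subset_closure)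
  have tail_antitone : Antitone tail := fun m k hmk => closure_mono <| iUnion_subset fun n => by
    obtain ⟨d, rfl⟩ := Nat.exists_eq_add_of_le hmk
    exact add_assoc m d n ▸ subset_iUnion (fun n => Z (m + n)) (d + n)
  have inter_nonempty : (⋂₀ range tail).Nonempty :=
    sInter_nonempty_of_isChain tail_antitone.isChain_range (range_nonempty _)
      (forall_mem_range.2 fun m => (tail_invariant m).isClosed) hK
      (forall_mem_range.2 fun m => hmeets _ (tail_invariant m) (tail_nonempty m))
  obtain ⟨M, hM, hmin⟩ := exists_isMinimalInvariant (.sInter (forall_mem_range.2 tail_invariant))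
    inter_nonempty hK fun C _ hC => hmeets C hC
  exact ⟨M, hmin, fun m => hM.trans (sInter_subset_of_mem (mem_range_self m))⟩

theorem LatticeProperties.dense_iUnion (hL : LatticeProperties L)
    (hZ : ∀ i, IsClosedInvariant L realSL2 (Z i)) (hne : ∀ i, (Z i).Nonempty)
    (hloc : ∀ i, ∀ z ∈ Z i, ∀ᶠ e in 𝓝 (1 : SL2C), z * e ∈ Z i → e ∈ realSL2)
    (hdisj : Pairwise (Function.onFun Disjoint Z)) : Dense (⋃ i, Z i) := by
  by_contra hdense
  obtain ⟨M, hM, hMZ⟩ := hL.exists_isMinimalInvariant_forall_subset_closure hZ hne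
  obtain ⟨Y, hYM, hY, K, hK, hYK⟩ :=
    hL.exists_isMinimalInvariant_realUnipotents hM.toIsClosedInvariant hM.nonempty
  exact not_nonDenseConfiguration ⟨hL, hZ, hloc, hdisj, hdense, hM, hMZ, hY, hYM, hK, hYK⟩

theorem LatticeProperties.dense_iUnion_doubleCoset (hL : LatticeProperties L) {g : ℕ → SL2C}
    (hclosed : ∀ i, IsClosed (DoubleCoset.doubleCoset (g i) (L : Set SL2C) realSL2))
    (hinj : Function.Injective fun i => DoubleCoset.doubleCoset (g i) (L : Set SL2C) realSL2) :
    Dense (⋃ i, DoubleCoset.doubleCoset (g i) (L : Set SL2C) realSL2) := by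
  have := hL.discrete
  have : Countable L := countable_of_Lindelof_of_discrete
  refine hL.dense_iUnion
    (fun i => (hclosed i).closure_eq ▸ isClosedInvariant_closure_doubleCoset realSL2 (g i))
    (fun i => ⟨_, DoubleCoset.mem_doubleCoset_self L realSL2 (g i)⟩) (fun i z hz => ?_)
    fun i j hij => ?_
  · rw [← DoubleCoset.doubleCoset_eq_of_mem hz]
    exact eventually_mem_of_isClosed_doubleCoset isClosed_realSL2
      (DoubleCoset.doubleCoset_eq_of_mem hz ▸ hclosed i)
  · refine disjoint_left.2 fun z hi hj => hij (hinj ?_)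
    dsimp only
    rw [← DoubleCoset.doubleCoset_eq_of_mem hi, ← DoubleCoset.doubleCoset_eq_of_mem hj]

lemma preimage_cosetMk_orb (g : SL2C) : cosetMk Γ ⁻¹' orb Γ (cosetMk Γ g) Hset =
    DoubleCoset.doubleCoset g (Γ.comap pr : Set SL2C) realSL2 := by
  ext k
  rw [DoubleCoset.mem_doubleCoset]
  constructor
  · rintro ⟨_, ⟨r, rfl⟩, hr⟩
    obtain ⟨γ, hγ, rfl⟩ := cosetMk_eq_iff.1 ((act_cosetMk _ _).symm.trans hr)
    exact ⟨γ, hγ, _, ⟨r, rfl⟩, (mul_assoc _ _ _).symm⟩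
  · rintro ⟨γ, hγ, _, ⟨r, rfl⟩, rfl⟩
    exact ⟨_, ⟨r, rfl⟩, (act_cosetMk _ _).trans
      (cosetMk_eq_iff.2 ⟨γ, hγ, mul_assoc _ _ _⟩)⟩

end ClosedOrbits

end SL2C

end Development

/-- If `Γ` is a lattice in `PSL(2,ℂ)` and `(x_i H)` is a sequence of pairwise
distinct closed `H`-orbits, then `x_i H → Γ\G`: every nonempty open subset of
`Γ\G` meets `x_i H` for all sufficiently large `i`. -/
theorem closed_H_orbits_become_dense
    (Γ : Subgroup PSL2C) (hdisc : DiscreteTopology Γ) (hlat : IsLattice Γ)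
    (x : ℕ → XΓ Γ) (hclosed : ∀ i, IsClosed (orb Γ (x i) Hset))
    (hdistinct : ∀ i j, i ≠ j → orb Γ (x i) Hset ≠ orb Γ (x j) Hset) :
    ∀ O : Set (XΓ Γ), IsOpen O → O.Nonempty →
      ∀ᶠ i in atTop, (orb Γ (x i) Hset ∩ O).Nonempty := by
  intro O hO hne
  by_contra hmiss
  obtain ⟨φ, hφ, hφO⟩ := extraction_of_frequently_atTop (not_eventually.1 hmiss)
  choose g hg using fun i => SL2C.cosetMk_surjective Γ (x (φ i))
  have preimage_eq (i) := hg i ▸ SL2C.preimage_cosetMk_orb Γ (g i)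
  have hinj : Function.Injective fun i => SL2C.cosetMk Γ ⁻¹' orb Γ (x (φ i)) Hset :=
    (Set.preimage_injective.2 (SL2C.cosetMk_surjective Γ)).comp
      (fun i j => not_imp_not.1 (hdistinct i j) : Function.Injective fun i => orb Γ (x i) Hset)
      |>.comp hφ.injective
  simp only [preimage_eq] at hinj
  have hdense := (SL2C.latticeProperties_comap_pr Γ hlat).dense_iUnion_doubleCoset
    (fun i => preimage_eq i ▸ (hclosed _).preimage (SL2C.continuous_cosetMk Γ)) hinj
  obtain ⟨k, hkO, hk⟩ := hdense.inter_open_nonempty _ (hO.preimage (SL2C.continuous_cosetMk Γ))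
    (hne.preimage (SL2C.cosetMk_surjective Γ))
  obtain ⟨i, hi⟩ := Set.mem_iUnion.1 hk
  rw [← preimage_eq] at hi
  exact hφO i ⟨_, hi, hkO⟩

end
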